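/- Under the pure-jump CGMY model, third-order close-to-the-money call price expansion: define d₁ := (1/π)·Γ(1−1/Y)·(2·C·Γ(−Y)·|cos(πY/2)|)^{1/Y}; d₂ := (C·Γ(−Y)/2)·((M−1)^Y − M^Y − (G+1)^Y + G^Y) − e₁/2; d₃₁ := ((γ̃−e₁)²/(2π))·Γ(1+1/Y)·(−2·C·Γ(−Y)·cos(πY/2))^{−1/Y} − e₂/2; and d₃₂ := −(1/2)·E[(Z⁺+Ũ)²·1_{Z⁺+Ũ≤0}] − ∫₀^∞ w·(P(Z⁺+Ũ ≥ w) − C·M^Y/(Y·w^Y) − C·(G+1)^Y/(Y·w^Y)) dw. Then, as t → 0⁺, Π(t) = d₁·t^{1/Y} + d₂·t + d₃₁·t^{2−1/Y} + d₃₂·t^{2/Y} + o(t^{min(2−1/Y, 2/Y)}). -/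

import Mathlib

open MeasureTheory ProbabilityTheory Filter Topology Asymptotics Set


/-- Shifting the contour of integration between two horizontal lines. -/
lemma horiz_shift (g : ℂ → ℂ) (a b : ℝ) (hab : a ≤ b)
    (hc : ContinuousOn g {z : ℂ | a ≤ z.im ∧ z.im ≤ b})
    (hd : ∀ z : ℂ, a < z.im → z.im < b → DifferentiableAt ℂ g z)
    (h1 : Integrable (fun r : ℝ => g (r + a * Complex.I)))
    (h2 : Integrable (fun r : ℝ => g (r + b * Complex.I)))
    (B : ℝ → ℝ) (hB : ∀ r y : ℝ, a ≤ y → y ≤ b → ‖g (r + y * Complex.I)‖ ≤ B r)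
    (hBt : Tendsto B atTop (𝓝 0)) (hBb : Tendsto B atBot (𝓝 0)) :
    ∫ r : ℝ, g (r + a * Complex.I) = ∫ r : ℝ, g (r + b * Complex.I) := by
  have key : ∀ T : ℝ, (∫ x : ℝ in (-T)..T, g (x + a * Complex.I))
      - (∫ x : ℝ in (-T)..T, g (x + b * Complex.I)) +
      Complex.I • (∫ y : ℝ in a..b, g ((T:ℂ) + y * Complex.I)) -
      Complex.I • (∫ y : ℝ in a..b, g (((-T : ℝ) : ℂ) + y * Complex.I)) = 0 := by
    intro T
    have := Complex.integral_boundary_rect_eq_zero_of_continuousOn_of_differentiableOn g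
      ((-T : ℝ) + a * Complex.I) (T + b * Complex.I) ?_ ?_
    · simpa using this
    · refine hc.mono ?_
      intro z hz
      rw [Complex.mem_reProdIm] at hz
      have h2 := hz.2
      simp [uIcc_of_le hab] at h2
      exact h2
    · intro z hz
      rw [Complex.mem_reProdIm] at hz
      have h2 := hz.2
      simp [hab] at h2
      exact (hd z h2.1 h2.2).differentiableWithinAt
  have l1 := intervalIntegral_tendsto_integral h1 tendsto_neg_atTop_atBot tendsto_id
  have l2 := intervalIntegral_tendsto_integral h2 tendsto_neg_atTop_atBot tendsto_id
  have l3 : Tendsto (fun T : ℝ => ∫ y : ℝ in a..b, g ((T:ℂ) + y * Complex.I)) atTop (𝓝 0) := by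
    have : Tendsto (fun T : ℝ => B T * |b - a|) atTop (𝓝 0) := by
      simpa using hBt.mul_const |b - a|
    refine squeeze_zero_norm (fun T => ?_) this
    apply intervalIntegral.norm_integral_le_of_norm_le_const
    intro y hy
    rw [uIoc_of_le hab] at hy
    exact hB T y hy.1.le hy.2
  have l4 : Tendsto (fun T : ℝ => ∫ y : ℝ in a..b, g (((-T : ℝ):ℂ) + y * Complex.I))
      atTop (𝓝 0) := by
    have : Tendsto (fun T : ℝ => B (-T) * |b - a|) atTop (𝓝 0) := by
      simpa using (hBb.comp tendsto_neg_atTop_atBot).mul_const |b - a|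
    refine squeeze_zero_norm (fun T => ?_) this
    apply intervalIntegral.norm_integral_le_of_norm_le_const
    intro y hy
    rw [uIoc_of_le hab] at hy
    exact hB (-T) y hy.1.le hy.2
  have l5 := (((l1.sub l2).add (l3.const_smul Complex.I)).sub (l4.const_smul Complex.I))
  have l6 := l5.congr (fun T => key T)
  have := tendsto_nhds_unique l6 tendsto_const_nhds
  simp only [smul_zero, add_zero, sub_zero] at this
  exact sub_eq_zero.mp this

/-- Substitution `r = exp ρ`, whole line. -/
lemma integral_exp_subst (f : ℝ → ℂ) :
    ∫ ρ : ℝ, (Real.exp ρ : ℂ) * f (Real.exp ρ) = ∫ r in Ioi (0:ℝ), f r := by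
  rw [← Real.range_exp, ← image_univ, integral_image_eq_integral_abs_deriv_smul
      MeasurableSet.univ (fun x _ ↦ (Real.hasDerivAt_exp x).hasDerivWithinAt)
      (fun x _ y _ hxy ↦ Real.exp_injective hxy) f]
  simp [abs_of_pos (Real.exp_pos _)]

lemma integrable_exp_subst (f : ℝ → ℂ) :
    Integrable (fun ρ : ℝ => (Real.exp ρ : ℂ) * f (Real.exp ρ)) ↔ IntegrableOn f (Ioi (0:ℝ)) := by
  rw [← Real.range_exp, ← image_univ, integrableOn_image_iff_integrableOn_abs_deriv_smul
      MeasurableSet.univ (fun x _ ↦ (Real.hasDerivAt_exp x).hasDerivWithinAt)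
      (fun x _ y _ hxy ↦ Real.exp_injective hxy) f]
  simp [abs_of_pos (Real.exp_pos _)]

/-- Rotation of a ray of integration. -/
lemma ray_rotate (g : ℂ → ℂ) (hg : Differentiable ℂ g) (a b : ℝ) (hab : a ≤ b)
    (F : ℝ → ℝ → ℂ) (hF : ∀ θ ρ : ℝ, g (ρ + θ * Complex.I) = (Real.exp ρ : ℂ) * F θ (Real.exp ρ))
    (h1 : IntegrableOn (F a) (Ioi 0)) (h2 : IntegrableOn (F b) (Ioi 0))
    (B : ℝ → ℝ) (hB : ∀ r θ : ℝ, 0 < r → a ≤ θ → θ ≤ b → r * ‖F θ r‖ ≤ B r)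
    (hBt : Tendsto B atTop (𝓝 0)) (hBb : Tendsto B (𝓝[>] 0) (𝓝 0)) :
    ∫ r in Ioi (0:ℝ), F a r = ∫ r in Ioi (0:ℝ), F b r := by
  have := horiz_shift g a b hab hg.continuous.continuousOn (fun z _ _ => hg z)
    (by simp_rw [hF]; exact (integrable_exp_subst _).2 h1)
    (by simp_rw [hF]; exact (integrable_exp_subst _).2 h2) (fun ρ => B (Real.exp ρ)) ?_
    (hBt.comp Real.tendsto_exp_atTop) (hBb.comp Real.tendsto_exp_atBot_nhdsGT)
  · simp_rw [hF] at this
    rwa [integral_exp_subst, integral_exp_subst] at this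
  · intro r y h h'
    rw [hF, norm_mul]
    have := hB (Real.exp r) y (Real.exp_pos r) h h'
    simpa [abs_of_pos (Real.exp_pos r)] using this


lemma st_cos_le (Y t : ℝ) (hY : 0 ≤ Y) (h0 : 0 ≤ t) (h1 : t ≤ Real.pi / 2) :
    Real.cos (t * Y) ≤ Real.cos (Real.pi * Y / 2) + Y * Real.pi / 2 * Real.cos t := by
  have e : |Real.cos (t * Y) - Real.cos (Real.pi * Y / 2)| ≤ |t * Y - Real.pi * Y / 2| := by
    have := Real.lipschitzWith_cos.dist_le_mul (t * Y) (Real.pi * Y / 2)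
    simpa [Real.dist_eq] using this
  have e2 := (abs_le.1 e).2
  have e3 : |t * Y - Real.pi * Y / 2| = Y * (Real.pi / 2 - t) := by
    rw [abs_of_nonpos] <;> nlinarith
  have e4 := Real.mul_le_sin (x := Real.pi / 2 - t) (by linarith) (by linarith)
  rw [Real.sin_pi_div_two_sub] at e4
  have e5 : Y * (Real.pi / 2 - t) = (Y * Real.pi / 2) * (2 / Real.pi * (Real.pi / 2 - t)) := by
    have := Real.pi_pos.ne'
    field_simp
  have e6 := mul_le_mul_of_nonneg_left e4 (by positivity : 0 ≤ Y * Real.pi / 2)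
  linarith

lemma st_re_cpow_le (Y : ℝ) (hY : Y ∈ Ioo (1:ℝ) 2) (z : ℂ) (hz : 0 ≤ z.re) :
    (z ^ (Y : ℂ)).re ≤ Real.cos (Real.pi * Y / 2) * ‖z‖ ^ Y
      + Y * Real.pi / 2 * z.re * ‖z‖ ^ (Y - 1) := by
  obtain ⟨hY1, hY2⟩ := hY
  rcases eq_or_ne z 0 with rfl | hz0
  · have h1 : (Y : ℂ) ≠ 0 := by exact_mod_cast (by linarith : Y ≠ 0)
    have h2 : Y ≠ 0 := by linarith
    simp [h1, h2]
  · have hn : 0 < ‖z‖ := norm_pos_iff.2 hz0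
    rw [Complex.cpow_ofReal_re]
    have ha := Complex.abs_arg_le_pi_div_two_iff.2 hz
    have h := st_cos_le Y |z.arg| (by linarith) (abs_nonneg _) ha
    have e1 : Real.cos (|z.arg| * Y) = Real.cos (z.arg * Y) := by
      rcases abs_choice z.arg with h | h <;> rw [h]
      rw [neg_mul, Real.cos_neg]
    rw [e1, Real.cos_abs] at h
    have e2 : z.re = ‖z‖ * Real.cos z.arg := (Complex.norm_mul_cos_arg z).symm
    have e3 : ‖z‖ ^ Y = ‖z‖ ^ (Y - 1) * ‖z‖ := by
      rw [Real.rpow_sub_one hn.ne']; field_simp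
    have := mul_le_mul_of_nonneg_left h (Real.rpow_nonneg hn.le Y)
    refine this.trans (le_of_eq ?_)
    rw [e2, e3]
    ring

lemma st_cos_neg (Y : ℝ) (hY : Y ∈ Ioo (1:ℝ) 2) : Real.cos (Real.pi * Y / 2) < 0 := by
  have := Real.pi_pos
  apply Real.cos_neg_of_pi_div_two_lt_of_lt <;> nlinarith [hY.1, hY.2]

/-- The Laplace exponent function of the one-sided stable law. -/
noncomputable def stPsi (K Y : ℝ) (z : ℂ) : ℂ := Complex.exp (K * z ^ (Y : ℂ))

lemma stPsi_contOn (K Y : ℝ) (hY : Y ∈ Ioo (1:ℝ) 2) :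
    ContinuousOn (stPsi K Y) {z : ℂ | 0 ≤ z.re} := by
  intro z hz
  apply ContinuousAt.continuousWithinAt
  unfold stPsi
  apply Complex.continuous_exp.continuousAt.comp
  apply ContinuousAt.mul continuousAt_const
  have : ContinuousAt (fun x : ℂ => x ^ (Y:ℂ)) z := by
    rcases eq_or_ne z 0 with rfl | hz0
    · have h := Complex.continuousAt_cpow_zero_of_re_pos (z := (Y:ℂ)) (by simpa using by linarith [hY.1])
      exact ContinuousAt.comp (f := fun x : ℂ => (x, (Y:ℂ))) h
        (continuousAt_id.prodMk continuousAt_const)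
    · apply continuousAt_cpow_const
      rw [Complex.mem_slitPlane_iff]
      by_contra hcon
      push Not at hcon
      have : z.re = 0 := le_antisymm hcon.1 hz
      exact hz0 (Complex.ext this hcon.2)
  exact this

lemma stPsi_diff (K Y : ℝ) (z : ℂ) (hz : 0 < z.re) : DifferentiableAt ℂ (stPsi K Y) z := by
  unfold stPsi
  have : z ∈ Complex.slitPlane := by
    rw [Complex.mem_slitPlane_iff]; exact Or.inl hz
  exact ((differentiableAt_id.cpow_const this).const_mul _).cexp

/-- Uniform decay on vertical strips. -/
lemma stPsi_bound (K Y : ℝ) (hK : 0 < K) (hY : Y ∈ Ioo (1:ℝ) 2) (L : ℝ) (hL : 0 ≤ L) :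
    ∃ D > 0, ∃ c > 0, ∀ l u : ℝ, 0 ≤ l → l ≤ L →
      ‖stPsi K Y (l - u * Complex.I)‖ ≤ D * Real.exp (-c * |u|) := by
  set a := -Real.cos (Real.pi * Y / 2) with ha
  have hapos : 0 < a := by have := st_cos_neg Y hY; linarith
  set b := K * (Y * Real.pi / 2) * L with hb
  have hY1 := hY.1
  have hbn : 0 ≤ b := by have := Real.pi_pos; positivity
  set R := 2 * b / (a * K) with hR
  have hRn : 0 ≤ R := by positivity
  set c := a * K / 2 with hc
  have hcpos : 0 < c := by positivity
  refine ⟨Real.exp (b * R ^ (Y - 1) + c), Real.exp_pos _, c, hcpos, ?_⟩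
  intro l u hl hlL
  set z : ℂ := l - u * Complex.I with hz
  have hzre : z.re = l := by simp [hz]
  have hzim : z.im = -u := by simp [hz]
  have h1 := st_re_cpow_le Y hY z (by rw [hzre]; exact hl)
  have hr : |u| ≤ ‖z‖ := by
    have := Complex.abs_im_le_norm z
    rwa [hzim, abs_neg] at this
  set r := ‖z‖ with hrdef
  have hr0 : 0 ≤ r := norm_nonneg _
  unfold stPsi
  rw [Complex.norm_exp, ← Real.exp_add]
  apply Real.exp_le_exp.2
  have e1 : ((K:ℂ) * z ^ (Y:ℂ)).re = K * (z ^ (Y:ℂ)).re := by simp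
  rw [e1]
  have h2 := mul_le_mul_of_nonneg_left h1 hK.le
  rw [hzre] at h2
  have hrp : 0 ≤ r ^ (Y - 1) := Real.rpow_nonneg hr0 _
  have hpi := Real.pi_pos
  have h3 : K * (Y * Real.pi / 2 * l * r ^ (Y - 1)) ≤ b * r ^ (Y - 1) := by
    rw [hb]
    have : K * (Y * Real.pi / 2 * l) ≤ K * (Y * Real.pi / 2) * L := by
      rw [← mul_assoc]; gcongr
    nlinarith
  have hYr : r - 1 ≤ r ^ Y := by
    rcases le_total r 1 with h | h
    · have := Real.rpow_nonneg hr0 Y; linarith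
    · have := Real.self_le_rpow_of_one_le h hY1.le; linarith
  have h4 : b * r ^ (Y - 1) ≤ b * R ^ (Y - 1) + c * r ^ Y := by
    rcases le_total r R with h | h
    · have : r ^ (Y - 1) ≤ R ^ (Y - 1) := Real.rpow_le_rpow hr0 h (by linarith)
      have := mul_le_mul_of_nonneg_left this hbn
      have : 0 ≤ c * r ^ Y := by positivity
      linarith
    · have hbc : b = c * R := by rw [hR, hc]; field_simp
      have e : r ^ Y = r ^ (Y - 1) * r := by
        rcases hr0.eq_or_lt with h0 | h0
        · rw [← h0, mul_zero, Real.zero_rpow (by linarith)]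
        · rw [Real.rpow_sub_one h0.ne']; field_simp
      have : b * r ^ (Y - 1) ≤ c * r ^ Y := by
        rw [hbc, e]
        have := mul_le_mul_of_nonneg_left h (mul_nonneg hcpos.le hrp)
        linarith
      have : 0 ≤ b * R ^ (Y - 1) := by positivity
      linarith
  have h5 : c * |u| ≤ c * r := by gcongr
  have h6 : c * (r - 1) ≤ c * r ^ Y := by gcongr
  have h7 : K * (Real.cos (Real.pi * Y / 2) * r ^ Y) = - (2 * c) * r ^ Y := by
    rw [hc, ha]; ring
  rw [mul_add] at h2
  linarith

lemma integrable_exp_neg_abs' (c : ℝ) (hc : 0 < c) :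
    Integrable (fun u : ℝ => Real.exp (-c * |u|)) := by
  have h1 : IntegrableOn (fun u : ℝ => Real.exp (-c * |u|)) (Ioi 0) := by
    refine (exp_neg_integrableOn_Ioi 0 hc).congr_fun ?_ measurableSet_Ioi
    intro x hx
    simp [abs_of_pos (mem_Ioi.1 hx)]
  have h2 : IntegrableOn (fun u : ℝ => Real.exp (-c * |u|)) (Iic 0) := by
    refine (integrableOn_exp_mul_Iic hc 0).congr_fun ?_ measurableSet_Iic
    intro x hx
    simp [abs_of_nonpos (mem_Iic.1 hx)]
  have := h2.union h1
  rwa [Iic_union_Ioi, integrableOn_univ] at this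


lemma stPsi_cont_line (K Y : ℝ) (hY : Y ∈ Ioo (1:ℝ) 2) (l : ℝ) (hl : 0 ≤ l) :
    Continuous (fun u : ℝ => stPsi K Y (l - u * Complex.I)) := by
  apply (stPsi_contOn K Y hY).comp_continuous (by fun_prop)
  intro u
  simpa using hl

lemma stPsi_int_line (K Y : ℝ) (hK : 0 < K) (hY : Y ∈ Ioo (1:ℝ) 2) (l : ℝ) (hl : 0 ≤ l) :
    Integrable (fun u : ℝ => stPsi K Y (l - u * Complex.I)) := by
  obtain ⟨D, hD, c, hc, h⟩ := stPsi_bound K Y hK hY l hl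
  refine ((integrable_exp_neg_abs' c hc).const_mul D).mono'
    (stPsi_cont_line K Y hY l hl).aestronglyMeasurable (ae_of_all _ fun u => h l u hl le_rfl)

lemma st_norm_exp (l u x : ℝ) :
    ‖Complex.exp ((l - u * Complex.I) * x)‖ = Real.exp (l * x) := by
  rw [Complex.norm_exp]; simp

lemma stPsi_int_line' (K Y : ℝ) (hK : 0 < K) (hY : Y ∈ Ioo (1:ℝ) 2) (l : ℝ) (hl : 0 ≤ l) (x : ℝ) :
    Integrable (fun u : ℝ => Complex.exp ((l - u * Complex.I) * x) *
      stPsi K Y (l - u * Complex.I)) := by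
  refine (stPsi_int_line K Y hK hY l hl).bdd_mul (c := Real.exp (l * x))
    (by fun_prop) (ae_of_all _ fun u => (st_norm_exp l u x).le)

/-- The density of the one-sided stable law. -/
noncomputable def stDens (K Y x : ℝ) : ℂ :=
  (1 / (2 * Real.pi) : ℝ) * ∫ u : ℝ, Complex.exp (((0:ℝ) - u * Complex.I) * x) *
    stPsi K Y ((0:ℝ) - u * Complex.I)

lemma st_shift (K Y : ℝ) (hK : 0 < K) (hY : Y ∈ Ioo (1:ℝ) 2) (l : ℝ) (hl : 0 ≤ l) (x : ℝ) :
    stDens K Y x = (1 / (2 * Real.pi) : ℝ) *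
      ∫ u : ℝ, Complex.exp ((l - u * Complex.I) * x) * stPsi K Y (l - u * Complex.I) := by
  unfold stDens
  congr 1
  obtain ⟨D, hD, c, hc, h⟩ := stPsi_bound K Y hK hY l hl
  set g : ℂ → ℂ := fun ζ => Complex.exp ((-Complex.I * ζ) * x) * stPsi K Y (-Complex.I * ζ) with hg
  have e : ∀ r y : ℝ, (-Complex.I * (r + y * Complex.I)) = (y - r * Complex.I) := by
    intro r y
    linear_combination (-(y:ℂ)) * Complex.I_mul_I
  have hgr : ∀ r y : ℝ, g (r + y * Complex.I) =
      Complex.exp ((y - r * Complex.I) * x) * stPsi K Y (y - r * Complex.I) := by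
    intro r y
    simp only [hg, e]
  have hlim : ∀ F : Filter ℝ, Tendsto (fun u : ℝ => |u|) F atTop →
      Tendsto (fun u => Real.exp (l * |x|) * (D * Real.exp (-c * |u|))) F (𝓝 0) := by
    intro F hF
    have : Tendsto (fun u : ℝ => -c * |u|) F atBot :=
      hF.const_mul_atTop_of_neg (by linarith)
    have := (Real.tendsto_exp_atBot.comp this)
    have := (this.const_mul D).const_mul (Real.exp (l * |x|))
    simpa using this
  have := horiz_shift g 0 l hl ?_ ?_ ?_ ?_
    (fun u => Real.exp (l * |x|) * (D * Real.exp (-c * |u|))) ?_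
    (hlim _ tendsto_abs_atTop_atTop) (hlim _ tendsto_abs_atBot_atTop)
  · simp_rw [hgr] at this
    exact this
  · refine ContinuousOn.mul (by fun_prop) ?_
    refine (stPsi_contOn K Y hY).comp (by fun_prop) ?_
    intro z hz
    simpa using hz.1
  · intro z hz _
    refine DifferentiableAt.mul (by fun_prop) ?_
    exact (stPsi_diff K Y (-Complex.I * z) (by simpa using hz)).comp z
      (f := fun ζ => -Complex.I * ζ) (by fun_prop)
  · simp_rw [hgr]; exact stPsi_int_line' K Y hK hY 0 le_rfl x
  · simp_rw [hgr]; exact stPsi_int_line' K Y hK hY l hl x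
  · intro r y hy hyl
    rw [hgr, norm_mul, st_norm_exp]
    have : y * x ≤ l * |x| := by
      calc y * x ≤ y * |x| := by gcongr; exact le_abs_self x
        _ ≤ l * |x| := by gcongr
    gcongr
    exact h y r hy hyl

lemma st_left (K Y : ℝ) (hK : 0 < K) (hY : Y ∈ Ioo (1:ℝ) 2) (l : ℝ) (hl : 0 ≤ l) :
    ∃ D > 0, ∀ x : ℝ, ‖stDens K Y x‖ ≤ D * Real.exp (l * x) := by
  refine ⟨(1 / (2 * Real.pi)) * (∫ u : ℝ, ‖stPsi K Y (l - u * Complex.I)‖) + 1, ?_, ?_⟩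
  · have : 0 ≤ (∫ u : ℝ, ‖stPsi K Y (l - u * Complex.I)‖) := integral_nonneg fun _ => norm_nonneg _
    have := Real.pi_pos
    positivity
  · intro x
    rw [st_shift K Y hK hY l hl x, norm_mul]
    have h1 : ‖∫ u : ℝ, Complex.exp ((l - u * Complex.I) * x) * stPsi K Y (l - u * Complex.I)‖
        ≤ (∫ u : ℝ, ‖stPsi K Y (l - u * Complex.I)‖) * Real.exp (l * x) := by
      refine (norm_integral_le_integral_norm _).trans ?_
      simp_rw [norm_mul, st_norm_exp]
      rw [integral_const_mul, mul_comm]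
    have h2 : ‖((1 / (2 * Real.pi) : ℝ) : ℂ)‖ = 1 / (2 * Real.pi) := by
      rw [Complex.norm_real, Real.norm_eq_abs, abs_of_pos]
      have := Real.pi_pos
      positivity
    rw [h2]
    have h3 := mul_le_mul_of_nonneg_left h1 (by have := Real.pi_pos; positivity : 0 ≤ 1 / (2 * Real.pi))
    have := Real.exp_pos (l * x)
    nlinarith

open FourierTransform in
lemma st_fourier (K Y : ℝ) (hK : 0 < K) (hY : Y ∈ Ioo (1:ℝ) 2) (l : ℝ) (hl : 0 ≤ l) (x : ℝ) :
    𝓕 (fun v : ℝ => stPsi K Y (l - (2 * Real.pi * v : ℝ) * Complex.I)) x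
      = Complex.exp (-(l * x)) * stDens K Y x := by
  rw [st_shift K Y hK hY l hl x, Real.fourier_real_eq_integral_exp_smul]
  have e := Measure.integral_comp_mul_left (fun u : ℝ => Complex.exp ((l - u * Complex.I) * x)
      * stPsi K Y (l - u * Complex.I)) (2 * Real.pi)
  have hpi : |(2 * Real.pi)⁻¹| = 1 / (2 * Real.pi) := by
    rw [abs_of_pos, one_div]
    have := Real.pi_pos
    positivity
  rw [hpi, Complex.real_smul] at e
  rw [← e, ← integral_const_mul]
  congr 1
  ext v
  rw [smul_eq_mul, ← mul_assoc, ← Complex.exp_add]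
  congr 2
  push_cast
  ring

lemma st_cont (K Y : ℝ) (hK : 0 < K) (hY : Y ∈ Ioo (1:ℝ) 2) : Continuous (stDens K Y) := by
  unfold stDens
  apply Continuous.mul continuous_const
  refine continuous_of_dominated (bound := fun u => ‖stPsi K Y ((0:ℝ) - u * Complex.I)‖) ?_ ?_ ?_ ?_
  · intro x; exact (stPsi_int_line' K Y hK hY 0 le_rfl x).aestronglyMeasurable
  · intro x
    refine ae_of_all _ fun u => ?_
    rw [norm_mul, st_norm_exp]
    simp
  · exact (stPsi_int_line K Y hK hY 0 le_rfl).norm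
  · refine ae_of_all _ fun u => ?_
    fun_prop


lemma st_exp_quad (y : ℝ) (hy : 0 ≤ y) : |Real.exp (-y) - 1 + y| ≤ y ^ 2 / 2 := by
  have h1 : 0 ≤ Real.exp (-y) - 1 + y := by have := Real.add_one_le_exp (-y); linarith
  rw [abs_of_nonneg h1]
  have h2 := Real.quadratic_le_exp_of_nonneg hy
  have h3 : Real.exp (-y) * Real.exp y = 1 := by rw [← Real.exp_add]; simp
  have h4 := Real.exp_pos (-y)
  have h5 : Real.exp (-y) * (1 + y + y ^ 2 / 2) ≤ 1 := by
    calc _ ≤ Real.exp (-y) * Real.exp y := by gcongr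
      _ = 1 := h3
  have h6 : (1 - y + y ^ 2 / 2) * (1 + y + y ^ 2 / 2) ≥ 1 := by nlinarith [sq_nonneg (y ^ 2)]
  have h7 : 0 < 1 + y + y ^ 2 / 2 := by positivity
  have : Real.exp (-y) ≤ 1 - y + y ^ 2 / 2 :=
    le_of_mul_le_mul_right (h5.trans h6) h7
  linarith

/-- rays without stable factor -/
noncomputable def stF0 (x m θ r : ℝ) : ℂ :=
  (r ^ m : ℝ) * Complex.exp ((m + 1) * θ * Complex.I) *
    Complex.exp (x * r * Complex.exp (θ * Complex.I))

lemma stF0_norm (x m θ r : ℝ) (hr : 0 < r) :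
    ‖stF0 x m θ r‖ = r ^ m * Real.exp (x * r * Real.cos θ) := by
  unfold stF0
  rw [norm_mul, norm_mul, Complex.norm_real, Complex.norm_exp, Complex.norm_exp]
  have e1 : (((m:ℂ) + 1) * θ * Complex.I).re = 0 := by
    have : ((m:ℂ) + 1) * θ * Complex.I = (((m + 1) * θ : ℝ) : ℂ) * Complex.I := by push_cast; ring
    rw [this]; simp
  have e2 : ((x:ℂ) * r * Complex.exp (θ * Complex.I)).re = x * r * Real.cos θ := by
    have : (x:ℂ) * r = ((x * r : ℝ) : ℂ) := by push_cast; ring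
    rw [this, Complex.re_ofReal_mul, Complex.exp_ofReal_mul_I_re]
  rw [e1, e2, Real.norm_of_nonneg (Real.rpow_nonneg hr.le m)]
  simp

lemma stF0_int (x m θ : ℝ) (hx : 0 < x) (hm : 0 ≤ m) (hθ : Real.cos θ < 0) :
    IntegrableOn (stF0 x m θ) (Ioi 0) := by
  have h := integrableOn_rpow_mul_exp_neg_mul_rpow (p := 1) (s := m) (b := x * (-Real.cos θ))
    (by linarith) (by norm_num) (by nlinarith)
  refine Integrable.mono' h ?_ ?_
  · apply Measurable.aestronglyMeasurable
    unfold stF0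
    fun_prop
  · refine (ae_restrict_iff' measurableSet_Ioi).2 (ae_of_all _ fun r hr => ?_)
    rw [stF0_norm x m θ r hr, Real.rpow_one]
    apply le_of_eq
    congr 2
    ring

lemma stF0_eval (x m β : ℝ) (hx : 0 < x) (hm : 0 ≤ m) (h1 : Real.pi / 2 < β) (h2 : β ≤ Real.pi) :
    ∫ r in Ioi (0:ℝ), stF0 x m β r =
      Complex.exp ((m + 1) * Real.pi * Complex.I) * ((1 / x) ^ (m + 1) * Real.Gamma (m + 1) : ℝ) := by
  have hcb : Real.cos β < 0 := Real.cos_neg_of_pi_div_two_lt_of_lt h1 (by linarith [Real.pi_pos])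
  have hcpi : Real.cos Real.pi < 0 := by simp
  have e := ray_rotate (fun ζ => Complex.exp (x * Complex.exp ζ + (m + 1) * ζ)) (by fun_prop) β
    Real.pi h2 (stF0 x m) ?_ (stF0_int x m β hx hm hcb) (stF0_int x m _ hx hm hcpi)
    (fun r => r ^ (m + 1) * Real.exp (-(x * (-Real.cos β)) * r)) ?_ ?_ ?_
  · rw [e]
    have : ∀ r ∈ Ioi (0:ℝ), stF0 x m Real.pi r = Complex.exp ((m + 1) * Real.pi * Complex.I) *
        ((r ^ ((m + 1) - 1) * Real.exp (-(x * r)) : ℝ) : ℂ) := by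
      intro r hr
      unfold stF0
      rw [Complex.exp_pi_mul_I, add_sub_cancel_right]
      push_cast
      rw [show (x:ℂ) * r * -1 = -(x * r) by ring]
      ring
    rw [setIntegral_congr_fun measurableSet_Ioi this, integral_const_mul, integral_complex_ofReal,
      Real.integral_rpow_mul_exp_neg_mul_Ioi (by linarith) hx]
  · intro θ ρ
    unfold stF0
    rw [← Real.exp_mul, Complex.ofReal_exp, Complex.ofReal_exp]
    rw [mul_assoc (x:ℂ), ← Complex.exp_add, ← Complex.exp_add, ← Complex.exp_add, ← Complex.exp_add]
    congr 1
    push_cast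
    ring
  · intro r θ hr ha hb
    rw [stF0_norm x m θ r hr, Real.rpow_add_one hr.ne']
    have : Real.cos θ ≤ Real.cos β :=
      Real.cos_le_cos_of_nonneg_of_le_pi (by linarith [Real.pi_pos]) hb ha
    have h3 : x * r * Real.cos θ ≤ -(x * -Real.cos β) * r := by
      have := mul_le_mul_of_nonneg_left this (mul_pos hx hr).le
      linarith
    have h4 := Real.exp_le_exp.2 h3
    have : 0 ≤ r ^ m * r := by positivity
    calc r * (r ^ m * Real.exp (x * r * Real.cos θ)) = (r ^ m * r) * Real.exp (x * r * Real.cos θ) := by ring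
      _ ≤ _ := by gcongr
  · exact tendsto_rpow_mul_exp_neg_mul_atTop_nhds_zero (m + 1) _ (by nlinarith)
  · have : ContinuousAt (fun r : ℝ => r ^ (m + 1) * Real.exp (-(x * (-Real.cos β)) * r)) 0 := by
      apply ContinuousAt.mul
      · exact Real.continuousAt_rpow_const _ _ (Or.inr (by linarith))
      · fun_prop
    have h := this.tendsto
    simp only [mul_zero, Real.exp_zero, mul_one] at h
    rw [Real.zero_rpow (by linarith)] at h
    exact h.mono_left nhdsWithin_le_nhds

/-- rays with stable factor -/
noncomputable def stF1 (K Y x θ r : ℝ) : ℂ :=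
  Complex.exp (θ * Complex.I) * Complex.exp (x * r * Complex.exp (θ * Complex.I)
    + K * (r ^ Y : ℝ) * Complex.exp (Y * θ * Complex.I))

lemma stF1_norm (K Y x θ r : ℝ) :
    ‖stF1 K Y x θ r‖ = Real.exp (x * r * Real.cos θ + K * r ^ Y * Real.cos (Y * θ)) := by
  unfold stF1
  rw [norm_mul, Complex.norm_exp, Complex.norm_exp]
  have e1 : ((θ:ℂ) * Complex.I).re = 0 := by simp
  have e2 : ((x:ℂ) * r * Complex.exp (θ * Complex.I)).re = x * r * Real.cos θ := by
    have : (x:ℂ) * r = ((x * r : ℝ) : ℂ) := by push_cast; ring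
    rw [this, Complex.re_ofReal_mul, Complex.exp_ofReal_mul_I_re]
  have e3 : ((K:ℂ) * (r ^ Y : ℝ) * Complex.exp (Y * θ * Complex.I)).re
      = K * r ^ Y * Real.cos (Y * θ) := by
    have : (K:ℂ) * (r ^ Y : ℝ) = ((K * r ^ Y : ℝ) : ℂ) := by push_cast; ring
    have h2 : (Y:ℂ) * θ = ((Y * θ : ℝ) : ℂ) := by push_cast; ring
    rw [this, h2, Complex.re_ofReal_mul, Complex.exp_ofReal_mul_I_re]
  rw [e1, Complex.add_re, e2, e3]
  simp

lemma stF1_bound (K Y x θ r : ℝ) (hK : 0 < K) (hY : Y ∈ Ioo (1:ℝ) 2) (hx : 0 ≤ x) (hr : 0 < r)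
    (h1 : Real.pi / 2 ≤ θ) (h2 : θ ≤ Real.pi / Y) :
    ‖stF1 K Y x θ r‖ ≤ Real.exp (K * (-Real.cos (Real.pi * Y / 2))) *
      Real.exp (-(K * (-Real.cos (Real.pi * Y / 2))) * r) := by
  obtain ⟨hY1, hY2⟩ := hY
  have hpi := Real.pi_pos
  have hYθ : Y * θ ≤ Real.pi := by
    rw [le_div_iff₀ (by linarith)] at h2; linarith
  have hθpi : θ ≤ Real.pi := by nlinarith
  have hc1 : Real.cos θ ≤ 0 := Real.cos_nonpos_of_pi_div_two_le_of_le h1 (by linarith)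
  have hc2 : Real.cos (Y * θ) ≤ Real.cos (Real.pi * Y / 2) :=
    Real.cos_le_cos_of_nonneg_of_le_pi (by positivity) hYθ (by nlinarith)
  have hc3 := st_cos_neg Y ⟨hY1, hY2⟩
  rw [stF1_norm, ← Real.exp_add]
  apply Real.exp_le_exp.2
  have hYr : r - 1 ≤ r ^ Y := by
    rcases le_total r 1 with h | h
    · have := Real.rpow_nonneg hr.le Y; linarith
    · have := Real.self_le_rpow_of_one_le h hY1.le; linarith
  have t1 : x * r * Real.cos θ ≤ 0 := mul_nonpos_of_nonneg_of_nonpos (by positivity) hc1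
  have t2 : K * r ^ Y * Real.cos (Y * θ) ≤ K * r ^ Y * Real.cos (Real.pi * Y / 2) := by gcongr
  have t3 : K * (-Real.cos (Real.pi * Y / 2)) * (r - 1) ≤ K * (-Real.cos (Real.pi * Y / 2)) * r ^ Y := by
    gcongr
    nlinarith
  linarith

lemma stF1_int (K Y x θ : ℝ) (hK : 0 < K) (hY : Y ∈ Ioo (1:ℝ) 2) (hx : 0 ≤ x)
    (h1 : Real.pi / 2 ≤ θ) (h2 : θ ≤ Real.pi / Y) :
    IntegrableOn (stF1 K Y x θ) (Ioi 0) := by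
  have hc := st_cos_neg Y hY
  have h := (exp_neg_integrableOn_Ioi 0 (b := K * (-Real.cos (Real.pi * Y / 2)))
    (by nlinarith)).const_mul (Real.exp (K * (-Real.cos (Real.pi * Y / 2))))
  refine Integrable.mono' h ?_ ?_
  · apply Measurable.aestronglyMeasurable
    unfold stF1
    fun_prop
  · refine (ae_restrict_iff' measurableSet_Ioi).2 (ae_of_all _ fun r hr => ?_)
    exact stF1_bound K Y x θ r hK hY hx hr h1 h2

lemma stF1_rot (K Y x : ℝ) (hK : 0 < K) (hY : Y ∈ Ioo (1:ℝ) 2) (hx : 0 ≤ x) :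
    ∫ r in Ioi (0:ℝ), stF1 K Y x (Real.pi / 2) r = ∫ r in Ioi (0:ℝ), stF1 K Y x (Real.pi / Y) r := by
  have hc := st_cos_neg Y hY
  obtain ⟨hY1, hY2⟩ := id hY
  have hle : Real.pi / 2 ≤ Real.pi / Y := by
    have := Real.pi_pos
    gcongr
  set b := K * (-Real.cos (Real.pi * Y / 2)) with hb
  have hbpos : 0 < b := by nlinarith
  refine ray_rotate (fun ζ => Complex.exp (x * Complex.exp ζ + K * Complex.exp (Y * ζ) + ζ))
    (by fun_prop) _ _ hle (stF1 K Y x) ?_ (stF1_int K Y x _ hK hY hx le_rfl hle)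
    (stF1_int K Y x _ hK hY hx hle le_rfl)
    (fun r => Real.exp b * (r ^ (1:ℝ) * Real.exp (-b * r))) ?_ ?_ ?_
  · intro θ ρ
    unfold stF1
    rw [← Real.exp_mul, Complex.ofReal_exp, Complex.ofReal_exp]
    rw [mul_assoc (x:ℂ), mul_assoc (K:ℂ), ← Complex.exp_add, ← Complex.exp_add, ← Complex.exp_add,
      ← Complex.exp_add]
    congr 1
    push_cast
    rw [show (Y:ℂ) * (ρ + θ * Complex.I) = ρ * Y + Y * θ * Complex.I by ring]
    ring
  · intro r θ hr ha hb'
    have := stF1_bound K Y x θ r hK hY hx hr ha hb'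
    rw [← hb] at this
    have := mul_le_mul_of_nonneg_left this hr.le
    rw [Real.rpow_one]
    linarith
  · have := (tendsto_rpow_mul_exp_neg_mul_atTop_nhds_zero 1 b hbpos).const_mul (Real.exp b)
    simpa using this
  · have : ContinuousAt (fun r : ℝ => Real.exp b * (r ^ (1:ℝ) * Real.exp (-b * r))) 0 := by
      simp_rw [Real.rpow_one]
      fun_prop
    have h := this.tendsto
    simp only [mul_zero, Real.exp_zero, mul_one, Real.rpow_one] at h
    simp only [Real.rpow_one]
    exact h.mono_left nhdsWithin_le_nhds


lemma st_dens_ray (K Y : ℝ) (hK : 0 < K) (hY : Y ∈ Ioo (1:ℝ) 2) (x : ℝ) :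
    stDens K Y x = ((1 / Real.pi * (∫ r in Ioi (0:ℝ), stF1 K Y x (Real.pi / 2) r).im : ℝ) : ℂ) := by
  have hintg := stPsi_int_line' K Y hK hY 0 le_rfl x
  unfold stDens
  set Gf : ℝ → ℂ := fun u => Complex.exp (((0:ℝ) - u * Complex.I) * x) *
    stPsi K Y ((0:ℝ) - u * Complex.I) with hG
  have e1 : ∫ u, Gf u = (∫ u in Ioi (0:ℝ), Gf (-u)) + ∫ u in Ioi (0:ℝ), Gf u := by
    rw [integral_comp_neg_Ioi, neg_zero,
      intervalIntegral.integral_Iic_add_Ioi hintg.integrableOn hintg.integrableOn]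
  have e2 : ∀ u ∈ Ioi (0:ℝ), Gf (-u) = -Complex.I * stF1 K Y x (Real.pi / 2) u := by
    intro u hu
    have hu' : (0:ℝ) < u := hu
    simp only [hG, stPsi, stF1]
    have a1 : Complex.exp (((Real.pi / 2 : ℝ) : ℂ) * Complex.I) = Complex.I := by
      push_cast; exact Complex.exp_pi_div_two_mul_I
    have a2 : (((0:ℝ):ℂ) - ((-u : ℝ) : ℂ) * Complex.I) = u * Complex.I := by push_cast; ring
    have a3 : ((u:ℂ) * Complex.I) ^ (Y:ℂ) = (u ^ Y : ℝ) *
        Complex.exp (Y * ((Real.pi / 2 : ℝ) : ℂ) * Complex.I) := by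
      rw [Complex.cpow_def_of_ne_zero (by simp [hu'.ne']), Complex.log_ofReal_mul hu' Complex.I_ne_zero,
        Complex.log_I, Complex.ofReal_cpow hu'.le, Complex.cpow_def_of_ne_zero (by simp [hu'.ne']),
        ← Complex.exp_add, Complex.ofReal_log hu'.le]
      congr 1
      push_cast
      ring
    rw [a1, a2, a3, ← Complex.exp_add]
    rw [← mul_assoc (-Complex.I), neg_mul, Complex.I_mul_I, neg_neg, one_mul]
    congr 1
    ring
  have e3 : ∀ u : ℝ, Gf u = (starRingEnd ℂ) (Gf (-u)) := by
    intro u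
    simp only [hG, stPsi]
    rcases eq_or_ne u 0 with rfl | hu
    · have : (Y:ℂ) ≠ 0 := by exact_mod_cast (by linarith [hY.1] : Y ≠ 0)
      simp [this]
    · rw [map_mul, ← Complex.exp_conj, ← Complex.exp_conj]
      congr 2
      · simp
      · rw [map_mul, Complex.conj_ofReal K]
        congr 1
        have harg : (((0:ℝ):ℂ) - ((-u : ℝ) : ℂ) * Complex.I).arg ≠ Real.pi := by
          intro h
          rw [Complex.arg_eq_pi_iff] at h
          simp at h
        have := Complex.conj_cpow (((0:ℝ):ℂ) - ((-u : ℝ) : ℂ) * Complex.I) (Y:ℂ) harg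
        rw [Complex.conj_ofReal] at this
        rw [← this]
        congr 1
        simp
  have e4 : ∫ u in Ioi (0:ℝ), Gf u = (starRingEnd ℂ) (∫ u in Ioi (0:ℝ), Gf (-u)) := by
    rw [← integral_conj]
    congr 1
    ext u
    exact e3 u
  rw [e1, e4, setIntegral_congr_fun measurableSet_Ioi e2, integral_const_mul, Complex.add_conj]
  set J := ∫ r in Ioi (0:ℝ), stF1 K Y x (Real.pi / 2) r
  have : (-Complex.I * J).re = J.im := by simp
  rw [this]
  have := Real.pi_pos.ne'
  push_cast
  field_simp

lemma st_right (K Y : ℝ) (hK : 0 < K) (hY : Y ∈ Ioo (1:ℝ) 2) :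
    ∃ B > 0, ∀ x > 0, ‖stDens K Y x - ((-(K * Real.Gamma (Y + 1) * Real.sin (Real.pi * Y) / Real.pi)
      * (1 / x) ^ (Y + 1) : ℝ) : ℂ)‖ ≤ B * (1 / x) ^ (2 * Y + 1) := by
  obtain ⟨hY1, hY2⟩ := id hY
  have hpi := Real.pi_pos
  set β := Real.pi / Y with hβ
  have hYβ : Y * β = Real.pi := by rw [hβ]; field_simp
  have hβ1 : Real.pi / 2 < β := by rw [hβ]; gcongr
  have hβ2 : β ≤ Real.pi := by nlinarith
  have hcb : Real.cos β < 0 := Real.cos_neg_of_pi_div_two_lt_of_lt hβ1 (by linarith)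
  refine ⟨(1 / Real.pi) * (K ^ 2 / 2 * ((1 / (-Real.cos β)) ^ (2 * Y + 1) * Real.Gamma (2 * Y + 1))),
    ?_, ?_⟩
  · have : 0 < 1 / (-Real.cos β) := by apply one_div_pos.2; linarith
    have := Real.Gamma_pos_of_pos (s := 2 * Y + 1) (by linarith)
    positivity
  intro x hx
  rw [st_dens_ray K Y hK hY x, stF1_rot K Y x hK hY hx.le]
  have hcd : 0 < x * (-Real.cos β) := mul_pos hx (by linarith)
  -- the remainder
  set Rf : ℝ → ℂ := fun r => stF1 K Y x β r - stF0 x 0 β r - K * stF0 x Y β r with hRf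
  have hF1 : ∀ r ∈ Ioi (0:ℝ), Rf r = stF0 x 0 β r * ((Real.exp (-(K * r ^ Y)) - 1 + K * r ^ Y : ℝ) : ℂ) := by
    intro r hr
    simp only [hRf, stF1, stF0]
    have a1 : Complex.exp ((Y:ℂ) * β * Complex.I) = -1 := by
      rw [show (Y:ℂ) * β = ((Y * β : ℝ) : ℂ) by push_cast; ring, hYβ, Complex.exp_pi_mul_I]
    have a2 : Complex.exp (((Y:ℂ) + 1) * β * Complex.I) = - Complex.exp (β * Complex.I) := by
      rw [show ((Y:ℂ) + 1) * β * Complex.I = Y * β * Complex.I + β * Complex.I by ring,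
        Complex.exp_add, a1]; ring
    rw [a1, a2, Complex.exp_add]
    rw [show (K:ℂ) * (r ^ Y : ℝ) * -1 = ((-(K * r ^ Y) : ℝ) : ℂ) by push_cast; ring,
      ← Complex.ofReal_exp]
    push_cast
    simp
    ring
  have hi1 := stF1_int K Y x β hK hY hx.le hβ1.le le_rfl
  have hi2 := stF0_int x 0 β hx le_rfl hcb
  have hi3 := (stF0_int x Y β hx (by linarith) hcb).const_mul (K:ℂ)
  have hRint : ∫ r in Ioi (0:ℝ), Rf r = (∫ r in Ioi (0:ℝ), stF1 K Y x β r)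
      - (∫ r in Ioi (0:ℝ), stF0 x 0 β r) - K * ∫ r in Ioi (0:ℝ), stF0 x Y β r := by
    simp only [hRf]
    have hi12 : IntegrableOn (fun r => stF1 K Y x β r - stF0 x 0 β r) (Ioi 0) := hi1.sub hi2
    rw [integral_sub hi12 hi3, integral_sub hi1 hi2, integral_const_mul]
  rw [stF0_eval x 0 β hx le_rfl hβ1 hβ2, stF0_eval x Y β hx (by linarith) hβ1 hβ2] at hRint
  have him := congrArg Complex.im hRint
  have b1 : Complex.exp ((((0:ℝ):ℂ) + 1) * Real.pi * Complex.I) = -1 := by simp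
  have b2 : Complex.exp (((Y:ℂ) + 1) * Real.pi * Complex.I)
      = -Complex.exp (((Real.pi * Y : ℝ) : ℂ) * Complex.I) := by
    rw [show ((Y:ℂ) + 1) * Real.pi * Complex.I = ((Real.pi * Y : ℝ) : ℂ) * Complex.I
      + Real.pi * Complex.I by push_cast; ring, Complex.exp_add, Complex.exp_pi_mul_I]; ring
  rw [b1, b2, Complex.sub_im, Complex.sub_im, Complex.im_ofReal_mul, Complex.im_mul_ofReal,
    Complex.im_mul_ofReal, Complex.neg_im, Complex.neg_im, Complex.exp_ofReal_mul_I_im] at him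
  simp only [Complex.one_im, neg_zero, zero_mul, sub_zero] at him
  have hnorm : ‖∫ r in Ioi (0:ℝ), Rf r‖ ≤
      K ^ 2 / 2 * ((1 / (x * (-Real.cos β))) ^ (2 * Y + 1) * Real.Gamma (2 * Y + 1)) := by
    rw [← Real.integral_rpow_mul_exp_neg_mul_Ioi (by linarith) hcd, ← integral_const_mul]
    apply norm_integral_le_of_norm_le
    · apply Integrable.const_mul
      have h := integrableOn_rpow_mul_exp_neg_mul_rpow (p := 1) (s := 2 * Y) (b := x * (-Real.cos β))
        (by linarith) (by norm_num) hcd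
      refine h.congr_fun ?_ measurableSet_Ioi
      intro r _
      simp
    · refine (ae_restrict_iff' measurableSet_Ioi).2 (ae_of_all _ fun r hr => ?_)
      have hr' : (0:ℝ) < r := hr
      rw [hF1 r hr, norm_mul, stF0_norm x 0 β r hr, Complex.norm_real, Real.norm_eq_abs]
      have := st_exp_quad (K * r ^ Y) (by positivity)
      have e : (K * r ^ Y) ^ 2 / 2 = K ^ 2 / 2 * r ^ (2 * Y + 1 - 1) := by
        rw [add_sub_cancel_right, mul_comm 2 Y, Real.rpow_mul hr'.le, mul_pow]
        norm_cast
        ring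
      rw [e] at this
      rw [Real.rpow_zero, one_mul]
      have e2 : x * r * Real.cos β = -(x * -Real.cos β * r) := by ring
      rw [e2]
      have := mul_le_mul_of_nonneg_left this (Real.exp_pos (-(x * -Real.cos β * r))).le
      linarith
  rw [← Complex.ofReal_sub, Complex.norm_real, Real.norm_eq_abs]
  have e5 : 1 / Real.pi * (∫ r in Ioi (0:ℝ), stF1 K Y x β r).im -
      -(K * Real.Gamma (Y + 1) * Real.sin (Real.pi * Y) / Real.pi) * (1 / x) ^ (Y + 1)
      = 1 / Real.pi * (∫ r in Ioi (0:ℝ), Rf r).im := by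
    rw [him]
    ring
  rw [e5, abs_mul, abs_of_pos (by positivity : 0 < 1 / Real.pi)]
  have e6 : (1 / (x * (-Real.cos β))) ^ (2 * Y + 1)
      = (1 / (-Real.cos β)) ^ (2 * Y + 1) * (1 / x) ^ (2 * Y + 1) := by
    rw [← Real.mul_rpow (by apply (one_div_pos.2 _).le; linarith) (by positivity)]
    congr 1
    field_simp
  rw [e6] at hnorm
  have := (Complex.abs_im_le_norm _).trans hnorm
  have := mul_le_mul_of_nonneg_left this (by positivity : 0 ≤ 1 / Real.pi)
  refine this.trans (le_of_eq ?_)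
  ring


/-- real density -/
noncomputable def stq (K Y x : ℝ) : ℝ := (stDens K Y x).re

lemma stq_eq (K Y : ℝ) (hK : 0 < K) (hY : Y ∈ Ioo (1:ℝ) 2) (x : ℝ) :
    stDens K Y x = (stq K Y x : ℂ) := by
  unfold stq
  rw [st_dens_ray K Y hK hY x, Complex.ofReal_re]

lemma stq_cont (K Y : ℝ) (hK : 0 < K) (hY : Y ∈ Ioo (1:ℝ) 2) : Continuous (stq K Y) :=
  Complex.continuous_re.comp (st_cont K Y hK hY)

lemma stq_left (K Y : ℝ) (hK : 0 < K) (hY : Y ∈ Ioo (1:ℝ) 2) (l : ℝ) (hl : 0 ≤ l) :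
    ∃ D > 0, ∀ x : ℝ, |stq K Y x| ≤ D * Real.exp (l * x) := by
  obtain ⟨D, hD, h⟩ := st_left K Y hK hY l hl
  refine ⟨D, hD, fun x => ?_⟩
  have := h x
  rwa [stq_eq K Y hK hY, Complex.norm_real] at this

lemma stq_right (C Y : ℝ) (hC : 0 < C) (hY : Y ∈ Ioo (1:ℝ) 2) (hK : 0 < C * Real.Gamma (-Y)) :
    ∃ B > 0, ∀ x > 0, |stq (C * Real.Gamma (-Y)) Y x - C * x ^ (-Y - 1)| ≤ B * x ^ (-2 * Y - 1) := by
  obtain ⟨B, hB, h⟩ := st_right (C * Real.Gamma (-Y)) Y hK hY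
  refine ⟨B, hB, fun x hx => ?_⟩
  have := h x hx
  rw [stq_eq _ Y hK hY, ← Complex.ofReal_sub, Complex.norm_real] at this
  have e1 : (1 / x) ^ (Y + 1) = x ^ (-Y - 1) := by
    rw [one_div, Real.inv_rpow hx.le, ← Real.rpow_neg hx.le]; congr 1; ring
  have e2 : (1 / x) ^ (2 * Y + 1) = x ^ (-2 * Y - 1) := by
    rw [one_div, Real.inv_rpow hx.le, ← Real.rpow_neg hx.le]; congr 1; ring
  have hs : Real.sin (Real.pi * Y) ≠ 0 := by
    have : Real.sin (Real.pi * Y - Real.pi) > 0 := by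
      apply Real.sin_pos_of_pos_of_lt_pi
      · nlinarith [hY.1, Real.pi_pos]
      · nlinarith [hY.2, Real.pi_pos]
    rw [Real.sin_sub_pi] at this
    intro h0; rw [h0] at this; simp at this
  have e3 : -(C * Real.Gamma (-Y) * Real.Gamma (Y + 1) * Real.sin (Real.pi * Y) / Real.pi) = C := by
    have := Real.Gamma_mul_Gamma_one_sub (-Y)
    rw [mul_neg, Real.sin_neg, show 1 - -Y = Y + 1 by ring] at this
    rw [mul_assoc C, this]
    have := Real.pi_pos.ne'
    field_simp
  rw [e1, e2, e3] at this
  exact this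

lemma stq_int_right (C Y : ℝ) (hC : 0 < C) (hY : Y ∈ Ioo (1:ℝ) 2) (hK : 0 < C * Real.Gamma (-Y)) :
    ∃ D > 0, ∀ x ≥ 1, |stq (C * Real.Gamma (-Y)) Y x| ≤ D * x ^ (-Y - 1) := by
  obtain ⟨B, hB, h⟩ := stq_right C Y hC hY hK
  refine ⟨B + C, by positivity, fun x hx => ?_⟩
  have h1 := h x (by linarith)
  have h2 : x ^ (-2 * Y - 1) ≤ x ^ (-Y - 1) := Real.rpow_le_rpow_of_exponent_le hx (by linarith [hY.1])
  have h3 : 0 ≤ x ^ (-Y - 1) := by positivity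
  calc _ ≤ |stq (C * Real.Gamma (-Y)) Y x - C * x ^ (-Y - 1)| + |C * x ^ (-Y - 1)| := by
        have := abs_add_le (stq (C * Real.Gamma (-Y)) Y x - C * x ^ (-Y - 1)) (C * x ^ (-Y - 1))
        simpa using this
    _ ≤ B * x ^ (-Y - 1) + C * x ^ (-Y - 1) := by
        gcongr
        · exact h1.trans (by gcongr)
        · rw [abs_of_nonneg (by positivity)]
    _ = _ := by ring

lemma stq_exp_int (C Y : ℝ) (hC : 0 < C) (hY : Y ∈ Ioo (1:ℝ) 2) (hK : 0 < C * Real.Gamma (-Y))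
    (l : ℝ) (hl : 0 ≤ l) :
    Integrable (fun x => Real.exp (-(l * x)) * stq (C * Real.Gamma (-Y)) Y x) := by
  set K := C * Real.Gamma (-Y)
  have hc := stq_cont K Y hK hY
  have hc' : Continuous (fun x => Real.exp (-(l * x)) * stq K Y x) := by fun_prop
  rw [← integrableOn_univ, ← Iic_union_Ioi (a := (1:ℝ))]
  apply IntegrableOn.union
  · obtain ⟨D, hD, h⟩ := stq_left K Y hK hY (l + 1) (by linarith)
    have := (integrableOn_exp_mul_Iic (a := 1) one_pos 1).const_mul D
    refine this.mono' hc'.aestronglyMeasurable (ae_of_all _ fun x => ?_)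
    rw [norm_mul, Real.norm_of_nonneg (Real.exp_pos _).le, Real.norm_eq_abs]
    calc _ ≤ Real.exp (-(l * x)) * (D * Real.exp ((l + 1) * x)) := by gcongr; exact h x
      _ = D * Real.exp (1 * x) := by
        rw [mul_left_comm, ← Real.exp_add]; congr 2; ring
  · obtain ⟨D, hD, h⟩ := stq_int_right C Y hC hY hK
    have := (integrableOn_Ioi_rpow_of_lt (a := -Y - 1) (c := 1) (by linarith [hY.1]) one_pos).const_mul D
    refine this.mono' hc'.aestronglyMeasurable ?_
    refine (ae_restrict_iff' measurableSet_Ioi).2 (ae_of_all _ fun x hx => ?_)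
    have hx : 1 < x := hx
    rw [norm_mul, Real.norm_of_nonneg (Real.exp_pos _).le, Real.norm_eq_abs]
    calc _ ≤ 1 * (D * x ^ (-Y - 1)) := by
          gcongr
          · rw [Real.exp_le_one_iff]; nlinarith
          · exact h x hx.le
      _ = _ := by ring

lemma stq_id_int (C Y : ℝ) (hC : 0 < C) (hY : Y ∈ Ioo (1:ℝ) 2) (hK : 0 < C * Real.Gamma (-Y)) :
    Integrable (fun x => x * stq (C * Real.Gamma (-Y)) Y x) := by
  set K := C * Real.Gamma (-Y)
  have hc := stq_cont K Y hK hY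
  have hc' : Continuous (fun x => x * stq K Y x) := by fun_prop
  rw [← integrableOn_univ, ← Iic_union_Ioi (a := (1:ℝ))]
  apply IntegrableOn.union
  · obtain ⟨D, hD, h⟩ := stq_left K Y hK hY 2 (by linarith)
    have := (integrableOn_exp_mul_Iic (a := 1) one_pos 1).const_mul (Real.exp 2 * D)
    refine this.mono' hc'.aestronglyMeasurable ?_
    refine (ae_restrict_iff' measurableSet_Iic).2 (ae_of_all _ fun x hx => ?_)
    have hx : x ≤ 1 := hx
    rw [norm_mul, Real.norm_eq_abs, Real.norm_eq_abs]
    have h1 : |x| ≤ Real.exp (2 - x) := by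
      have := Real.add_one_le_exp (2 - x)
      rw [abs_le]; constructor <;> linarith
    calc _ ≤ Real.exp (2 - x) * (D * Real.exp (2 * x)) := by gcongr; exact h x
      _ = Real.exp 2 * D * Real.exp (1 * x) := by
        rw [mul_left_comm, ← Real.exp_add, mul_comm (Real.exp 2), mul_assoc, ← Real.exp_add]
        congr 2; ring
  · obtain ⟨D, hD, h⟩ := stq_int_right C Y hC hY hK
    have := (integrableOn_Ioi_rpow_of_lt (a := -Y) (c := 1) (by linarith [hY.1]) one_pos).const_mul D
    refine this.mono' hc'.aestronglyMeasurable ?_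
    refine (ae_restrict_iff' measurableSet_Ioi).2 (ae_of_all _ fun x hx => ?_)
    have hx : 1 < x := hx
    rw [norm_mul, Real.norm_of_nonneg (by linarith), Real.norm_eq_abs]
    calc _ ≤ x * (D * x ^ (-Y - 1)) := by
          gcongr
          exact h x hx.le
      _ = _ := by
        rw [Real.rpow_sub (by linarith), Real.rpow_one]
        have : x ≠ 0 := by linarith
        field_simp

lemma stq_laplace (C Y : ℝ) (hC : 0 < C) (hY : Y ∈ Ioo (1:ℝ) 2) (hK : 0 < C * Real.Gamma (-Y))
    (l : ℝ) (hl : 0 ≤ l) (u : ℝ) :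
    ∫ x : ℝ, (stq (C * Real.Gamma (-Y)) Y x : ℂ) * Complex.exp (-((l - u * Complex.I) * x))
      = stPsi (C * Real.Gamma (-Y)) Y (l - u * Complex.I) := by
  set K := C * Real.Gamma (-Y) with hKd
  have hpi := Real.pi_pos
  set g : ℝ → ℂ := fun v : ℝ => stPsi K Y (l - (2 * Real.pi * v : ℝ) * Complex.I) with hg
  have hgc : Continuous g := (stPsi_cont_line K Y hY l hl).comp
    (by fun_prop : Continuous fun v : ℝ => 2 * Real.pi * v)
  have hgi : Integrable g :=
    (stPsi_int_line K Y hK hY l hl).comp_mul_left' (by positivity : 2 * Real.pi ≠ 0)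
  have hF : FourierTransform.fourier g = fun x : ℝ => ((Real.exp (-(l * x)) * stq K Y x : ℝ) : ℂ) := by
    ext x
    rw [hg, st_fourier K Y hK hY l hl x, stq_eq K Y hK hY]
    push_cast; rfl
  have hi : Integrable (FourierTransform.fourier g) := by
    rw [hF]; exact (stq_exp_int C Y hC hY hK l hl).ofReal
  have := hgc.fourierInv_fourier_eq hgi hi
  have h2 := congrFun this (u / (2 * Real.pi))
  rw [Real.fourierInv_eq', hF] at h2
  have h3 : g (u / (2 * Real.pi)) = stPsi K Y (l - u * Complex.I) := by
    simp only [hg]; rw [mul_div_cancel₀ _ (by positivity)]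
  rw [← h3, ← h2]
  congr 1; ext x
  rw [smul_eq_mul]
  push_cast
  rw [mul_comm (Complex.exp (-(l * x) : ℂ)), mul_left_comm, ← Complex.exp_add]
  congr 2
  simp
  field_simp
  ring


lemma st_law (C Y : ℝ) (hC : 0 < C) (hY : Y ∈ Ioo (1:ℝ) 2) (hK : 0 < C * Real.Gamma (-Y))
    (ν : Measure ℝ) [IsProbabilityMeasure ν]
    (h : ∀ u : ℝ, ∫ x : ℝ, Complex.exp (Complex.I * u * x) ∂ν =
      stPsi (C * Real.Gamma (-Y)) Y ((0:ℝ) - u * Complex.I)) :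
    ν = volume.withDensity (fun x => ENNReal.ofReal (stq (C * Real.Gamma (-Y)) Y x)) ∧
    ∀ᵐ x : ℝ, 0 ≤ stq (C * Real.Gamma (-Y)) Y x := by
  set K := C * Real.Gamma (-Y) with hKd
  have hc := stq_cont K Y hK hY
  have hqi : Integrable (stq K Y) := by
    have := stq_exp_int C Y hC hY hK 0 le_rfl
    simpa using this
  set p : ℝ → ENNReal := fun x => ENNReal.ofReal (stq K Y x) with hp
  set m : ℝ → ENNReal := fun x => ENNReal.ofReal (-stq K Y x) with hm
  have hpm : Measurable p := by fun_prop
  have hmm : Measurable m := by fun_prop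
  have : IsFiniteMeasure (volume.withDensity p) := isFiniteMeasure_withDensity_ofReal hqi.2
  have : IsFiniteMeasure (volume.withDensity m) := isFiniteMeasure_withDensity_ofReal hqi.neg.2
  have key : ν + volume.withDensity m = volume.withDensity p := by
    apply Measure.ext_of_charFun
    ext u
    have hb : ∀ (μ : Measure ℝ) [IsFiniteMeasure μ],
        Integrable (fun x : ℝ => Complex.exp (u * x * Complex.I)) μ := by
      intro μ _
      refine (integrable_const (1:ℝ)).mono' (by fun_prop) (ae_of_all _ fun x => ?_)
      rw [← Complex.ofReal_mul, Complex.norm_exp_ofReal_mul_I]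
    rw [charFun_apply_real, charFun_apply_real, integral_add_measure (hb _) (hb _),
      integral_withDensity_eq_integral_toReal_smul hpm (ae_of_all _ fun _ => ENNReal.ofReal_lt_top),
      integral_withDensity_eq_integral_toReal_smul hmm (ae_of_all _ fun _ => ENNReal.ofReal_lt_top)]
    have i1 := (integrable_withDensity_iff_integrable_smul' hpm
      (ae_of_all _ fun _ => ENNReal.ofReal_lt_top)).1 (hb (volume.withDensity p))
    have i2 := (integrable_withDensity_iff_integrable_smul' hmm
      (ae_of_all _ fun _ => ENNReal.ofReal_lt_top)).1 (hb (volume.withDensity m))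
    have hl := stq_laplace C Y hC hY hK 0 le_rfl u
    have hh := h u
    rw [← hl] at hh
    have e1 : ∫ x : ℝ, Complex.exp (u * x * Complex.I) ∂ν =
      ∫ x : ℝ, Complex.exp (Complex.I * u * x) ∂ν := by
        congr 1; ext x; congr 1; ring
    rw [e1, hh, ← eq_sub_iff_add_eq, ← integral_sub i1 i2]
    congr 1; ext x
    simp only [hp, hm]
    have : (stq K Y x) = (ENNReal.ofReal (stq K Y x)).toReal - (ENNReal.ofReal (-stq K Y x)).toReal := by
      rw [ENNReal.toReal_ofReal', ENNReal.toReal_ofReal']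
      rcases le_total 0 (stq K Y x) with h | h
      · rw [max_eq_left h, max_eq_right (by linarith)]; ring
      · rw [max_eq_right h, max_eq_left (by linarith)]; ring
    rw [← sub_smul, ← this, Complex.real_smul]
    congr 2
    push_cast; ring
  have hms : MeasurableSet {x | stq K Y x ≤ 0} := measurableSet_le hc.measurable measurable_const
  have z1 : volume.withDensity p {x | stq K Y x ≤ 0} = 0 := by
    rw [withDensity_apply _ hms]
    rw [setLIntegral_congr_fun hms (g := fun _ => 0)]
    · simp
    · intro x hx
      exact ENNReal.ofReal_of_nonpos hx
  have z2 : volume.withDensity m {x | stq K Y x ≤ 0} = 0 := by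
    have : (volume.withDensity m) {x | stq K Y x ≤ 0} ≤ (ν + volume.withDensity m) {x | stq K Y x ≤ 0} := by
      rw [Measure.add_apply]; exact le_add_self
    rw [key, z1] at this
    exact le_antisymm this zero_le
  have z3 : volume.withDensity m {x | stq K Y x ≤ 0}ᶜ = 0 := by
    rw [withDensity_apply _ hms.compl]
    rw [setLIntegral_congr_fun hms.compl (g := fun _ => 0)]
    · simp
    · intro x hx
      have : 0 < stq K Y x := by simpa using hx
      exact ENNReal.ofReal_of_nonpos (by linarith)
  have z4 : volume.withDensity m = 0 := by
    rw [← Measure.measure_univ_eq_zero, ← union_compl_self {x | stq K Y x ≤ 0}]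
    exact measure_union_null z2 z3
  constructor
  · rw [← key, z4, add_zero]
  · have := withDensity_eq_zero hmm.aemeasurable z4
    filter_upwards [this] with x hx
    have : -stq K Y x ≤ 0 := ENNReal.ofReal_eq_zero.1 hx
    linarith

/-- rewriting the characteristic exponent -/
lemma st_char_eq (K Y : ℝ) (hY : Y ∈ Ioo (1:ℝ) 2) (u : ℝ) :
    Complex.exp (((K * |u| ^ Y : ℝ) : ℂ) *
        (((Real.cos (Real.pi * Y / 2) : ℝ) : ℂ)
          - Complex.I * ((Real.sign u : ℝ) : ℂ) * ((Real.sin (Real.pi * Y / 2) : ℝ) : ℂ)))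
      = stPsi K Y ((0:ℝ) - u * Complex.I) := by
  unfold stPsi
  have hY0 : Y ≠ 0 := by linarith [hY.1]
  rcases lt_trichotomy u 0 with hu | hu | hu
  · have e : (((0:ℝ):ℂ) - u * Complex.I) = ((-u : ℝ) : ℂ) * Complex.I := by push_cast; ring
    have hu' : 0 < -u := by linarith
    rw [e, Complex.cpow_def_of_ne_zero (by simp [hu.ne]), Complex.log_ofReal_mul hu' Complex.I_ne_zero,
        Complex.log_I, abs_of_neg hu, Real.sign_of_neg hu, add_mul, Complex.exp_add,
        ← Complex.ofReal_mul, ← Complex.ofReal_exp, ← Real.rpow_def_of_pos hu',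
        show (Real.pi / 2 * Complex.I * Y : ℂ) = ((Real.pi * Y / 2 : ℝ) : ℂ) * Complex.I by push_cast; ring,
        Complex.exp_mul_I, ← Complex.ofReal_cos, ← Complex.ofReal_sin]
    push_cast
    congr 1; ring
  · subst hu; simp [hY0]
  · have e : (((0:ℝ):ℂ) - u * Complex.I) = (u : ℂ) * (-Complex.I) := by push_cast; ring
    rw [e, Complex.cpow_def_of_ne_zero (by simp [hu.ne']), Complex.log_ofReal_mul hu (by simp),
        Complex.log_neg_I, abs_of_pos hu, Real.sign_of_pos hu, add_mul, Complex.exp_add,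
        ← Complex.ofReal_mul, ← Complex.ofReal_exp, ← Real.rpow_def_of_pos hu,
        show (-(Real.pi / 2) * Complex.I * Y : ℂ) = ((-(Real.pi * Y / 2) : ℝ) : ℂ) * Complex.I by push_cast; ring,
        Complex.exp_mul_I, ← Complex.ofReal_cos, ← Complex.ofReal_sin, Real.cos_neg, Real.sin_neg]
    push_cast
    congr 1; ring


/-- The facts about the one-sided stable variables that are used later. -/
structure StX {Ω : Type} [MeasurableSpace Ω] (P : Measure Ω) (C Y : ℝ) (X : Ω → ℝ) : Prop where
  meas : Measurable X
  lap : ∀ l : ℝ, 0 ≤ l → Integrable (fun ω => Real.exp (-(l * X ω))) P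
  lapeq : ∀ l : ℝ, 0 ≤ l → ∀ u : ℝ, ∫ ω, Complex.exp (-((l - u * Complex.I) * X ω)) ∂P
    = stPsi (C * Real.Gamma (-Y)) Y (l - u * Complex.I)
  tail : ∃ B > 0, ∀ w > 0, |(P {ω | w ≤ X ω}).toReal - C / Y * w ^ (-Y)| ≤ B * w ^ (-(2 * Y))
  int : Integrable X P
  mean : ∫ ω, X ω ∂P = 0

lemma st_exp_slope (l x : ℝ) (hl : 0 < l) (hl1 : l ≤ 1) :
    |(1 - Real.exp (-(l * x))) / l| ≤ |x| + Real.exp (-(1 * x)) := by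
  have h0 := Real.exp_pos (-(1 * x))
  rw [abs_div, abs_of_pos hl, div_le_iff₀ hl]
  rcases le_total 0 x with hx | hx
  · have h1 : Real.exp (-(l * x)) ≤ 1 := by rw [Real.exp_le_one_iff]; nlinarith
    have h2 := Real.add_one_le_exp (-(l * x))
    rw [abs_of_nonneg (by linarith), abs_of_nonneg hx]
    nlinarith
  · have h1 : 1 ≤ Real.exp (-(l * x)) := by rw [Real.one_le_exp_iff]; nlinarith
    rw [abs_of_nonpos (by linarith), abs_of_nonpos hx]
    have h2 := convexOn_exp.2 (mem_univ 0) (mem_univ (-(1 * x))) (by linarith : 0 ≤ 1 - l) hl.le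
      (by ring)
    simp only [smul_eq_mul, mul_zero, zero_add, Real.exp_zero, mul_one] at h2
    rw [show l * -(1 * x) = -(l * x) by ring] at h2
    nlinarith

lemma st_transfer_aux {Ω : Type} [MeasurableSpace Ω] (P : Measure Ω)
    (X : Ω → ℝ) (hX : Measurable X) (q : ℝ → ℝ) (hq : Measurable q)
    (hlaw : P.map X = volume.withDensity (fun x => ENNReal.ofReal (q x)))
    (hpos : ∀ᵐ x : ℝ, 0 ≤ q x) {E : Type} [NormedAddCommGroup E] [NormedSpace ℝ E]
    (g : ℝ → E) (hg : Continuous g) :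
    (Integrable (fun ω => g (X ω)) P ↔ Integrable (fun x => q x • g x)) ∧
    ∫ ω, g (X ω) ∂P = ∫ x, q x • g x := by
  have hm : Measurable (fun x => ENNReal.ofReal (q x)) := by fun_prop
  have hae : (fun x => (ENNReal.ofReal (q x)).toReal • g x) =ᵐ[volume] fun x => q x • g x := by
    filter_upwards [hpos] with x hx
    rw [ENNReal.toReal_ofReal hx]
  constructor
  · have h1 : Integrable g (P.map X) ↔ Integrable (g ∘ X) P :=
      integrable_map_measure hg.aestronglyMeasurable hX.aemeasurable
    rw [hlaw, integrable_withDensity_iff_integrable_smul' hm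
      (ae_of_all _ fun _ => ENNReal.ofReal_lt_top), integrable_congr hae] at h1
    exact h1.symm
  · rw [← integral_map hX.aemeasurable (hg.aestronglyMeasurable), hlaw,
      integral_withDensity_eq_integral_toReal_smul hm (ae_of_all _ fun _ => ENNReal.ofReal_lt_top)]
    exact integral_congr_ae hae

lemma st_facts {Ω : Type} [MeasurableSpace Ω] (P : Measure Ω) [IsProbabilityMeasure P]
    (C Y : ℝ) (hC : 0 < C) (hY : Y ∈ Ioo (1:ℝ) 2) (hK : 0 < C * Real.Gamma (-Y))
    (X : Ω → ℝ) (hX : Measurable X)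
    (hchar : ∀ u : ℝ, (∫ ω, Complex.exp (Complex.I * u * (X ω)) ∂P) =
      Complex.exp (((C * Real.Gamma (-Y) * |u| ^ Y : ℝ) : ℂ) *
        (((Real.cos (Real.pi * Y / 2) : ℝ) : ℂ)
          - Complex.I * ((Real.sign u : ℝ) : ℂ) * ((Real.sin (Real.pi * Y / 2) : ℝ) : ℂ)))) :
    StX P C Y X := by
  have hY0 : 0 < Y := by linarith [hY.1]
  set K := C * Real.Gamma (-Y) with hKd
  have : IsProbabilityMeasure (P.map X) := Measure.isProbabilityMeasure_map hX.aemeasurable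
  obtain ⟨hlaw, hpos⟩ := st_law C Y hC hY hK (P.map X) (by
    intro u
    rw [← st_char_eq K Y hY u, ← hchar u]
    rw [integral_map hX.aemeasurable (by fun_prop)])
  have hqc := stq_cont K Y hK hY
  have hlapi : ∀ l : ℝ, 0 ≤ l → Integrable (fun ω => Real.exp (-(l * X ω))) P := by
    intro l hl
    refine (st_transfer_aux P X hX (stq K Y) hqc.measurable hlaw hpos
      (fun x => Real.exp (-(l * x))) (by fun_prop)).1.2 ?_
    refine (stq_exp_int C Y hC hY hK l hl).congr (ae_of_all _ fun x => ?_)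
    simp [mul_comm, hKd]
  have hlapeq : ∀ l : ℝ, 0 ≤ l → ∀ u : ℝ, ∫ ω, Complex.exp (-((l - u * Complex.I) * X ω)) ∂P
    = stPsi K Y (l - u * Complex.I) := by
    intro l hl u
    rw [(st_transfer_aux P X hX (stq K Y) hqc.measurable hlaw hpos
      (fun x => Complex.exp (-((l - u * Complex.I) * x))) (by fun_prop)).2,
      ← stq_laplace C Y hC hY hK l hl u]
    simp [hKd]
  have hintg : Integrable X P := by
    refine (st_transfer_aux P X hX (stq K Y) hqc.measurable hlaw hpos
      (fun x => x) (by fun_prop)).1.2 ?_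
    refine (stq_id_int C Y hC hY hK).congr (ae_of_all _ fun x => ?_)
    simp [mul_comm, hKd]
  refine ⟨hX, hlapi, hlapeq, ?_, hintg, ?_⟩
  · obtain ⟨B, hB, h⟩ := stq_right C Y hC hY hK
    refine ⟨B / (2 * Y), by positivity, fun w hw => ?_⟩
    have hqi : Integrable (stq K Y) := by
      have := stq_exp_int C Y hC hY hK 0 le_rfl
      simpa using this
    have e1 : (P {ω | w ≤ X ω}).toReal = ∫ x in Ioi w, stq K Y x := by
      have : P {ω | w ≤ X ω} = P.map X (Ici w) := by
        rw [Measure.map_apply hX measurableSet_Ici]; rfl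
      rw [this, hlaw, withDensity_apply _ measurableSet_Ici, ← integral_Ici_eq_integral_Ioi,
        integral_eq_lintegral_of_nonneg_ae (ae_restrict_of_ae hpos)
        (hqi.1.restrict)]
    have i1 := (integrableOn_Ioi_rpow_of_lt (a := -Y - 1) (c := w) (by linarith [hY.1]) hw)
    have i2 := (integrableOn_Ioi_rpow_of_lt (a := -2 * Y - 1) (c := w) (by linarith [hY.1]) hw)
    have v1 := integral_Ioi_rpow_of_lt (a := -Y - 1) (c := w) (by linarith [hY.1]) hw
    have v2 := integral_Ioi_rpow_of_lt (a := -2 * Y - 1) (c := w) (by linarith [hY.1]) hw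
    have e2 : C / Y * w ^ (-Y) = ∫ x in Ioi w, C * x ^ (-Y - 1) := by
      rw [integral_const_mul, v1]
      rw [show -Y - 1 + 1 = -Y by ring]
      field_simp
    have e3 : B / (2 * Y) * w ^ (-(2 * Y)) = ∫ x in Ioi w, B * x ^ (-2 * Y - 1) := by
      rw [integral_const_mul, v2]
      rw [show -2 * Y - 1 + 1 = -(2 * Y) by ring]
      field_simp
    rw [e1, e2, e3, ← integral_sub hqi.integrableOn (i1.const_mul C), ← Real.norm_eq_abs]
    apply norm_integral_le_of_norm_le (i2.const_mul B)
    refine (ae_restrict_iff' measurableSet_Ioi).2 (ae_of_all _ fun x hx => ?_)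
    exact h x (hw.trans hx)
  · -- the mean
    have t1 : Tendsto (fun l : ℝ => ∫ ω, (1 - Real.exp (-(l * X ω))) / l ∂P) (𝓝[>] 0)
        (𝓝 (∫ ω, X ω ∂P)) := by
      apply tendsto_integral_filter_of_dominated_convergence
        (fun ω => |X ω| + Real.exp (-(1 * X ω)))
      · exact Eventually.of_forall fun l => by fun_prop
      · filter_upwards [Ioc_mem_nhdsGT (zero_lt_one' ℝ)] with l hl
        exact ae_of_all _ fun ω => st_exp_slope l (X ω) hl.1 hl.2
      · exact hintg.abs.add (hlapi 1 zero_le_one)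
      · refine ae_of_all _ fun ω => ?_
        have hd : HasDerivAt (fun l : ℝ => 1 - Real.exp (-(l * X ω))) (X ω) 0 := by
          have h1 : HasDerivAt (fun l : ℝ => -(l * X ω)) (-(1 * X ω)) 0 :=
            ((hasDerivAt_id (0:ℝ)).mul_const (X ω)).neg
          have := (h1.exp).const_sub 1
          simpa using this
        have := hd.tendsto_slope_zero_right
        refine this.congr fun l => ?_
        simp [div_eq_inv_mul]
    have e : ∀ l ∈ Ioi (0:ℝ), ∫ ω, (1 - Real.exp (-(l * X ω))) / l ∂P
        = (1 - Real.exp (K * l ^ Y)) / l := by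
      intro l hl
      have hl : 0 < l := hl
      rw [integral_div, integral_sub (integrable_const _) (hlapi l hl.le)]
      have h1 := hlapeq l hl.le 0
      have h2 : ∫ ω, Complex.exp (-((l - (0:ℝ) * Complex.I) * X ω)) ∂P =
          ((∫ ω, Real.exp (-(l * X ω)) ∂P : ℝ) : ℂ) := by
        rw [← integral_complex_ofReal]
        congr 1; ext ω; push_cast; simp
      rw [h2, stPsi] at h1
      have h3 : Complex.exp (K * ((l:ℂ) - (0:ℝ) * Complex.I) ^ (Y:ℂ)) = ((Real.exp (K * l ^ Y) : ℝ) : ℂ) := by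
        have : ((l ^ Y : ℝ) : ℂ) = (l:ℂ) ^ (Y:ℂ) := Complex.ofReal_cpow hl.le Y
        rw [Complex.ofReal_exp, Complex.ofReal_mul K, this]
        simp
      rw [h3] at h1
      rw [Complex.ofReal_inj.1 h1]
      simp
    have t2 : Tendsto (fun l : ℝ => (1 - Real.exp (K * l ^ Y)) / l) (𝓝[>] 0) (𝓝 0) := by
      have hd : HasDerivAt (fun l : ℝ => 1 - Real.exp (K * l ^ Y)) 0 0 := by
        have h1 : HasDerivAt (fun l : ℝ => K * l ^ Y) (K * (Y * 0 ^ (Y - 1))) 0 :=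
          (Real.hasDerivAt_rpow_const (Or.inr hY.1.le)).const_mul K
        have := (h1.exp).const_sub 1
        rw [Real.zero_rpow (sub_pos.2 hY.1).ne'] at this
        simpa using this
      have := hd.tendsto_slope_zero_right
      refine this.congr fun l => ?_
      simp [div_eq_inv_mul, Real.zero_rpow hY0.ne']
    have t3 := t1.congr' (by
      filter_upwards [self_mem_nhdsWithin] with l hl using e l hl)
    exact tendsto_nhds_unique t3 t2

lemma StX.lapreal {Ω : Type} [MeasurableSpace Ω] {P : Measure Ω} {C Y : ℝ} {X : Ω → ℝ}
    (h : StX P C Y X) (l : ℝ) (hl : 0 ≤ l) :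
    ∫ ω, Real.exp (-(l * X ω)) ∂P = Real.exp (C * Real.Gamma (-Y) * l ^ Y) := by
  have h1 := h.lapeq l hl 0
  have h2 : ∫ ω, Complex.exp (-((l - (0:ℝ) * Complex.I) * X ω)) ∂P =
      ((∫ ω, Real.exp (-(l * X ω)) ∂P : ℝ) : ℂ) := by
    rw [← integral_complex_ofReal]
    congr 1; ext ω; push_cast; simp
  rw [h2, stPsi] at h1
  have h3 : Complex.exp ((C * Real.Gamma (-Y) : ℝ) * ((l:ℂ) - (0:ℝ) * Complex.I) ^ (Y:ℂ))
      = ((Real.exp (C * Real.Gamma (-Y) * l ^ Y) : ℝ) : ℂ) := by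
    have : ((l ^ Y : ℝ) : ℂ) = (l:ℂ) ^ (Y:ℂ) := Complex.ofReal_cpow hl Y
    rw [Complex.ofReal_exp, Complex.ofReal_mul (C * Real.Gamma (-Y)), this]
    simp
  rw [h3] at h1
  exact Complex.ofReal_inj.1 h1


lemma st_cpow_mul (s : ℝ) (hs : 0 < s) (z : ℂ) (hz : z ≠ 0) (Y : ℝ) :
    ((s:ℂ) * z) ^ (Y:ℂ) = ((s ^ Y : ℝ) : ℂ) * z ^ (Y:ℂ) := by
  rw [Complex.cpow_def_of_ne_zero (mul_ne_zero (by exact_mod_cast hs.ne') hz),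
    Complex.log_ofReal_mul hs hz, Complex.cpow_def_of_ne_zero hz, Real.rpow_def_of_pos hs,
    add_mul, Complex.exp_add]
  push_cast; rfl

section
variable {Ω : Type} [MeasurableSpace Ω] {P : Measure Ω} [IsProbabilityMeasure P] {C Y : ℝ}
  {U V : Ω → ℝ}

lemma st_exp2_int (hU : StX P C Y U) (hV : StX P C Y V) (hI : IndepFun U V P) (a b : ℝ)
    (ha : 0 ≤ a) (hb : 0 ≤ b) : Integrable (fun ω => Real.exp (-(a * U ω + b * V ω))) P := by
  have h := IndepFun.integrable_mul (hI.comp (φ := fun x => Real.exp (-(a * x)))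
    (ψ := fun x => Real.exp (-(b * x))) (by fun_prop) (by fun_prop)) (hU.lap a ha) (hV.lap b hb)
  refine h.congr (ae_of_all _ fun ω => ?_)
  simp only [Pi.mul_apply, Function.comp]
  rw [← Real.exp_add]; congr 1; ring

lemma st_exp2_eq (hU : StX P C Y U) (hV : StX P C Y V) (hI : IndepFun U V P) (a b : ℝ)
    (ha : 0 ≤ a) (hb : 0 ≤ b) : ∫ ω, Real.exp (-(a * U ω + b * V ω)) ∂P =
      Real.exp (C * Real.Gamma (-Y) * (a ^ Y + b ^ Y)) := by
  have h := hI.integral_fun_comp_mul_comp (f := fun x => Real.exp (-(a * x)))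
    (g := fun x => Real.exp (-(b * x))) hU.meas.aemeasurable hV.meas.aemeasurable
    (by fun_prop) (by fun_prop)
  rw [hU.lapreal a ha, hV.lapreal b hb, ← Real.exp_add, ← mul_add] at h
  rw [← h]
  congr 1; ext ω
  rw [← Real.exp_add]; congr 1; ring

lemma st_pow_inv (t : ℝ) (ht : 0 < t) (hY : Y ∈ Ioo (1:ℝ) 2) : (t ^ (1 / Y)) ^ Y = t := by
  rw [← Real.rpow_mul ht.le, one_div_mul_cancel (by linarith [hY.1] : Y ≠ 0), Real.rpow_one]

lemma st_mu_eq (hY : Y ∈ Ioo (1:ℝ) 2) (hU : StX P C Y U) (hV : StX P C Y V) (hI : IndepFun U V P)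
    (G M c t : ℝ) (hG : 0 < G) (hM : 1 < M) (ht : 0 < t)
    (μ : Measure ℝ) [IsProbabilityMeasure μ]
    (hμ : ∀ u : ℝ, (∫ x, Complex.exp (Complex.I * u * x) ∂μ) =
        Complex.exp ((t : ℂ) * (Complex.I * (c : ℂ) * (u : ℂ) +
          ((C * Real.Gamma (-Y) : ℝ) : ℂ) *
          (((M : ℂ) - Complex.I * (u : ℂ)) ^ (Y : ℂ) + ((G : ℂ) + Complex.I * (u : ℂ)) ^ (Y : ℂ)
            - (M : ℂ) ^ (Y : ℂ) - (G : ℂ) ^ (Y : ℂ)))))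
    (g : ℝ → ℝ) (hg : Continuous g) :
    ∫ x, g x ∂μ = ∫ ω, Real.exp (-(t ^ (1/Y) * M * U ω + t ^ (1/Y) * G * V ω)) *
      Real.exp (-(C * Real.Gamma (-Y) * (M ^ Y + G ^ Y) * t)) *
      g (t ^ (1/Y) * (U ω - V ω) + c * t) ∂P := by
  set s := t ^ (1/Y) with hs
  have hs0 : 0 < s := Real.rpow_pos_of_pos ht _
  have hsY : s ^ Y = t := st_pow_inv t ht hY
  set K := C * Real.Gamma (-Y) with hK
  set D : Ω → ℝ := fun ω => Real.exp (-(s * M * U ω + s * G * V ω)) *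
      Real.exp (-(K * (M ^ Y + G ^ Y) * t)) with hD
  have hUm := hU.meas
  have hVm := hV.meas
  have hDm : Measurable (fun ω => ENNReal.ofReal (D ω)) := by fun_prop
  have hDi : Integrable D P := (st_exp2_int hU hV hI (s * M) (s * G) (by positivity) (by positivity)).mul_const _
  have hD0 : ∀ ω, 0 ≤ D ω := fun ω => by positivity
  set Q := P.withDensity (fun ω => ENNReal.ofReal (D ω)) with hQ
  have : IsFiniteMeasure Q := isFiniteMeasure_withDensity_ofReal hDi.2
  set S : Ω → ℝ := fun ω => s * (U ω - V ω) + c * t with hS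
  have hSm : Measurable S := by fun_prop
  have key : μ = Q.map S := by
    apply Measure.ext_of_charFun
    ext u
    rw [charFun_apply_real, charFun_apply_real, integral_map hSm.aemeasurable (by fun_prop), hQ,
      integral_withDensity_eq_integral_toReal_smul hDm (ae_of_all _ fun _ => ENNReal.ofReal_lt_top)]
    have e1 : ∫ x : ℝ, Complex.exp (u * x * Complex.I) ∂μ =
      ∫ x : ℝ, Complex.exp (Complex.I * u * x) ∂μ := by
        congr 1; ext x; congr 1; ring
    rw [e1, hμ u]
    have h := hI.integral_fun_comp_mul_comp
      (f := fun x : ℝ => Complex.exp (-(((s * M : ℝ) - (s * u : ℝ) * Complex.I) * x)))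
      (g := fun x : ℝ => Complex.exp (-(((s * G : ℝ) - (-(s * u) : ℝ) * Complex.I) * x)))
      hUm.aemeasurable hVm.aemeasurable
      (by fun_prop) (by fun_prop)
    rw [hU.lapeq (s * M) (by positivity), hV.lapeq (s * G) (by positivity)] at h
    have e2 : ∀ ω, (ENNReal.ofReal (D ω)).toReal • Complex.exp (u * (S ω : ℝ) * Complex.I)
      = Complex.exp (Complex.I * u * c * t - (K * (M ^ Y + G ^ Y) * t : ℝ)) *
       (Complex.exp (-(((s * M : ℝ) - (s * u : ℝ) * Complex.I) * U ω)) *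
        Complex.exp (-(((s * G : ℝ) - (-(s * u) : ℝ) * Complex.I) * V ω))) := by
      intro ω
      rw [ENNReal.toReal_ofReal (hD0 ω), Complex.real_smul, hD, hS, Complex.ofReal_mul,
        Complex.ofReal_exp, Complex.ofReal_exp, ← Complex.exp_add, ← Complex.exp_add,
        ← Complex.exp_add, ← Complex.exp_add]
      congr 1
      push_cast
      ring
    simp_rw [e2]
    rw [integral_const_mul, h, stPsi, stPsi, ← Complex.exp_add, ← Complex.exp_add]
    have z1 : (M:ℂ) - Complex.I * u ≠ 0 := by
      intro h; have := congrArg Complex.re h; simp at this; linarith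
    have z2 : (G:ℂ) + Complex.I * u ≠ 0 := by
      intro h; have := congrArg Complex.re h; simp at this; linarith
    rw [show (((s * M : ℝ):ℂ) - (s * u : ℝ) * Complex.I) = s * ((M:ℂ) - Complex.I * u) by push_cast; ring,
      show (((s * G : ℝ):ℂ) - (-(s * u) : ℝ) * Complex.I) = s * ((G:ℂ) + Complex.I * u) by push_cast; ring,
      st_cpow_mul s hs0 _ z1, st_cpow_mul s hs0 _ z2, hsY]
    congr 1
    have m1 : ((M ^ Y : ℝ) : ℂ) = (M:ℂ) ^ (Y:ℂ) := Complex.ofReal_cpow (by linarith) Y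
    have m2 : ((G ^ Y : ℝ) : ℂ) = (G:ℂ) ^ (Y:ℂ) := Complex.ofReal_cpow (by linarith) Y
    rw [← m1, ← m2, hK]
    push_cast
    ring
  rw [key, integral_map hSm.aemeasurable hg.aestronglyMeasurable, hQ,
      integral_withDensity_eq_integral_toReal_smul hDm (ae_of_all _ fun _ => ENNReal.ofReal_lt_top)]
  congr 1; ext ω
  rw [ENNReal.toReal_ofReal (hD0 ω), smul_eq_mul]

lemma st_price (hY : Y ∈ Ioo (1:ℝ) 2) (hU : StX P C Y U) (hV : StX P C Y V) (hI : IndepFun U V P)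
    (G M c t : ℝ) (hG : 0 < G) (hM : 1 < M) (ht : 0 < t)
    (hc : c = -C * Real.Gamma (-Y) * ((M-1) ^ Y + (G+1) ^ Y - M ^ Y - G ^ Y))
    (μ : Measure ℝ) [IsProbabilityMeasure μ]
    (hμ : ∀ u : ℝ, (∫ x, Complex.exp (Complex.I * u * x) ∂μ) =
        Complex.exp ((t : ℂ) * (Complex.I * (c : ℂ) * (u : ℂ) +
          ((C * Real.Gamma (-Y) : ℝ) : ℂ) *
          (((M : ℂ) - Complex.I * (u : ℂ)) ^ (Y : ℂ) + ((G : ℂ) + Complex.I * (u : ℂ)) ^ (Y : ℂ)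
            - (M : ℂ) ^ (Y : ℂ) - (G : ℂ) ^ (Y : ℂ)))))
    (k θ : ℝ) (hθ : t ^ (1/Y) * θ = c * t - k) :
    ∫ x, max (Real.exp x - Real.exp k) 0 ∂μ =
      1 - Real.exp (-(C * Real.Gamma (-Y) * ((M-1) ^ Y + (G+1) ^ Y) * t)) *
        ∫ ω, Real.exp (-(t ^ (1/Y) * ((M - 1) * U ω + (G + 1) * V ω + max (U ω - V ω + θ) 0))) ∂P := by
  rw [st_mu_eq hY hU hV hI G M c t hG hM ht μ hμ (fun x => max (Real.exp x - Real.exp k) 0) (by fun_prop)]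
  set s := t ^ (1/Y) with hs
  have hs0 : 0 < s := Real.rpow_pos_of_pos ht _
  have hsY : s ^ Y = t := st_pow_inv t ht hY
  set K := C * Real.Gamma (-Y) with hK
  set N := Real.exp (-(K * ((M-1) ^ Y + (G+1) ^ Y) * t)) with hN
  have hUm := hU.meas
  have hVm := hV.meas
  have i1 := st_exp2_int hU hV hI (s * (M - 1)) (s * (G + 1)) (mul_nonneg hs0.le (by linarith)) (by positivity)
  have v1 := st_exp2_eq hU hV hI (s * (M - 1)) (s * (G + 1)) (mul_nonneg hs0.le (by linarith)) (by positivity)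
  have i2 : Integrable (fun ω => Real.exp (-(s * ((M - 1) * U ω + (G + 1) * V ω + max (U ω - V ω + θ) 0)))) P := by
    refine i1.mono' (by fun_prop) (ae_of_all _ fun ω => ?_)
    rw [Real.norm_of_nonneg (Real.exp_pos _).le]
    apply Real.exp_le_exp.2
    have : 0 ≤ s * max (U ω - V ω + θ) 0 := mul_nonneg hs0.le (le_max_right _ _)
    nlinarith
  have e1 : ∀ ω, Real.exp (-(s * M * U ω + s * G * V ω)) * Real.exp (-(K * (M ^ Y + G ^ Y) * t)) *
      max (Real.exp (s * (U ω - V ω) + c * t) - Real.exp k) 0 =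
      N * Real.exp (-(s * (M - 1) * U ω + s * (G + 1) * V ω)) -
      N * Real.exp (-(s * ((M - 1) * U ω + (G + 1) * V ω + max (U ω - V ω + θ) 0))) := by
    intro ω
    set Z := U ω - V ω with hZ
    rw [hN, ← Real.exp_add, ← Real.exp_add, ← Real.exp_add]
    rcases le_total 0 (Z + θ) with h | h
    · have h1 : k ≤ s * Z + c * t := by nlinarith
      rw [max_eq_left h, max_eq_left (sub_nonneg.2 (Real.exp_le_exp.2 h1)), mul_sub, ← Real.exp_add,
        ← Real.exp_add]
      congr 2
      · rw [hc, hZ, hK]; ring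
      · have : s * (Z + θ) = s * Z + (c * t - k) := by rw [mul_add, hθ]
        rw [mul_add s _ (Z + θ), this, hc, hZ, hK]; ring
    · have h1 : s * Z + c * t ≤ k := by nlinarith
      rw [max_eq_right h, max_eq_right (sub_nonpos.2 (Real.exp_le_exp.2 h1))]
      rw [mul_zero, eq_comm, sub_eq_zero]
      congr 1; ring
  simp_rw [e1]
  rw [integral_sub (i1.const_mul N) (i2.const_mul N), integral_const_mul, integral_const_mul, v1]
  congr 1
  rw [hN, ← Real.exp_add, Real.mul_rpow hs0.le (by linarith), Real.mul_rpow hs0.le (by linarith), hsY,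
    Real.exp_eq_one_iff]
  ring
end


lemma st_cos_lap (y : ℝ) (hy : 0 < y) :
    IntegrableOn (fun u : ℝ => (1 - Real.cos u) * (y * Real.exp (-(u * y)))) (Ioi 0) ∧
    ∫ u in Ioi (0:ℝ), (1 - Real.cos u) * (y * Real.exp (-(u * y))) = (1 + y ^ 2)⁻¹ := by
  have hre : (-(y:ℂ) + Complex.I).re < 0 := by simpa using hy
  have hre2 : (-(y:ℂ)).re < 0 := by simpa using hy
  have i1 := integrableOn_exp_mul_complex_Ioi hre 0
  have i2 := integrableOn_exp_mul_complex_Ioi hre2 0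
  have v1 := integral_exp_mul_complex_Ioi hre 0
  have v2 := integral_exp_mul_complex_Ioi hre2 0
  have i3 := (i2.sub i1).const_mul (y:ℂ)
  have i4 := i3.re
  have e : ∀ u : ℝ, RCLike.re ((y:ℂ) * (((fun x : ℝ => Complex.exp (-(y:ℂ) * x)) -
      fun x : ℝ => Complex.exp ((-(y:ℂ) + Complex.I) * x)) u)) =
      (1 - Real.cos u) * (y * Real.exp (-(u * y))) := by
    intro u
    have a1 : Complex.exp (-(y:ℂ) * u) = (Real.exp (-(u * y)) : ℝ) := by push_cast; congr 1; ring
    have a2 : Complex.exp ((-(y:ℂ) + Complex.I) * u) = (Real.exp (-(u * y)) : ℝ) * Complex.exp (u * Complex.I) := by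
      push_cast; rw [← Complex.exp_add]; congr 1; ring
    simp only [Pi.sub_apply]
    rw [a1, a2]
    change (_ : ℂ).re = _
    rw [Complex.re_ofReal_mul, Complex.sub_re, Complex.re_ofReal_mul, Complex.exp_ofReal_mul_I_re,
      Complex.ofReal_re]
    ring
  have i5 : IntegrableOn (fun u : ℝ => (1 - Real.cos u) * (y * Real.exp (-(u * y)))) (Ioi 0) :=
    i4.congr (ae_of_all _ fun u => e u)
  refine ⟨i5, ?_⟩
  have h := integral_re i3
  rw [integral_congr_ae (ae_of_all _ fun u => e u), integral_const_mul, integral_sub' i2 i1, v1, v2] at h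
  rw [h]
  have hz : -(y:ℂ) + Complex.I ≠ 0 := by intro h0; rw [h0] at hre; simp at hre
  have hyc : (y:ℂ) ≠ 0 := by exact_mod_cast hy.ne'
  have hq : (1:ℂ) + y ^ 2 ≠ 0 := by
    have : (1:ℝ) + y ^ 2 ≠ 0 := by positivity
    exact_mod_cast this
  have : (y:ℂ) * (-Complex.exp (-(y:ℂ) * (0:ℝ)) / -(y:ℂ) - -Complex.exp ((-(y:ℂ) + Complex.I) * (0:ℝ)) / (-(y:ℂ) + Complex.I))
    = (((1 + y ^ 2)⁻¹ : ℝ) : ℂ) + ((-(y * (1 + y ^ 2)⁻¹) : ℝ) : ℂ) * Complex.I := by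
    push_cast
    simp only [mul_zero, Complex.exp_zero]
    field_simp
    ring_nf
    simp only [Complex.I_sq]
    ring
  rw [this, RCLike.re_eq_complex_re]
  rw [Complex.add_re, Complex.re_ofReal_mul, Complex.ofReal_re, Complex.I_re, mul_zero, add_zero]

lemma st_c0 : IntegrableOn (fun u : ℝ => (1 - Real.cos u) / u ^ 2) (Ioi 0) ∧
    ∫ u in Ioi (0:ℝ), (1 - Real.cos u) / u ^ 2 = Real.pi / 2 := by
  set f : ℝ → ℝ → ℝ := fun u y => (1 - Real.cos u) * (y * Real.exp (-(u * y))) with hf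
  have hintg : Integrable (Function.uncurry f) ((volume.restrict (Ioi (0:ℝ))).prod (volume.restrict (Ioi (0:ℝ)))) := by
    rw [integrable_prod_iff' (by
      apply Continuous.aestronglyMeasurable
      simp only [hf, Function.uncurry_def]
      fun_prop)]
    constructor
    · refine (ae_restrict_iff' measurableSet_Ioi).2 (ae_of_all _ fun y hy => ?_)
      exact (st_cos_lap y hy).1
    · refine (integrable_inv_one_add_sq.integrableOn (s := Ioi 0)).congr ?_
      refine (ae_restrict_iff' measurableSet_Ioi).2 (ae_of_all _ fun y hy => ?_)
      simp only []
      rw [← (st_cos_lap y hy).2]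
      congr 1; ext u
      have hy : (0:ℝ) < y := hy
      rw [Function.uncurry_apply_pair, Real.norm_of_nonneg]
      have := Real.cos_le_one u
      exact mul_nonneg (by linarith) (by positivity)
  have hin : ∀ u ∈ Ioi (0:ℝ), ∫ y in Ioi (0:ℝ), f u y = (1 - Real.cos u) / u ^ 2 := by
    intro u hu
    have hu : 0 < u := hu
    simp only [hf]
    rw [integral_const_mul]
    have := Real.integral_rpow_mul_exp_neg_mul_Ioi (a := 2) (by norm_num) hu
    norm_num at this
    rw [this]
    field_simp
  constructor
  · refine hintg.integral_prod_left.congr ?_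
    refine (ae_restrict_iff' measurableSet_Ioi).2 (ae_of_all _ fun u hu => hin u hu)
  · rw [← setIntegral_congr_fun measurableSet_Ioi hin, integral_integral_swap hintg]
    have : ∀ y ∈ Ioi (0:ℝ), ∫ u in Ioi (0:ℝ), f u y = (1 + y ^ 2)⁻¹ := fun y hy => (st_cos_lap y hy).2
    rw [setIntegral_congr_fun measurableSet_Ioi this]
    simp

lemma st_abs_int (x : ℝ) : IntegrableOn (fun u : ℝ => (1 - Real.cos (u * x)) / u ^ 2) (Ioi 0) ∧
    ∫ u in Ioi (0:ℝ), (1 - Real.cos (u * x)) / u ^ 2 = Real.pi / 2 * |x| := by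
  rcases eq_or_ne x 0 with rfl | hx
  · simp
  have hx' : 0 < |x| := abs_pos.2 hx
  have e : ∀ u : ℝ, (1 - Real.cos (u * x)) / u ^ 2 = |x| ^ 2 * ((1 - Real.cos (|x| * u)) / (|x| * u) ^ 2) := by
    intro u
    have : Real.cos (u * x) = Real.cos (|x| * u) := by
      rcases abs_choice x with h | h <;> rw [h]
      · rw [mul_comm]
      · rw [neg_mul, Real.cos_neg, mul_comm]
    rw [this, mul_pow]
    rcases eq_or_ne u 0 with rfl | hu
    · simp
    field_simp
  simp_rw [e]
  constructor
  · apply Integrable.const_mul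
    have := (integrableOn_Ioi_comp_mul_left_iff (fun u : ℝ => (1 - Real.cos u) / u ^ 2) 0 hx').2
    rw [mul_zero] at this
    exact this st_c0.1
  · rw [integral_const_mul, integral_comp_mul_left_Ioi (fun u : ℝ => (1 - Real.cos u) / u ^ 2) 0 hx',
      mul_zero, st_c0.2, smul_eq_mul]
    field_simp

lemma st_byparts (p q b : ℝ) (hp : 0 < p) (hq : 1 < q) (hpq : q < p + 1) (hb : 0 < b) :
    IntegrableOn (fun u : ℝ => (1 - Real.exp (-b * u ^ p)) * u ^ (-q)) (Ioi 0) ∧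
    ∫ u in Ioi (0:ℝ), (1 - Real.exp (-b * u ^ p)) * u ^ (-q) =
      b ^ ((q - 1) / p) * Real.Gamma (1 - (q - 1) / p) / (q - 1) := by
  have h01 : ∀ u : ℝ, 0 < u → 0 ≤ 1 - Real.exp (-b * u ^ p) := by
    intro u hu
    have : Real.exp (-b * u ^ p) ≤ 1 := by
      rw [Real.exp_le_one_iff]; have : 0 < b * u ^ p := by positivity
      linarith
    linarith
  have h02 : ∀ u : ℝ, 1 - Real.exp (-b * u ^ p) ≤ b * u ^ p := by
    intro u
    have := Real.add_one_le_exp (-b * u ^ p)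
    linarith
  have h03 : ∀ u : ℝ, 1 - Real.exp (-b * u ^ p) ≤ 1 := by
    intro u
    have := Real.exp_pos (-b * u ^ p)
    linarith
  have hm : AEStronglyMeasurable (fun u : ℝ => (1 - Real.exp (-b * u ^ p)) * u ^ (-q)) volume := by
    apply Measurable.aestronglyMeasurable; fun_prop
  have hi : IntegrableOn (fun u : ℝ => (1 - Real.exp (-b * u ^ p)) * u ^ (-q)) (Ioi 0) := by
    rw [← Ioc_union_Ioi_eq_Ioi (zero_le_one' ℝ)]
    apply IntegrableOn.union
    · have : IntegrableOn (fun u : ℝ => b * u ^ (p - q)) (Ioc 0 1) := by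
        apply Integrable.const_mul
        have := (intervalIntegral.intervalIntegrable_rpow' (a := 0) (b := 1) (r := p - q) (by linarith)).1
        exact this
      refine Integrable.mono' this hm.restrict ?_
      refine (ae_restrict_iff' measurableSet_Ioc).2 (ae_of_all _ fun u hu => ?_)
      have hu0 : 0 < u := hu.1
      rw [Real.norm_of_nonneg (mul_nonneg (h01 u hu0) (by positivity)), Real.rpow_sub hu0]
      calc _ ≤ (b * u ^ p) * u ^ (-q) := by gcongr; exact h02 u
        _ = _ := by rw [Real.rpow_neg hu0.le]; field_simp
    · refine Integrable.mono' (integrableOn_Ioi_rpow_of_lt (a := -q) (c := 1) (by linarith) one_pos) hm.restrict ?_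
      refine (ae_restrict_iff' measurableSet_Ioi).2 (ae_of_all _ fun u hu => ?_)
      have hu0 : 0 < u := lt_trans one_pos hu
      rw [Real.norm_of_nonneg (mul_nonneg (h01 u hu0) (by positivity))]
      calc _ ≤ 1 * u ^ (-q) := by gcongr; exact h03 u
        _ = _ := by ring
  refine ⟨hi, ?_⟩
  have hg : IntegrableOn (fun u : ℝ => u ^ (p - q) * Real.exp (-b * u ^ p)) (Ioi 0) :=
    integrableOn_rpow_mul_exp_neg_mul_rpow (by linarith) hp hb
  have h := integral_Ioi_mul_deriv_eq_deriv_mul (a := 0) (a' := (0:ℝ)) (b' := (0:ℝ))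
    (u := fun u : ℝ => 1 - Real.exp (-b * u ^ p)) (u' := fun u => b * p * u ^ (p - 1) * Real.exp (-b * u ^ p))
    (v := fun u : ℝ => u ^ (1 - q) / (1 - q)) (v' := fun u => u ^ (-q)) ?_ ?_ hi ?_ ?_ ?_
  · rw [h]
    have e : ∀ u ∈ Ioi (0:ℝ), b * p * u ^ (p - 1) * Real.exp (-b * u ^ p) * (u ^ (1 - q) / (1 - q))
        = (b * p / (1 - q)) * (u ^ (p - q) * Real.exp (-b * u ^ p)) := by
      intro u hu
      rw [show p - q = (p - 1) + (1 - q) by ring, Real.rpow_add hu]; ring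
    rw [setIntegral_congr_fun measurableSet_Ioi e, integral_const_mul,
      integral_rpow_mul_exp_neg_mul_rpow hp (by linarith) hb]
    have e2 : (p - q + 1) / p = 1 - (q - 1) / p := by field_simp; ring
    have e3 : -(p - q + 1) / p = (q - 1) / p - 1 := by field_simp; ring
    rw [e2, e3, Real.rpow_sub_one hb.ne']
    have : 1 - q ≠ 0 := by linarith
    have : q - 1 ≠ 0 := by linarith
    have e4 : 1 - q = -(q - 1) := by ring
    rw [e4]
    field_simp
    ring
  · intro u hu
    have h1 : HasDerivAt (fun u : ℝ => -b * u ^ p) (-b * (p * u ^ (p - 1))) u :=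
      (Real.hasDerivAt_rpow_const (Or.inl (ne_of_gt hu))).const_mul (-b)
    convert! (h1.exp).const_sub 1 using 1
    ring
  · intro u hu
    have h1 : HasDerivAt (fun u : ℝ => u ^ (1 - q) / (1 - q)) (((1 - q) * u ^ (1 - q - 1)) / (1 - q)) u :=
      (Real.hasDerivAt_rpow_const (Or.inl (ne_of_gt hu))).div_const (1 - q)
    convert! h1 using 1
    have : 1 - q ≠ 0 := by linarith
    rw [show 1 - q - 1 = -q by ring]
    field_simp
  · refine (hg.const_mul (b * p / (1 - q))).congr ?_
    refine (ae_restrict_iff' measurableSet_Ioi).2 (ae_of_all _ fun u hu => ?_)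
    simp only [Pi.mul_apply]
    rw [show p - q = (p - 1) + (1 - q) by ring, Real.rpow_add hu]; ring
  · have t : Tendsto (fun u : ℝ => b / (q - 1) * u ^ (p + 1 - q)) (𝓝[>] 0) (𝓝 0) := by
      have : ContinuousAt (fun u : ℝ => b / (q - 1) * u ^ (p + 1 - q)) 0 := by
        apply ContinuousAt.mul continuousAt_const
        exact Real.continuousAt_rpow_const _ _ (Or.inr (by linarith))
      have t := this.tendsto
      simp only [Real.zero_rpow (by linarith : p + 1 - q ≠ 0), mul_zero] at t
      exact t.mono_left nhdsWithin_le_nhds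
    refine squeeze_zero_norm' ?_ t
    filter_upwards [self_mem_nhdsWithin] with u hu
    have hu0 : 0 < u := hu
    simp only [Pi.mul_apply]
    rw [norm_mul, norm_div, Real.norm_of_nonneg (h01 u hu0), Real.norm_of_nonneg (by positivity),
      Real.norm_of_nonpos (by linarith), neg_sub]
    have : 0 < q - 1 := by linarith
    calc _ ≤ (b * u ^ p) * (u ^ (1 - q) / (q - 1)) := by gcongr; exact h02 u
      _ = _ := by rw [show p + 1 - q = p + (1 - q) by ring, Real.rpow_add hu0]; ring
  · have t : Tendsto (fun u : ℝ => u ^ (-(q - 1)) / (q - 1)) atTop (𝓝 0) := by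
      have := (tendsto_rpow_neg_atTop (y := q - 1) (by linarith)).div_const (q - 1)
      simpa using this
    refine squeeze_zero_norm' ?_ t
    filter_upwards [Ioi_mem_atTop (0:ℝ)] with u hu
    have hu0 : 0 < u := hu
    simp only [Pi.mul_apply]
    rw [norm_mul, norm_div, Real.norm_of_nonneg (h01 u hu0), Real.norm_of_nonneg (by positivity),
      Real.norm_of_nonpos (by linarith), neg_sub, neg_sub]
    have : 0 < q - 1 := by linarith
    calc _ ≤ 1 * (u ^ (1 - q) / (q - 1)) := by gcongr; exact h03 u
      _ = _ := by ring


section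
variable {Ω : Type} [MeasurableSpace Ω] {P : Measure Ω} [IsProbabilityMeasure P] {C Y : ℝ} {U V : Ω → ℝ}

lemma st_abs_four (X : Ω → ℝ) (hX : Measurable X) (hi : Integrable X P) :
    IntegrableOn (fun u : ℝ => (1 - ∫ ω, Real.cos (u * X ω) ∂P) / u ^ 2) (Ioi 0) ∧
    ∫ u in Ioi (0:ℝ), (1 - ∫ ω, Real.cos (u * X ω) ∂P) / u ^ 2 = Real.pi / 2 * ∫ ω, |X ω| ∂P := by
  set f : ℝ → Ω → ℝ := fun u ω => (1 - Real.cos (u * X ω)) / u ^ 2 with hf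
  have hintg : Integrable (Function.uncurry f) ((volume.restrict (Ioi (0:ℝ))).prod P) := by
    rw [integrable_prod_iff' (by
      apply Measurable.aestronglyMeasurable
      simp only [hf, Function.uncurry_def]
      fun_prop)]
    constructor
    · exact ae_of_all _ fun ω => (st_abs_int (X ω)).1
    · refine (hi.abs.const_mul (Real.pi / 2)).congr (ae_of_all _ fun ω => ?_)
      simp only []
      rw [← (st_abs_int (X ω)).2]
      congr 1; ext u
      rw [Function.uncurry_apply_pair, Real.norm_of_nonneg]
      have := Real.cos_le_one (u * X ω)
      exact div_nonneg (by linarith) (by positivity)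
  have hin : ∀ u : ℝ, ∫ ω, f u ω ∂P = (1 - ∫ ω, Real.cos (u * X ω) ∂P) / u ^ 2 := by
    intro u
    simp only [hf]
    rw [integral_div, integral_sub (integrable_const _)]
    · simp
    · refine (integrable_const (1:ℝ)).mono' (by fun_prop) (ae_of_all _ fun ω => ?_)
      exact Real.abs_cos_le_one _
  constructor
  · refine hintg.integral_prod_left.congr (ae_of_all _ fun u => hin u)
  · simp_rw [← hin]
    rw [integral_integral_swap hintg, ← integral_const_mul]
    congr 1; ext ω
    exact (st_abs_int (X ω)).2

lemma st_cosZ (hY : Y ∈ Ioo (1:ℝ) 2) (hU : StX P C Y U) (hV : StX P C Y V) (hI : IndepFun U V P)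
    (θ u : ℝ) (hu : 0 < u) :
    ∫ ω, Real.cos (u * (U ω - V ω + θ)) ∂P = Real.cos (u * θ) *
      Real.exp (-(-2 * C * Real.Gamma (-Y) * Real.cos (Real.pi * Y / 2)) * u ^ Y) := by
  have h := hI.integral_fun_comp_mul_comp (f := fun x : ℝ => Complex.exp (-(((0:ℝ) - u * Complex.I) * x)))
    (g := fun x : ℝ => Complex.exp (-(((0:ℝ) - (-u : ℝ) * Complex.I) * x))) hU.meas.aemeasurable hV.meas.aemeasurable
    (by fun_prop) (by fun_prop)
  rw [hU.lapeq 0 le_rfl u, hV.lapeq 0 le_rfl (-u), ← st_char_eq _ Y hY, ← st_char_eq _ Y hY, ← Complex.exp_add,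
    abs_neg, abs_of_pos hu, Real.sign_of_pos hu, Real.sign_of_neg (by linarith)] at h
  have e : ∀ ω, Real.cos (u * (U ω - V ω + θ)) = RCLike.re (Complex.exp (u * θ * Complex.I) *
      (Complex.exp (-(((0:ℝ) - u * Complex.I) * U ω)) * Complex.exp (-(((0:ℝ) - (-u : ℝ) * Complex.I) * V ω)))) := by
    intro ω
    rw [← Complex.exp_add, ← Complex.exp_add]
    have : (u * θ * Complex.I + (-(((0:ℝ) - u * Complex.I) * U ω) + -(((0:ℝ) - (-u : ℝ) * Complex.I) * V ω)) : ℂ)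
      = ((u * (U ω - V ω + θ) : ℝ) : ℂ) * Complex.I := by push_cast; ring
    rw [this, RCLike.re_eq_complex_re, Complex.exp_ofReal_mul_I_re]
  simp_rw [e]
  rw [integral_re, integral_const_mul, h]
  · rw [← Complex.exp_add, RCLike.re_eq_complex_re]
    have : ∀ a b : ℝ, (Complex.exp (a + b * Complex.I)).re = Real.cos b * Real.exp a := by
      intro a b
      rw [Complex.exp_add, ← Complex.ofReal_exp, Complex.re_ofReal_mul, Complex.exp_ofReal_mul_I_re]; ring
    rw [← this]
    congr 2
    push_cast; ring
  · refine (integrable_const (1:ℝ)).mono' ?_ (ae_of_all _ fun ω => ?_)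
    · have := hU.meas; have := hV.meas
      apply Measurable.aestronglyMeasurable; fun_prop
    · have : (Complex.exp (u * θ * Complex.I) *
      (Complex.exp (-(((0:ℝ) - u * Complex.I) * U ω)) * Complex.exp (-(((0:ℝ) - (-u : ℝ) * Complex.I) * V ω)))) =
        Complex.exp (((u * (U ω - V ω + θ) : ℝ) : ℂ) * Complex.I) := by
        rw [← Complex.exp_add, ← Complex.exp_add]; congr 1; push_cast; ring
      rw [this, Complex.norm_exp_ofReal_mul_I]

lemma st_g_lim (A : ℝ) (hA : 0 < A) (hY : Y ∈ Ioo (1:ℝ) 2) :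
    Tendsto (fun θ : ℝ => ∫ u in Ioi (0:ℝ), 1/2 * Real.sinc (u * θ / 2) ^ 2 * Real.exp (-A * u ^ Y)) (𝓝 0)
      (𝓝 (1/2 * (A ^ (-(1/Y)) * Real.Gamma (1 + 1/Y)))) := by
  have hY0 : 0 < Y := by linarith [hY.1]
  have h0 : 1/2 * (A ^ (-(1/Y)) * Real.Gamma (1 + 1/Y)) = ∫ u in Ioi (0:ℝ), 1/2 * Real.sinc (u * 0 / 2) ^ 2 * Real.exp (-A * u ^ Y) := by
    simp only [mul_zero, zero_div, Real.sinc_zero, one_pow, mul_one]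
    rw [integral_const_mul, integral_exp_neg_mul_rpow hY0 hA, add_comm, neg_div]
  rw [h0]
  have hi : IntegrableOn (fun u : ℝ => Real.exp (-A * u ^ Y)) (Ioi 0) := by
    have := integrableOn_rpow_mul_exp_neg_mul_rpow (s := 0) (p := Y) (b := A) (by norm_num) hY0 hA
    simpa using this
  apply tendsto_integral_filter_of_dominated_convergence (fun u => Real.exp (-A * u ^ Y)) ?_ ?_ hi ?_
  · refine Eventually.of_forall fun θ => ?_
    apply Measurable.aestronglyMeasurable
    have := Real.continuous_sinc.measurable
    fun_prop
  · refine Eventually.of_forall fun θ => ae_of_all _ fun u => ?_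
    have h1 := Real.abs_sinc_le_one (u * θ / 2)
    have h2 : Real.sinc (u * θ / 2) ^ 2 ≤ 1 := by rw [sq_le_one_iff_abs_le_one]; exact h1
    have h3 := sq_nonneg (Real.sinc (u * θ / 2))
    have h4 := Real.exp_pos (-A * u ^ Y)
    rw [Real.norm_of_nonneg (by positivity)]
    nlinarith
  · refine ae_of_all _ fun u => ?_
    have : Continuous (fun θ : ℝ => 1/2 * Real.sinc (u * θ / 2) ^ 2 * Real.exp (-A * u ^ Y)) := by
      have := Real.continuous_sinc
      fun_prop
    exact this.tendsto 0

lemma st_absZ (hY : Y ∈ Ioo (1:ℝ) 2) (hK : 0 < C * Real.Gamma (-Y)) (hU : StX P C Y U) (hV : StX P C Y V) (hI : IndepFun U V P) :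
    (∫ ω, |U ω - V ω| ∂P = 2 / Real.pi * ((-2 * C * Real.Gamma (-Y) * Real.cos (Real.pi * Y / 2)) ^ (1/Y) * Real.Gamma (1 - 1/Y))) ∧
    ∀ θ : ℝ, ∫ ω, |U ω - V ω + θ| ∂P = ∫ ω, |U ω - V ω| ∂P + 2 / Real.pi * (θ ^ 2 *
      ∫ u in Ioi (0:ℝ), 1/2 * Real.sinc (u * θ / 2) ^ 2 * Real.exp (-(-2 * C * Real.Gamma (-Y) * Real.cos (Real.pi * Y / 2)) * u ^ Y)) := by
  have hcos := st_cos_neg Y hY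
  have hY0 : 0 < Y := by linarith [hY.1]
  have hmU := hU.meas
  have hmV := hV.meas
  set A := -2 * C * Real.Gamma (-Y) * Real.cos (Real.pi * Y / 2) with hAd
  have hA : 0 < A := by
    have : A = 2 * (C * Real.Gamma (-Y) * -Real.cos (Real.pi * Y / 2)) := by rw [hAd]; ring
    rw [this]
    have : 0 < -Real.cos (Real.pi * Y / 2) := by linarith
    positivity
  have key : ∀ θ : ℝ, IntegrableOn (fun u : ℝ => (1 - Real.cos (u * θ) * Real.exp (-A * u ^ Y)) / u ^ 2) (Ioi 0) ∧
    ∫ u in Ioi (0:ℝ), (1 - Real.cos (u * θ) * Real.exp (-A * u ^ Y)) / u ^ 2 = Real.pi / 2 * ∫ ω, |U ω - V ω + θ| ∂P := by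
    intro θ
    have h := st_abs_four (P := P) (fun ω => U ω - V ω + θ) (by fun_prop) ((hU.int.sub hV.int).add (integrable_const θ))
    have e : ∀ u ∈ Ioi (0:ℝ), (1 - ∫ ω, Real.cos (u * (U ω - V ω + θ)) ∂P) / u ^ 2 =
      (1 - Real.cos (u * θ) * Real.exp (-A * u ^ Y)) / u ^ 2 := by
      intro u hu
      rw [st_cosZ hY hU hV hI θ u hu]
    rw [integrableOn_congr_fun e measurableSet_Ioi, setIntegral_congr_fun measurableSet_Ioi e] at h
    exact h
  have k0 := key 0
  simp only [mul_zero, Real.cos_zero, one_mul, add_zero] at k0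
  constructor
  · have hb := (st_byparts Y 2 A hY0 (by norm_num) (by linarith [hY.1]) hA).2
    have e : ∀ u ∈ Ioi (0:ℝ), (1 - Real.exp (-A * u ^ Y)) * u ^ (-2:ℝ) = (1 - Real.exp (-A * u ^ Y)) / u ^ 2 := by
      intro u hu
      have hu : 0 < u := hu
      rw [Real.rpow_neg hu.le, Real.rpow_two]; rfl
    rw [setIntegral_congr_fun measurableSet_Ioi e, k0.2] at hb
    have hpi := Real.pi_pos
    norm_num at hb
    rw [one_div, ← hb]
    field_simp
  · intro θ
    have k1 := key θ
    have hd := integral_sub k1.1 k0.1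
    rw [k1.2, k0.2] at hd
    have e : ∀ u ∈ Ioi (0:ℝ), (1 - Real.cos (u * θ) * Real.exp (-A * u ^ Y)) / u ^ 2 - (1 - Real.exp (-A * u ^ Y)) / u ^ 2
      = θ ^ 2 * (1/2 * Real.sinc (u * θ / 2) ^ 2 * Real.exp (-A * u ^ Y)) := by
      intro u hu
      have hu : 0 < u := hu
      rcases eq_or_ne θ 0 with rfl | hθ
      · simp
      have h1 : Real.cos (u * θ) = 1 - 2 * Real.sin (u * θ / 2) ^ 2 := by
        have := Real.cos_two_mul (u * θ / 2)
        rw [show 2 * (u * θ / 2) = u * θ by ring] at this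
        rw [this]
        have := Real.sin_sq_add_cos_sq (u * θ / 2)
        linarith
      have h2 : u * θ / 2 ≠ 0 := by positivity
      rw [Real.sinc_of_ne_zero h2, h1]
      field_simp
      ring
    rw [setIntegral_congr_fun measurableSet_Ioi e, integral_const_mul] at hd
    rw [hd]
    have hpi := Real.pi_pos
    field_simp
    ring

lemma st_maxZ (hY : Y ∈ Ioo (1:ℝ) 2) (hK : 0 < C * Real.Gamma (-Y)) (hU : StX P C Y U) (hV : StX P C Y V) (hI : IndepFun U V P) :
    (∫ ω, max (U ω - V ω) 0 ∂P = 1 / Real.pi * Real.Gamma (1 - 1/Y) * (-2 * C * Real.Gamma (-Y) * Real.cos (Real.pi * Y / 2)) ^ (1/Y)) ∧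
    ∃ g : ℝ → ℝ, Tendsto g (𝓝 0) (𝓝 (1 / (2 * Real.pi) * Real.Gamma (1 + 1/Y) * (-2 * C * Real.Gamma (-Y) * Real.cos (Real.pi * Y / 2)) ^ (-(1/Y)))) ∧
    ∀ θ : ℝ, ∫ ω, max (U ω - V ω + θ) 0 ∂P - ∫ ω, max (U ω - V ω) 0 ∂P = θ / 2 + θ ^ 2 * g θ := by
  obtain ⟨h1, h2⟩ := st_absZ hY hK hU hV hI
  have hcos := st_cos_neg Y hY
  set A := -2 * C * Real.Gamma (-Y) * Real.cos (Real.pi * Y / 2) with hAd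
  have hA : 0 < A := by
    have : A = 2 * (C * Real.Gamma (-Y) * -Real.cos (Real.pi * Y / 2)) := by rw [hAd]; ring
    rw [this]
    have : 0 < -Real.cos (Real.pi * Y / 2) := by linarith
    positivity
  have hz : Integrable (fun ω => U ω - V ω) P := hU.int.sub hV.int
  have e : ∀ θ : ℝ, ∫ ω, max (U ω - V ω + θ) 0 ∂P = 1/2 * ∫ ω, |U ω - V ω + θ| ∂P + θ / 2 := by
    intro θ
    have hzt : Integrable (fun ω => U ω - V ω + θ) P := hz.add (integrable_const θ)
    have : ∀ ω, max (U ω - V ω + θ) 0 = 1/2 * (|U ω - V ω + θ| + (U ω - V ω + θ)) := by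
      intro ω
      rcases le_total 0 (U ω - V ω + θ) with h | h
      · rw [max_eq_left h, abs_of_nonneg h]; ring
      · rw [max_eq_right h, abs_of_nonpos h]; ring
    simp_rw [this]
    rw [integral_const_mul, integral_add hzt.abs hzt, integral_add hz (integrable_const θ), integral_sub hU.int hV.int, hU.mean, hV.mean]
    simp; ring
  have e0 := e 0
  simp only [add_zero, zero_div] at e0
  constructor
  · rw [e0, h1]; ring
  · have h := (st_g_lim A hA hY).const_mul (1 / Real.pi)
    refine ⟨fun θ => 1 / Real.pi * ∫ u in Ioi (0:ℝ), 1/2 * Real.sinc (u * θ / 2) ^ 2 * Real.exp (-A * u ^ Y), ?_, ?_⟩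
    · convert! h using 2
      have := Real.pi_pos
      field_simp
    · intro θ
      rw [e θ, e0, h2 θ]
      ring
end


lemma st_mvt (Y w r : ℝ) (hY : 1 < Y) (hw : 0 < w) (hr : w / 2 ≤ r) :
    |r ^ (-Y) - w ^ (-Y)| ≤ Y * (w / 2) ^ (-Y - 1) * |r - w| := by
  have h := (convex_Ici (w / 2)).norm_image_sub_le_of_norm_hasDerivWithin_le (f := fun x : ℝ => x ^ (-Y))
    (f' := fun x => -Y * x ^ (-Y - 1)) (C := Y * (w / 2) ^ (-Y - 1)) (x := w) (y := r) ?_ ?_ ?_ ?_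
  · simpa [Real.norm_eq_abs] using h
  · intro x hx
    have : 0 < x := lt_of_lt_of_le (by positivity) hx
    exact (Real.hasDerivAt_rpow_const (Or.inl this.ne')).hasDerivWithinAt
  · intro x hx
    have hx0 : 0 < x := lt_of_lt_of_le (by positivity) hx
    rw [norm_mul, norm_neg, Real.norm_of_nonneg (by linarith), Real.norm_of_nonneg (by positivity)]
    gcongr 1
    exact Real.rpow_le_rpow_of_nonpos (by positivity) hx (by linarith)
  · simp; linarith
  · exact hr

section
variable {Ω : Type} [MeasurableSpace Ω] {P : Measure Ω} [IsProbabilityMeasure P] {C Y : ℝ}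

lemma st_cond (X X' : Ω → ℝ) (hX : Measurable X) (hX' : Measurable X') (hI : IndepFun X X' P)
    (a b d w : ℝ) (ha : 0 < a) :
    Integrable (fun ω => Set.indicator (Iio d) (fun x => (P {ω | (w - b * x) / a ≤ X ω}).toReal) (X' ω)) P ∧
    (P {ω | w ≤ a * X ω + b * X' ω ∧ X' ω < d}).toReal =
      ∫ ω, Set.indicator (Iio d) (fun x => (P {ω | (w - b * x) / a ≤ X ω}).toReal) (X' ω) ∂P := by
  have hS : MeasurableSet {p : ℝ × ℝ | w ≤ a * p.2 + b * p.1 ∧ p.1 < d} := by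
    exact (measurableSet_le (f := fun _ : ℝ × ℝ => w) (g := fun p : ℝ × ℝ => a * p.2 + b * p.1) (by fun_prop) (by fun_prop)).inter
      (measurableSet_lt (f := fun p : ℝ × ℝ => p.1) (g := fun _ : ℝ × ℝ => d) (by fun_prop) (by fun_prop))
  set S := {p : ℝ × ℝ | w ≤ a * p.2 + b * p.1 ∧ p.1 < d} with hSd
  have hprod := (indepFun_iff_map_prod_eq_prod_map_map hX'.aemeasurable hX.aemeasurable).1 hI.symm
  have : IsProbabilityMeasure (P.map X) := Measure.isProbabilityMeasure_map hX.aemeasurable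
  have : IsProbabilityMeasure (P.map X') := Measure.isProbabilityMeasure_map hX'.aemeasurable
  have h1 : P {ω | w ≤ a * X ω + b * X' ω ∧ X' ω < d} = ((P.map X').prod (P.map X)) S := by
    rw [← hprod, Measure.map_apply (by fun_prop) hS]; rfl
  have hsec : ∀ x, (P.map X) (Prod.mk x ⁻¹' S) = Set.indicator (Iio d) (fun x => P {ω | (w - b * x) / a ≤ X ω}) x := by
    intro x
    rw [Measure.map_apply hX (measurable_prodMk_left hS)]
    by_cases hx : x < d
    · rw [indicator_of_mem (show x ∈ Iio d from hx)]
      congr 1; ext ω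
      simp only [hSd, mem_preimage, mem_ofPred_eq, hx, and_true]
      rw [div_le_iff₀ ha]
      constructor <;> intro h <;> linarith
    · rw [indicator_of_notMem (show x ∉ Iio d from hx)]
      convert! measure_empty (μ := P)
      ext ω
      simp [hSd, hx]
  have hmeas := measurable_measure_prodMk_left (ν := P.map X) hS
  have hto : ∀ x, ((P.map X) (Prod.mk x ⁻¹' S)).toReal = Set.indicator (Iio d) (fun x => (P {ω | (w - b * x) / a ≤ X ω}).toReal) x := by
    intro x
    rw [hsec x]
    by_cases hx : x ∈ Iio d <;> simp [hx]
  have hm2 : Measurable (fun x => Set.indicator (Iio d) (fun x => (P {ω | (w - b * x) / a ≤ X ω}).toReal) x) := by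
    simp_rw [← hto]
    exact hmeas.ennreal_toReal
  constructor
  · refine (integrable_const (1:ℝ)).mono' (hm2.comp hX').aestronglyMeasurable (ae_of_all _ fun ω => ?_)
    rw [← hto, Real.norm_of_nonneg ENNReal.toReal_nonneg]
    exact ENNReal.toReal_le_of_le_ofReal zero_le_one (by simpa using prob_le_one)
  · rw [h1, Measure.prod_apply hS, ← integral_toReal hmeas.aemeasurable (ae_of_all _ fun x => measure_lt_top _ _)]
    simp_rw [hto]
    rw [integral_map hX'.aemeasurable hm2.aestronglyMeasurable]

lemma st_onejump (hC : 0 < C) (hY : Y ∈ Ioo (1:ℝ) 2) {X X' : Ω → ℝ} (hX : StX P C Y X) (hX' : StX P C Y X') (hI : IndepFun X X' P)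
    (a b δ : ℝ) (ha : 0 < a) (hb : 0 < b) (hδ : 0 < δ) (hbδ : b * δ ≤ 1 / 2) :
    ∃ B : ℝ, ∀ w : ℝ, 1 ≤ w → |(P {ω | w ≤ a * X ω + b * X' ω ∧ X' ω < δ * w}).toReal - C / Y * a ^ Y * w ^ (-Y)|
      ≤ B * w ^ (-Y - 1) := by
  obtain ⟨B, hB, ht⟩ := hX.tail
  have hY1 : 1 < Y := hY.1
  set D : ℝ := C / Y * a ^ Y * (Y * (1 / 2) ^ (-Y - 1) * b) + C / Y * a ^ Y / δ with hD
  refine ⟨B * (2 * a) ^ (2 * Y) + D * ∫ ω, |X' ω| ∂P, fun w hw => ?_⟩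
  have hw0 : 0 < w := by linarith
  obtain ⟨hi, he⟩ := st_cond X X' hX.meas hX'.meas hI a b (δ * w) w ha
  have hconst : C / Y * a ^ Y * w ^ (-Y) = ∫ ω, C / Y * a ^ Y * w ^ (-Y) ∂P := by simp
  rw [he, hconst, ← integral_sub hi (integrable_const _)]
  have hp : ∀ ω, ‖Set.indicator (Iio (δ * w)) (fun x => (P {ω | (w - b * x) / a ≤ X ω}).toReal) (X' ω) - C / Y * a ^ Y * w ^ (-Y)‖
    ≤ B * (2 * a) ^ (2 * Y) * w ^ (-Y - 1) + D * w ^ (-Y - 1) * |X' ω| := by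
    intro ω
    set x := X' ω
    rw [Real.norm_eq_abs]
    have p1 : 0 ≤ C / Y * a ^ Y * (Y * (1 / 2) ^ (-Y - 1) * b) := by positivity
    have p2 : 0 ≤ C / Y * a ^ Y / δ := by positivity
    have p3 : 0 < w ^ (-Y - 1) := by positivity
    by_cases hx : x < δ * w
    · rw [indicator_of_mem (show x ∈ Iio (δ * w) from hx)]
      have hr : w / 2 ≤ w - b * x := by nlinarith
      have hr0 : 0 < w - b * x := by linarith
      have h1 := ht ((w - b * x) / a) (by positivity)
      have h2 := st_mvt Y w (w - b * x) hY1 hw0 hr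
      have e1 : ((w - b * x) / a) ^ (-Y) = a ^ Y * (w - b * x) ^ (-Y) := by
        rw [Real.div_rpow hr0.le ha.le, Real.rpow_neg ha.le]; field_simp
      have e2 : |w - b * x - w| = b * |x| := by
        rw [show w - b * x - w = -(b * x) by ring, abs_neg, abs_mul, abs_of_pos hb]
      have e3 : (w / 2) ^ (-Y - 1) = (1/2) ^ (-Y - 1) * w ^ (-Y - 1) := by
        rw [← Real.mul_rpow (by norm_num) hw0.le]; congr 1; ring
      have e4 : ((w - b * x) / a) ^ (-(2 * Y)) ≤ (2 * a) ^ (2 * Y) * w ^ (-Y - 1) := by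
        calc ((w - b * x) / a) ^ (-(2 * Y)) ≤ (w / (2 * a)) ^ (-(2 * Y)) := by
              apply Real.rpow_le_rpow_of_nonpos (by positivity) _ (by linarith)
              rw [div_le_div_iff₀ (by positivity) ha]; nlinarith
          _ = (2 * a) ^ (2 * Y) * w ^ (-(2 * Y)) := by
              rw [Real.div_rpow hw0.le (by positivity), Real.rpow_neg (by positivity : (0:ℝ) ≤ 2 * a)]; field_simp
          _ ≤ _ := by
              gcongr 1
              exact Real.rpow_le_rpow_of_exponent_le hw (by linarith)
      rw [e2, e3] at h2
      rw [e1] at h1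
      have h3 : |C / Y * (a ^ Y * (w - b * x) ^ (-Y)) - C / Y * a ^ Y * w ^ (-Y)| ≤
          C / Y * a ^ Y * (Y * ((1/2) ^ (-Y - 1) * w ^ (-Y - 1)) * (b * |x|)) := by
        rw [show C / Y * (a ^ Y * (w - b * x) ^ (-Y)) - C / Y * a ^ Y * w ^ (-Y) = C / Y * a ^ Y * ((w - b * x) ^ (-Y) - w ^ (-Y)) by ring,
          abs_mul, abs_of_nonneg (by positivity : 0 ≤ C / Y * a ^ Y)]
        gcongr
      calc _ ≤ B * ((w - b * x) / a) ^ (-(2 * Y)) + C / Y * a ^ Y * (Y * ((1/2) ^ (-Y - 1) * w ^ (-Y - 1)) * (b * |x|)) :=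
            (abs_sub_le _ _ _).trans (add_le_add h1 h3)
        _ ≤ B * ((2 * a) ^ (2 * Y) * w ^ (-Y - 1)) + C / Y * a ^ Y * (Y * ((1/2) ^ (-Y - 1) * w ^ (-Y - 1)) * (b * |x|)) := by gcongr
        _ ≤ _ := by
          have : 0 ≤ C / Y * a ^ Y / δ * w ^ (-Y - 1) * |x| := by positivity
          rw [hD]; nlinarith
    · rw [indicator_of_notMem (show x ∉ Iio (δ * w) from hx), zero_sub, abs_neg, abs_of_nonneg (by positivity)]
      push Not at hx
      have h1 : 1 ≤ |x| / (δ * w) := by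
        rw [le_div_iff₀ (by positivity), one_mul]; exact hx.trans (le_abs_self x)
      have e5 : w ^ (-Y) = w * w ^ (-Y - 1) := by rw [Real.rpow_sub_one hw0.ne']; field_simp
      calc C / Y * a ^ Y * w ^ (-Y) ≤ C / Y * a ^ Y * w ^ (-Y) * (|x| / (δ * w)) := le_mul_of_one_le_right (by positivity) h1
        _ = C / Y * a ^ Y / δ * w ^ (-Y - 1) * |x| := by rw [e5]; field_simp
        _ ≤ _ := by
          have : 0 ≤ B * (2 * a) ^ (2 * Y) * w ^ (-Y - 1) := by positivity
          have : 0 ≤ C / Y * a ^ Y * (Y * (1 / 2) ^ (-Y - 1) * b) * (w ^ (-Y - 1) * |x|) := by positivity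
          rw [hD]; nlinarith
  have hgi : Integrable (fun ω => B * (2 * a) ^ (2 * Y) * w ^ (-Y - 1) + D * w ^ (-Y - 1) * |X' ω|) P :=
    (integrable_const _).add (hX'.int.abs.const_mul _)
  have := norm_integral_le_of_norm_le hgi (ae_of_all _ hp)
  rw [Real.norm_eq_abs] at this
  refine this.trans (le_of_eq ?_)
  rw [integral_add (integrable_const _) (hX'.int.abs.const_mul _), integral_const_mul (D * w ^ (-Y - 1))]
  simp; ring

lemma st_tailbd (hC : 0 < C) (hY : Y ∈ Ioo (1:ℝ) 2) {X : Ω → ℝ} (hX : StX P C Y X) (δ : ℝ) (hδ : 0 < δ) :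
    ∃ D : ℝ, 0 < D ∧ ∀ w : ℝ, 1 ≤ w → (P {ω | δ * w ≤ X ω}).toReal ≤ D * w ^ (-Y) := by
  obtain ⟨B, hB, ht⟩ := hX.tail
  have hY1 : 1 < Y := hY.1
  refine ⟨C / Y * δ ^ (-Y) + B * δ ^ (-(2 * Y)), by positivity, fun w hw => ?_⟩
  have hw0 : 0 < w := by linarith
  have h := (abs_le.1 (ht (δ * w) (by positivity))).2
  rw [Real.mul_rpow hδ.le hw0.le, Real.mul_rpow hδ.le hw0.le] at h
  have : w ^ (-(2 * Y)) ≤ w ^ (-Y) := Real.rpow_le_rpow_of_exponent_le hw (by linarith)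
  have : B * δ ^ (-(2 * Y)) * w ^ (-(2 * Y)) ≤ B * δ ^ (-(2 * Y)) * w ^ (-Y) := by gcongr
  nlinarith

lemma st_tailW (hC : 0 < C) (hY : Y ∈ Ioo (1:ℝ) 2) {U V : Ω → ℝ} (hU : StX P C Y U) (hV : StX P C Y V) (hI : IndepFun U V P)
    (G M : ℝ) (hG : 0 < G) (hM : 1 < M) :
    ∃ B : ℝ, ∀ w : ℝ, 1 ≤ w → |(P {ω | w ≤ max (U ω - V ω) 0 + ((M - 1) * U ω + (G + 1) * V ω)}).toReal
      - C / Y * (M ^ Y + (G + 1) ^ Y) * w ^ (-Y)| ≤ B * w ^ (-Y - 1) := by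
  have hY1 : 1 < Y := hY.1
  have mU := hU.meas
  have mV := hV.meas
  set δ : ℝ := 1 / (2 * (M + G + 1)) with hδd
  have hδ : 0 < δ := by positivity
  have hδ1 : δ * (M + G + 1) = 1 / 2 := by rw [hδd]; field_simp
  obtain ⟨B1, h1⟩ := st_onejump hC hY hU hV hI M G δ (by linarith) hG hδ (by nlinarith)
  obtain ⟨B2, h2⟩ := st_onejump hC hY hV hU hI.symm (G + 1) (M - 1) δ (by linarith) (by linarith) hδ (by nlinarith)
  obtain ⟨D1, hD1, h3⟩ := st_tailbd hC hY hU δ hδ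
  obtain ⟨D2, hD2, h4⟩ := st_tailbd hC hY hV δ hδ
  refine ⟨B1 + B2 + D1 * D2, fun w hw => ?_⟩
  have hw0 : 0 < w := by linarith
  set E1 := {ω | w ≤ M * U ω + G * V ω ∧ V ω < δ * w} with hE1
  set E2 := {ω | w ≤ (G + 1) * V ω + (M - 1) * U ω ∧ U ω < δ * w} with hE2
  set E := {ω | w ≤ max (U ω - V ω) 0 + ((M - 1) * U ω + (G + 1) * V ω)} with hE
  set R := {ω | δ * w ≤ U ω} ∩ {ω | δ * w ≤ V ω} with hR
  have mE2 : MeasurableSet E2 := by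
    exact (measurableSet_le (f := fun _ : Ω => w) (g := fun ω => (G + 1) * V ω + (M - 1) * U ω) (by fun_prop) (by fun_prop)).inter
      (measurableSet_lt (f := U) (g := fun _ : Ω => δ * w) (by fun_prop) (by fun_prop))
  have hdis : Disjoint E1 E2 := by
    rw [Set.disjoint_left]
    rintro ω ⟨a1, a2⟩ ⟨a3, a4⟩
    nlinarith
  have hsub : E1 ∪ E2 ⊆ E := by
    rintro ω (⟨a1, a2⟩ | ⟨a1, a2⟩)
    · have := le_max_left (U ω - V ω) 0
      change w ≤ _
      linarith
    · have := le_max_right (U ω - V ω) 0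
      change w ≤ _
      linarith
  have hsub2 : E ⊆ (E1 ∪ E2) ∪ R := by
    intro ω hω
    have hω : w ≤ max (U ω - V ω) 0 + ((M - 1) * U ω + (G + 1) * V ω) := hω
    by_contra hcon
    simp only [hE1, hE2, hR, mem_union, mem_inter_iff, mem_ofPred_eq, not_or, not_and, not_lt, not_le] at hcon
    obtain ⟨⟨c1, c2⟩, c3⟩ := hcon
    rcases le_total (U ω) (V ω) with h | h
    · rw [max_eq_right (by linarith)] at hω
      have := c2 (by linarith)
      have := c3 this
      linarith
    · rw [max_eq_left (by linarith)] at hω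
      have := c1 (by linarith)
      have := c3 (by linarith)
      linarith
  have hPR : P.real R ≤ D1 * D2 * w ^ (-Y - 1) := by
    have := hI.measure_inter_preimage_eq_mul (Ici (δ * w)) (Ici (δ * w)) measurableSet_Ici measurableSet_Ici
    have e : P.real R = (P {ω | δ * w ≤ U ω}).toReal * (P {ω | δ * w ≤ V ω}).toReal := by
      rw [← ENNReal.toReal_mul]; exact congrArg ENNReal.toReal this
    rw [e]
    calc _ ≤ (D1 * w ^ (-Y)) * (D2 * w ^ (-Y)) := by
          gcongr
          · exact h3 w hw
          · exact h4 w hw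
      _ = D1 * D2 * w ^ (-Y + -Y) := by rw [Real.rpow_add hw0]; ring
      _ ≤ _ := by
          gcongr 1
          exact Real.rpow_le_rpow_of_exponent_le hw (by linarith)
  have l1 : P.real (E1 ∪ E2) = P.real E1 + P.real E2 := measureReal_union hdis mE2
  have l2 : P.real (E1 ∪ E2) ≤ P.real E := measureReal_mono hsub
  have l3 : P.real E ≤ P.real (E1 ∪ E2) + P.real R := (measureReal_mono hsub2).trans (measureReal_union_le _ _)
  have k1 := abs_le.1 (h1 w hw)
  have k2 := abs_le.1 (h2 w hw)
  change |P.real E - _| ≤ _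
  change _ ≤ P.real E1 - _ ∧ P.real E1 - _ ≤ _ at k1
  change _ ≤ P.real E2 - _ ∧ P.real E2 - _ ≤ _ at k2
  have : 0 ≤ D1 * D2 * w ^ (-Y - 1) := by positivity
  rw [abs_le]
  constructor <;> nlinarith [k1.1, k1.2, k2.1, k2.2]
end


lemma st_phi_lim (x : ℝ) : Tendsto (fun s : ℝ => (Real.exp (-(s * x)) - 1 + s * x) / s ^ 2) (𝓝[>] 0) (𝓝 (1/2 * x ^ 2)) := by
  rw [tendsto_iff_norm_sub_tendsto_zero]
  have t : Tendsto (fun s : ℝ => s * |x| ^ 3) (𝓝[>] 0) (𝓝 0) := by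
    have : Continuous (fun s : ℝ => s * |x| ^ 3) := by fun_prop
    have h := this.tendsto 0
    rw [zero_mul] at h
    exact h.mono_left nhdsWithin_le_nhds
  have hs1 : ∀ᶠ s : ℝ in 𝓝[>] 0, s * |x| ≤ 1 := by
    have : Continuous (fun s : ℝ => s * |x|) := by fun_prop
    have h := this.tendsto 0
    rw [zero_mul] at h
    exact (h.mono_left nhdsWithin_le_nhds).eventually (eventually_le_nhds one_pos)
  refine squeeze_zero' (Eventually.of_forall fun s => norm_nonneg _) ?_ t
  filter_upwards [hs1, self_mem_nhdsWithin] with s hs hs0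
  have hs0 : 0 < s := hs0
  have ha : |-(s * x)| = s * |x| := by rw [abs_neg, abs_mul, abs_of_pos hs0]
  have h := Real.exp_bound (x := -(s * x)) (by rw [ha]; exact hs) (n := 3) (by norm_num)
  rw [ha] at h
  simp [Finset.sum_range_succ, Nat.factorial] at h
  rw [Real.norm_eq_abs, show (Real.exp (-(s * x)) - 1 + s * x) / s ^ 2 - 1 / 2 * x ^ 2 =
    (Real.exp (-(s * x)) - (1 + -(s * x) + (s * x) ^ 2 / 2)) / s ^ 2 by field_simp; ring, abs_div,
    abs_of_pos (by positivity : 0 < s ^ 2), div_le_iff₀ (by positivity)]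
  refine h.trans ?_
  have : 0 ≤ (s * |x|) ^ 3 := by positivity
  have e : s * |x| ^ 3 * s ^ 2 = (s * |x|) ^ 3 := by ring
  rw [e]
  norm_num
  nlinarith

lemma st_phi_nonneg (x : ℝ) : 0 ≤ Real.exp (-x) - 1 + x := by
  have := Real.add_one_le_exp (-x); linarith

lemma st_phi_neg (s x : ℝ) (hs : 0 < s) (hs2 : s ≤ 1/2) (hx : x ≤ 0) :
    (Real.exp (-(s * x)) - 1 + s * x) / s ^ 2 ≤ 8 * Real.exp (-x) := by
  obtain ⟨y, rfl⟩ : ∃ y, x = -y := ⟨-x, by ring⟩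
  have hy : 0 ≤ y := by linarith
  have h1 : Real.exp (s * y) - 1 - s * y ≤ (s * y) ^ 2 * Real.exp (s * y) := by
    have h2 := Real.add_one_le_exp (-(s * y))
    have h3 : Real.exp (-(s * y)) * Real.exp (s * y) = 1 := by rw [← Real.exp_add]; simp
    have h4 := Real.exp_pos (s * y)
    have h5 : 0 ≤ s * y := by positivity
    nlinarith [mul_le_mul_of_nonneg_left h2 (mul_nonneg h4.le (by linarith : 0 ≤ 1 + s * y))]
  have h6 : y ^ 2 ≤ 8 * Real.exp (y / 2) := by
    have := Real.quadratic_le_exp_of_nonneg (x := y / 2) (by positivity)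
    nlinarith
  rw [div_le_iff₀ (by positivity), mul_neg, neg_neg, neg_neg]
  calc _ ≤ (s * y) ^ 2 * Real.exp (s * y) := by linarith
    _ = y ^ 2 * Real.exp (s * y) * s ^ 2 := by ring
    _ ≤ (8 * Real.exp (y / 2)) * Real.exp (y / 2) * s ^ 2 := by
        gcongr; nlinarith
    _ = 8 * Real.exp y * s ^ 2 := by
        rw [mul_assoc 8, ← Real.exp_add]; congr 3; ring

section
variable {Ω : Type} [MeasurableSpace Ω] {P : Measure Ω} [IsProbabilityMeasure P] {Y : ℝ}

lemma st_tail_meas (W : Ω → ℝ) : Measurable (fun w : ℝ => (P {ω | w ≤ W ω}).toReal) := by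
  apply Antitone.measurable
  intro a b hab
  apply ENNReal.toReal_mono (measure_ne_top _ _)
  apply measure_mono
  intro ω (hω : b ≤ W ω)
  exact hab.trans hω

lemma st_tail_int (hY : Y ∈ Ioo (1:ℝ) 2) (W : Ω → ℝ) (T B : ℝ) (hT : 0 ≤ T)
    (ht : ∀ w : ℝ, 1 ≤ w → |(P {ω | w ≤ W ω}).toReal - T * w ^ (-Y)| ≤ B * w ^ (-Y - 1)) :
    IntegrableOn (fun w : ℝ => w * ((P {ω | w ≤ W ω}).toReal - T * w ^ (-Y))) (Ioi 0) := by
  have hm := st_tail_meas (P := P) W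
  have hm2 : Measurable (fun w : ℝ => w * ((P {ω | w ≤ W ω}).toReal - T * w ^ (-Y))) := by fun_prop
  rw [← Ioc_union_Ioi_eq_Ioi (zero_le_one' ℝ)]
  apply IntegrableOn.union
  · have h1 : IntegrableOn (fun w : ℝ => 1 + T * w ^ (1 - Y)) (Ioc 0 1) := by
      apply Integrable.add
      · exact integrableOn_const (by simp)
      apply Integrable.const_mul
      exact (intervalIntegral.intervalIntegrable_rpow' (a := 0) (b := 1) (r := 1 - Y) (by linarith [hY.2])).1
    refine h1.mono' hm2.aestronglyMeasurable ?_
    refine (ae_restrict_iff' measurableSet_Ioc).2 (ae_of_all _ fun w hw => ?_)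
    have hw0 : 0 < w := hw.1
    have p1 : (P {ω | w ≤ W ω}).toReal ≤ 1 := ENNReal.toReal_le_of_le_ofReal zero_le_one (by simpa using prob_le_one)
    have p0 : 0 ≤ (P {ω | w ≤ W ω}).toReal := ENNReal.toReal_nonneg
    rw [norm_mul, Real.norm_of_nonneg hw0.le, Real.norm_eq_abs]
    have e : w ^ (1 - Y) = w * w ^ (-Y) := by
      rw [show 1 - Y = 1 + -Y by ring, Real.rpow_add hw0, Real.rpow_one]
    rw [e]
    have : |(P {ω | w ≤ W ω}).toReal - T * w ^ (-Y)| ≤ 1 + T * w ^ (-Y) := by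
      have : 0 ≤ T * w ^ (-Y) := by positivity
      rw [abs_le]; constructor <;> linarith
    calc _ ≤ w * (1 + T * w ^ (-Y)) := by gcongr
      _ ≤ _ := by have := hw.2; nlinarith
  · refine Integrable.mono' ((integrableOn_Ioi_rpow_of_lt (a := -Y) (c := 1) (by linarith [hY.1]) one_pos).const_mul B) hm2.aestronglyMeasurable ?_
    refine (ae_restrict_iff' measurableSet_Ioi).2 (ae_of_all _ fun w hw => ?_)
    have hw1 : 1 < w := hw
    have hw0 : 0 < w := by linarith
    rw [norm_mul, Real.norm_of_nonneg hw0.le, Real.norm_eq_abs]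
    calc _ ≤ w * (B * w ^ (-Y - 1)) := by gcongr; exact ht w hw1.le
      _ = _ := by rw [Real.rpow_sub_one hw0.ne']; field_simp

lemma st_layer (W : Ω → ℝ) (hW : Measurable W) (s : ℝ) (hs : 0 < s) :
    ∫ ω, (Real.exp (-(s * max (W ω) 0)) - 1 + s * max (W ω) 0) ∂P =
      ∫ w in Ioi (0:ℝ), (s * (1 - Real.exp (-s * w))) * (P {ω | w ≤ W ω}).toReal := by
  have hm := st_tail_meas (P := P) W
  have hg : ∀ w : ℝ, 0 < w → 0 ≤ s * (1 - Real.exp (-s * w)) := by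
    intro w hw
    have : Real.exp (-s * w) ≤ 1 := by rw [Real.exp_le_one_iff]; nlinarith
    exact mul_nonneg hs.le (by linarith)
  have h := lintegral_comp_eq_lintegral_meas_le_mul P (f := fun ω => max (W ω) 0) (g := fun w => s * (1 - Real.exp (-s * w)))
    (ae_of_all _ fun ω => le_max_right _ _) (by fun_prop) (fun t _ => (by fun_prop : Continuous (fun w : ℝ => s * (1 - Real.exp (-s * w)))).intervalIntegrable _ _)
    ((ae_restrict_iff' measurableSet_Ioi).2 (ae_of_all _ fun w hw => hg w hw))
  have hI : ∀ x : ℝ, ∫ w in (0:ℝ)..x, s * (1 - Real.exp (-s * w)) = Real.exp (-(s * x)) - 1 + s * x := by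
    intro x
    rw [intervalIntegral.integral_eq_sub_of_hasDerivAt (f := fun w => Real.exp (-s * w) + s * w)]
    · simp; ring_nf
    · intro w _
      have h1 : HasDerivAt (fun w : ℝ => -s * w) (-s * 1) w := (hasDerivAt_id w).const_mul (-s)
      have h2 : HasDerivAt (fun w : ℝ => s * w) (s * 1) w := (hasDerivAt_id w).const_mul s
      convert! h1.exp.add h2 using 1
      ring
    · exact (by fun_prop : Continuous (fun w : ℝ => s * (1 - Real.exp (-s * w)))).intervalIntegrable _ _
  simp_rw [hI] at h
  rw [integral_eq_lintegral_of_nonneg_ae (ae_of_all _ fun ω => st_phi_nonneg _) (by fun_prop), h,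
    integral_eq_lintegral_of_nonneg_ae]
  · congr 1
    apply setLIntegral_congr_fun measurableSet_Ioi
    intro w hw
    have hw : 0 < w := hw
    simp only []
    rw [ENNReal.ofReal_mul (hg w hw), ENNReal.ofReal_toReal (measure_ne_top _ _), mul_comm]
    congr 2
    ext ω
    simp [hw.not_ge]
  · exact (ae_restrict_iff' measurableSet_Ioi).2 (ae_of_all _ fun w hw => mul_nonneg (hg w hw) ENNReal.toReal_nonneg)
  · apply Measurable.aestronglyMeasurable; fun_prop

lemma st_expandW (hY : Y ∈ Ioo (1:ℝ) 2) (W : Ω → ℝ) (hW : Measurable W) (hi : Integrable W P)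
    (he : Integrable (fun ω => Real.exp (-(W ω))) P) (T B : ℝ) (hT : 0 ≤ T)
    (ht : ∀ w : ℝ, 1 ≤ w → |(P {ω | w ≤ W ω}).toReal - T * w ^ (-Y)| ≤ B * w ^ (-Y - 1)) :
    Tendsto (fun s : ℝ => (∫ ω, Real.exp (-(s * W ω)) ∂P - 1 + s * ∫ ω, W ω ∂P - T * Y * Real.Gamma (-Y) * s ^ Y) / s ^ 2)
      (𝓝[>] 0) (𝓝 (1/2 * (∫ ω, Set.indicator {ω | W ω ≤ 0} (fun ω => (W ω) ^ 2) ω ∂P) +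
        ∫ w in Ioi (0:ℝ), w * ((P {ω | w ≤ W ω}).toReal - T * w ^ (-Y)))) := by
  have hmS : MeasurableSet {ω | W ω ≤ 0} := hW measurableSet_Iic
  have hm := st_tail_meas (P := P) W
  have hti := st_tail_int hY W T B hT ht
  have hsmall : ∀ᶠ s : ℝ in 𝓝[>] 0, s ≤ 1/2 := by
    filter_upwards [Ioc_mem_nhdsGT (show (0:ℝ) < 1/2 by norm_num)] with s hs using hs.2
  have tN : Tendsto (fun s : ℝ => ∫ ω, Set.indicator {ω | W ω ≤ 0} (fun ω => (Real.exp (-(s * W ω)) - 1 + s * W ω) / s ^ 2) ω ∂P)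
      (𝓝[>] 0) (𝓝 (1/2 * (∫ ω, Set.indicator {ω | W ω ≤ 0} (fun ω => (W ω) ^ 2) ω ∂P))) := by
    rw [← integral_const_mul]
    apply tendsto_integral_filter_of_dominated_convergence (fun ω => 8 * Real.exp (-(W ω))) ?_ ?_ (he.const_mul 8) ?_
    · refine Eventually.of_forall fun s => ?_
      apply Measurable.aestronglyMeasurable
      apply Measurable.indicator _ hmS
      fun_prop
    · filter_upwards [hsmall, self_mem_nhdsWithin] with s hs hs0
      refine ae_of_all _ fun ω => ?_
      by_cases hω : ω ∈ {ω | W ω ≤ 0}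
      · rw [indicator_of_mem hω, Real.norm_of_nonneg (div_nonneg (st_phi_nonneg _) (by positivity))]
        exact st_phi_neg s (W ω) hs0 hs hω
      · rw [indicator_of_notMem hω]; simp; positivity
    · refine ae_of_all _ fun ω => ?_
      by_cases hω : ω ∈ {ω | W ω ≤ 0}
      · simp_rw [indicator_of_mem hω]; exact st_phi_lim (W ω)
      · simp_rw [indicator_of_notMem hω]; simp
  have tP : Tendsto (fun s : ℝ => ∫ w in Ioi (0:ℝ), (1 - Real.exp (-s * w)) / s * ((P {ω | w ≤ W ω}).toReal - T * w ^ (-Y)))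
      (𝓝[>] 0) (𝓝 (∫ w in Ioi (0:ℝ), w * ((P {ω | w ≤ W ω}).toReal - T * w ^ (-Y)))) := by
    apply tendsto_integral_filter_of_dominated_convergence _ ?_ ?_ hti.norm ?_
    · refine Eventually.of_forall fun s => ?_
      apply Measurable.aestronglyMeasurable
      fun_prop
    · filter_upwards [self_mem_nhdsWithin] with s hs0
      have hs0 : 0 < s := hs0
      refine (ae_restrict_iff' measurableSet_Ioi).2 (ae_of_all _ fun w hw => ?_)
      have hw : 0 < w := hw
      rw [norm_mul, norm_mul]
      gcongr
      rw [Real.norm_of_nonneg hw.le, Real.norm_of_nonneg]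
      · rw [div_le_iff₀ hs0]; have := Real.add_one_le_exp (-s * w); linarith
      · have : Real.exp (-s * w) ≤ 1 := by rw [Real.exp_le_one_iff]; nlinarith
        exact div_nonneg (by linarith) hs0.le
    · refine ae_of_all _ fun w => ?_
      apply Tendsto.mul_const
      have hd : HasDerivAt (fun s : ℝ => 1 - Real.exp (-s * w)) w 0 := by
        have h1 : HasDerivAt (fun s : ℝ => -s * w) (-1 * w) 0 := (hasDerivAt_id (0:ℝ)).neg.mul_const w
        convert! h1.exp.const_sub 1 using 1
        simp
      have := hd.tendsto_slope_zero_right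
      refine this.congr fun s => ?_
      simp
      ring
  refine (tN.add tP).congr' ?_
  filter_upwards [hsmall, self_mem_nhdsWithin] with s hs hs0
  have hs0 : 0 < s := hs0
  have hes : Integrable (fun ω => Real.exp (-(s * W ω))) P := by
    refine (he.add (integrable_const 1)).mono' (by fun_prop) (ae_of_all _ fun ω => ?_)
    rw [Real.norm_of_nonneg (Real.exp_pos _).le]
    simp only [Pi.add_apply]
    rcases le_total 0 (W ω) with h | h
    · have : Real.exp (-(s * W ω)) ≤ 1 := by rw [Real.exp_le_one_iff]; nlinarith
      have := Real.exp_pos (-(W ω)); linarith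
    · have : Real.exp (-(s * W ω)) ≤ Real.exp (-(W ω)) := by apply Real.exp_le_exp.2; nlinarith
      linarith
  have hfi : Integrable (fun ω => Real.exp (-(s * W ω)) - 1 + s * W ω) P :=
    (hes.sub (integrable_const 1)).add (hi.const_mul s)
  have v1 : ∫ ω, (Real.exp (-(s * W ω)) - 1 + s * W ω) ∂P = ∫ ω, Real.exp (-(s * W ω)) ∂P - 1 + s * ∫ ω, W ω ∂P := by
    have h1 : Integrable (fun ω => Real.exp (-(s * W ω)) - 1) P := hes.sub (integrable_const 1)
    rw [integral_add h1 (hi.const_mul s), integral_sub hes (integrable_const 1), integral_const_mul]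
    simp
  have hd : ∀ ω, Real.exp (-(s * W ω)) - 1 + s * W ω = Set.indicator {ω | W ω ≤ 0} (fun ω => Real.exp (-(s * W ω)) - 1 + s * W ω) ω
      + (Real.exp (-(s * max (W ω) 0)) - 1 + s * max (W ω) 0) := by
    intro ω
    by_cases hω : W ω ≤ 0
    · rw [indicator_of_mem (show ω ∈ {ω | W ω ≤ 0} from hω), max_eq_right hω]; simp
    · rw [indicator_of_notMem (show ω ∉ {ω | W ω ≤ 0} from hω), max_eq_left (by linarith)]; simp
  have hind := hfi.indicator hmS
  have hpos : Integrable (fun ω => Real.exp (-(s * max (W ω) 0)) - 1 + s * max (W ω) 0) P := by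
    refine (hfi.sub hind).congr (ae_of_all _ fun ω => ?_)
    have := hd ω
    simp only [Pi.sub_apply]
    linarith
  have v2 := integral_congr_ae (μ := P) (ae_of_all _ hd)
  rw [integral_add hind hpos, v1, st_layer W hW s hs0] at v2
  have b := st_byparts 1 Y s one_pos hY.1 (by linarith [hY.2]) hs0
  simp only [Real.rpow_one, div_one] at b
  have hG : Real.Gamma (1 - (Y - 1)) = Y * (Y - 1) * Real.Gamma (-Y) := by
    have hY1 := hY.1
    rw [show 1 - (Y - 1) = (1 - Y) + 1 by ring, Real.Gamma_add_one (by linarith), show 1 - Y = -Y + 1 by ring,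
      Real.Gamma_add_one (by linarith)]; ring
  rw [hG] at b
  have hri : IntegrableOn (fun w : ℝ => (1 - Real.exp (-s * w)) / s * ((P {ω | w ≤ W ω}).toReal - T * w ^ (-Y))) (Ioi 0) := by
    refine hti.norm.mono' (by apply Measurable.aestronglyMeasurable; fun_prop) ?_
    refine (ae_restrict_iff' measurableSet_Ioi).2 (ae_of_all _ fun w hw => ?_)
    have hw : 0 < w := hw
    rw [norm_mul, norm_mul]
    gcongr
    rw [Real.norm_of_nonneg hw.le, Real.norm_of_nonneg]
    · rw [div_le_iff₀ hs0]; have := Real.add_one_le_exp (-s * w); linarith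
    · have : Real.exp (-s * w) ≤ 1 := by rw [Real.exp_le_one_iff]; nlinarith
      exact div_nonneg (by linarith) hs0.le
  have v3 : ∫ w in Ioi (0:ℝ), (s * (1 - Real.exp (-s * w))) * (P {ω | w ≤ W ω}).toReal =
      s ^ 2 * (∫ w in Ioi (0:ℝ), (1 - Real.exp (-s * w)) / s * ((P {ω | w ≤ W ω}).toReal - T * w ^ (-Y))) +
      T * s * (s ^ (Y - 1) * (Y * (Y - 1) * Real.Gamma (-Y)) / (Y - 1)) := by
    rw [← b.2, ← integral_const_mul, ← integral_const_mul, ← integral_add (hri.const_mul _) (b.1.const_mul _)]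
    congr 1; ext w
    field_simp
    ring
  rw [v3] at v2
  have v4 : ∫ ω, Set.indicator {ω | W ω ≤ 0} (fun ω => (Real.exp (-(s * W ω)) - 1 + s * W ω) / s ^ 2) ω ∂P =
     (∫ ω, Set.indicator {ω | W ω ≤ 0} (fun ω => Real.exp (-(s * W ω)) - 1 + s * W ω) ω ∂P) / s ^ 2 := by
    rw [← integral_div]
    congr 1; ext ω
    by_cases hω : ω ∈ {ω | W ω ≤ 0}
    · rw [indicator_of_mem hω, indicator_of_mem hω]
    · rw [indicator_of_notMem hω, indicator_of_notMem hω, zero_div]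
  rw [v4, v2, Real.rpow_sub_one hs0.ne']
  have hY1 : Y - 1 ≠ 0 := by linarith [hY.1]
  field_simp
  ring
end


lemma st_exp_lip (a b : ℝ) (ha : 0 ≤ a) (hb : 0 ≤ b) : |Real.exp (-a) - Real.exp (-b)| ≤ |a - b| := by
  have h := (convex_Ici (0:ℝ)).norm_image_sub_le_of_norm_hasDerivWithin_le (f := fun x : ℝ => Real.exp (-x))
    (f' := fun x => Real.exp (-x) * -1) (C := 1) (x := b) (y := a)
    (fun x _ => (hasDerivAt_neg x).exp.hasDerivWithinAt) ?_ hb ha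
  · simpa [Real.norm_eq_abs] using h
  · intro x hx
    have hx : 0 ≤ x := hx
    rw [mul_neg_one, norm_neg, Real.norm_of_nonneg (Real.exp_pos _).le, Real.exp_le_one_iff]
    linarith

lemma st_exp_lip2 (a b m : ℝ) (ha : a ∈ Icc 0 m) (hb : b ∈ Icc 0 m) :
    |Real.exp (-a) - Real.exp (-b) + (a - b)| ≤ m * |a - b| := by
  have h := (convex_Icc (0:ℝ) m).norm_image_sub_le_of_norm_hasDerivWithin_le (f := fun x : ℝ => Real.exp (-x) + x)
    (f' := fun x => Real.exp (-x) * -1 + 1) (C := m) (x := b) (y := a)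
    (fun x _ => ((hasDerivAt_neg x).exp.add (hasDerivAt_id x)).hasDerivWithinAt) ?_ hb ha
  · simp only [Real.norm_eq_abs] at h
    rw [show Real.exp (-a) - Real.exp (-b) + (a - b) = Real.exp (-a) + a - (Real.exp (-b) + b) by ring]
    exact h
  · intro x hx
    have h1 : Real.exp (-x) ≤ 1 := by rw [Real.exp_le_one_iff]; linarith [hx.1]
    have h2 := Real.add_one_le_exp (-x)
    rw [Real.norm_of_nonneg (by linarith)]
    linarith [hx.2]

lemma st_shift_pt (s θ z u : ℝ) (hs : 0 < s) (hs1 : s ≤ 1) (hθ : |θ| ≤ 1) :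
    |Real.exp (-(s * (u + max (z + θ) 0))) - Real.exp (-(s * (max z 0 + u))) + s * (max (z + θ) 0 - max z 0)|
      ≤ s ^ 2 * |θ| * (|u| + Real.exp (-u) + |z| + 1) := by
  set a := max (z + θ) 0 with ha
  set b := max z 0 with hb
  have ha0 : 0 ≤ a := le_max_right _ _
  have hb0 : 0 ≤ b := le_max_right _ _
  have hab : |a - b| ≤ |θ| := by
    have := abs_max_sub_max_le_abs (z + θ) z 0
    simpa [ha, hb] using this
  have hd : |s * a - s * b| ≤ s * |θ| := by
    rw [← mul_sub, abs_mul, abs_of_pos hs]; gcongr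
  have h1 := (st_exp_lip (s * a) (s * b) (by positivity) (by positivity)).trans hd
  have ham : a ≤ |z| + 1 := by
    apply max_le
    · linarith [le_abs_self z, le_abs_self θ]
    · positivity
  have hbm : b ≤ |z| + 1 := by
    apply max_le
    · linarith [le_abs_self z]
    · positivity
  have h2 := st_exp_lip2 (s * a) (s * b) (s * (|z| + 1)) ⟨by positivity, by gcongr⟩ ⟨by positivity, by gcongr⟩
  have h3 := st_exp_slope s u hs hs1
  rw [abs_div, abs_of_pos hs, div_le_iff₀ hs, one_mul, abs_sub_comm] at h3
  have e : Real.exp (-(s * (u + a))) - Real.exp (-(s * (b + u))) + s * (a - b) =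
    (Real.exp (-(s * u)) - 1) * (Real.exp (-(s * a)) - Real.exp (-(s * b))) +
      (Real.exp (-(s * a)) - Real.exp (-(s * b)) + (s * a - s * b)) := by
    rw [show -(s * (u + a)) = -(s * u) + -(s * a) by ring, show -(s * (b + u)) = -(s * u) + -(s * b) by ring,
      Real.exp_add, Real.exp_add]; ring
  rw [e]
  calc _ ≤ |Real.exp (-(s * u)) - 1| * |Real.exp (-(s * a)) - Real.exp (-(s * b))| + s * (|z| + 1) * |s * a - s * b| := by
        refine (abs_add_le _ _).trans ?_
        rw [abs_mul]
        gcongr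
    _ ≤ ((|u| + Real.exp (-u)) * s) * (s * |θ|) + s * (|z| + 1) * (s * |θ|) := by gcongr
    _ = _ := by ring

section
variable {Ω : Type} [MeasurableSpace Ω] {P : Measure Ω} [IsProbabilityMeasure P] {C Y : ℝ} {U V : Ω → ℝ}

lemma st_thetashift (hU : StX P C Y U) (hV : StX P C Y V) (hI : IndepFun U V P) (p q : ℝ) (hp : 0 < p) (hq : 0 < q) :
    ∃ B : ℝ, ∀ s θ : ℝ, 0 < s → s ≤ 1 → |θ| ≤ 1 →
      |∫ ω, Real.exp (-(s * (p * U ω + q * V ω + max (U ω - V ω + θ) 0))) ∂P -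
        ∫ ω, Real.exp (-(s * (max (U ω - V ω) 0 + (p * U ω + q * V ω)))) ∂P +
        s * (∫ ω, max (U ω - V ω + θ) 0 ∂P - ∫ ω, max (U ω - V ω) 0 ∂P)| ≤ B * (s ^ 2 * |θ|) := by
  have mU := hU.meas
  have mV := hV.meas
  have hz : Integrable (fun ω => U ω - V ω) P := hU.int.sub hV.int
  have hu : Integrable (fun ω => p * U ω + q * V ω) P := (hU.int.const_mul p).add (hV.int.const_mul q)
  have hexp := st_exp2_int hU hV hI p q hp.le hq.le
  have hB : Integrable (fun ω => |p * U ω + q * V ω| + Real.exp (-(p * U ω + q * V ω)) + |U ω - V ω| + 1) P :=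
    ((hu.abs.add hexp).add hz.abs).add (integrable_const 1)
  refine ⟨∫ ω, (|p * U ω + q * V ω| + Real.exp (-(p * U ω + q * V ω)) + |U ω - V ω| + 1) ∂P, ?_⟩
  intro s θ hs hs1 hθ
  have hes : Integrable (fun ω => Real.exp (-(s * (p * U ω + q * V ω)))) P := by
    refine (st_exp2_int hU hV hI (s * p) (s * q) (by positivity) (by positivity)).congr (ae_of_all _ fun ω => ?_)
    simp only []
    congr 1; ring
  have i1 : Integrable (fun ω => Real.exp (-(s * (p * U ω + q * V ω + max (U ω - V ω + θ) 0)))) P := by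
    refine hes.mono' (by fun_prop) (ae_of_all _ fun ω => ?_)
    rw [Real.norm_of_nonneg (Real.exp_pos _).le]
    apply Real.exp_le_exp.2
    have : 0 ≤ s * max (U ω - V ω + θ) 0 := mul_nonneg hs.le (le_max_right _ _)
    linarith
  have i2 : Integrable (fun ω => Real.exp (-(s * (max (U ω - V ω) 0 + (p * U ω + q * V ω))))) P := by
    refine hes.mono' (by fun_prop) (ae_of_all _ fun ω => ?_)
    rw [Real.norm_of_nonneg (Real.exp_pos _).le]
    apply Real.exp_le_exp.2
    have : 0 ≤ s * max (U ω - V ω) 0 := mul_nonneg hs.le (le_max_right _ _)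
    linarith
  have i3 : Integrable (fun ω => max (U ω - V ω + θ) 0) P := (hz.add (integrable_const θ)).pos_part
  have i4 : Integrable (fun ω => max (U ω - V ω) 0) P := hz.pos_part
  have i12 : Integrable (fun ω => Real.exp (-(s * (p * U ω + q * V ω + max (U ω - V ω + θ) 0))) -
    Real.exp (-(s * (max (U ω - V ω) 0 + (p * U ω + q * V ω))))) P := i1.sub i2
  have i34 : Integrable (fun ω => s * (max (U ω - V ω + θ) 0 - max (U ω - V ω) 0)) P := (i3.sub i4).const_mul s
  rw [← integral_sub i1 i2, ← integral_sub i3 i4, ← integral_const_mul, ← integral_add i12 i34, mul_comm, ← integral_const_mul]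
  rw [← Real.norm_eq_abs]
  refine norm_integral_le_of_norm_le (hB.const_mul (s ^ 2 * |θ|)) (ae_of_all P fun ω => ?_)
  exact st_shift_pt s θ (U ω - V ω) (p * U ω + q * V ω) hs hs1 hθ
end


lemma st_rpow_to_zero (a : ℝ) (ha : 0 < a) : Tendsto (fun t : ℝ => t ^ a) (𝓝[>] 0) (𝓝 0) := by
  have h := (Real.continuousAt_rpow_const 0 a (Or.inr ha.le)).tendsto
  rw [Real.zero_rpow ha.ne'] at h
  exact h.mono_left nhdsWithin_le_nhds

lemma st_rpow_bigO (a b : ℝ) (hab : b ≤ a) : (fun t : ℝ => t ^ a) =O[𝓝[>] (0:ℝ)] fun t => t ^ b := by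
  refine IsBigO.of_bound 1 ?_
  filter_upwards [Ioc_mem_nhdsGT (zero_lt_one' ℝ)] with t ht
  have ht0 : 0 < t := ht.1
  rw [Real.norm_of_nonneg (by positivity), Real.norm_of_nonneg (by positivity), one_mul]
  exact Real.rpow_le_rpow_of_exponent_ge ht0 ht.2 hab

lemma st_rpow_littleO (a b : ℝ) (hab : b < a) : (fun t : ℝ => t ^ a) =o[𝓝[>] (0:ℝ)] fun t => t ^ b := by
  rw [isLittleO_iff_tendsto' (by
    filter_upwards [self_mem_nhdsWithin] with t ht h0
    have ht : 0 < t := ht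
    exact absurd h0 (by positivity))]
  refine (st_rpow_to_zero (a - b) (by linarith)).congr' ?_
  filter_upwards [self_mem_nhdsWithin] with t ht
  rw [Real.rpow_sub ht]

lemma st_mul_zero (a b : ℝ) (hab : b ≤ a) (f : ℝ → ℝ) (hf : Tendsto f (𝓝[>] 0) (𝓝 0)) :
    (fun t : ℝ => t ^ a * f t) =o[𝓝[>] (0:ℝ)] fun t => t ^ b := by
  have h := (st_rpow_bigO a b hab).mul_isLittleO ((isLittleO_one_iff ℝ).2 hf)
  simpa using h

lemma st_assemble (Y : ℝ) (hY : Y ∈ Ioo (1:ℝ) 2) (η K' c e₁ e₂ d₁ L D : ℝ) (hη : 0 ≤ η) (κ Pr g ρ : ℝ → ℝ) (R : ℝ → ℝ → ℝ)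
    (hκ : (fun t => κ t - (e₁ * t + e₂ * t ^ (2 - 1/Y))) =o[𝓝[>] (0:ℝ)] fun t => t ^ (2 - 1/Y))
    (hg : Tendsto g (𝓝 0) (𝓝 L)) (hρ : Tendsto ρ (𝓝[>] 0) (𝓝 (-D)))
    (B : ℝ) (hR : ∀ s θ : ℝ, 0 < s → s ≤ 1 → |θ| ≤ 1 → |R s θ| ≤ B * (s ^ 2 * |θ|))
    (hPr : ∀ t > (0:ℝ), Pr t = 1 - Real.exp (-(η * t)) * (1 - t ^ (1/Y) * d₁ + K' * t + (t ^ (1/Y)) ^ 2 * ρ (t ^ (1/Y))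
      - t ^ (1/Y) * ((c * t - κ t) / t ^ (1/Y) / 2 + ((c * t - κ t) / t ^ (1/Y)) ^ 2 * g ((c * t - κ t) / t ^ (1/Y)))
      + R (t ^ (1/Y)) ((c * t - κ t) / t ^ (1/Y)))) :
    (fun t => Pr t - (d₁ * t ^ (1/Y) + (η - K' + (c - e₁) / 2) * t + ((c - e₁) ^ 2 * L - e₂ / 2) * t ^ (2 - 1/Y) + D * t ^ (2/Y)))
      =o[𝓝[>] (0:ℝ)] fun t => t ^ (min (2 - 1/Y) (2/Y)) := by
  have hY1 : 1 < Y := hY.1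
  have hY2 : Y < 2 := hY.2
  have hi0 : 0 < 1 / Y := by positivity
  have hi1 : 1 / Y < 1 := by rw [div_lt_one (by linarith)]; exact hY1
  have hi2 : 1 / 2 < 1 / Y := by rw [div_lt_div_iff₀ (by norm_num) (by linarith)]; linarith
  have h2Y : 2 / Y = 1 / Y + 1 / Y := by ring
  set m := min (2 - 1/Y) (2/Y) with hm
  have hm1 : m ≤ 2 - 1/Y := min_le_left _ _
  have hm2 : m ≤ 2/Y := min_le_right _ _
  have hs : Tendsto (fun t : ℝ => t ^ (1/Y)) (𝓝[>] 0) (𝓝[>] 0) := by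
    rw [tendsto_nhdsWithin_iff]
    refine ⟨st_rpow_to_zero _ hi0, ?_⟩
    filter_upwards [self_mem_nhdsWithin] with t ht
    exact Real.rpow_pos_of_pos ht _
  -- the remainder in kappa
  set k0 : ℝ → ℝ := fun t => (κ t - (e₁ * t + e₂ * t ^ (2 - 1/Y))) / t ^ (2 - 1/Y) with hk0
  have tk0 : Tendsto k0 (𝓝[>] 0) (𝓝 0) := hκ.tendsto_div_nhds_zero
  have ek0 : ∀ t > (0:ℝ), κ t = e₁ * t + e₂ * t ^ (2 - 1/Y) + k0 t * t ^ (2 - 1/Y) := by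
    intro t ht
    have : t ^ (2 - 1/Y) ≠ 0 := (Real.rpow_pos_of_pos ht _).ne'
    simp only [hk0]; field_simp; ring
  set a : ℝ → ℝ := fun t => c - e₁ - (e₂ + k0 t) * t ^ (1 - 1/Y) with ha
  have ta : Tendsto a (𝓝[>] 0) (𝓝 (c - e₁)) := by
    have := ((tk0.const_add e₂).mul (st_rpow_to_zero (1 - 1/Y) (by linarith))).const_sub (c - e₁)
    rw [show c - e₁ - (e₂ + 0) * 0 = c - e₁ by ring] at this
    exact this
  have ea : ∀ t > (0:ℝ), c * t - κ t = t * a t := by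
    intro t ht
    rw [ek0 t ht, ha, show (2 - 1/Y) = 1 + (1 - 1/Y) by ring, Real.rpow_add ht, Real.rpow_one]; ring
  set θ : ℝ → ℝ := fun t => (c * t - κ t) / t ^ (1/Y) with hθ
  have eθ : ∀ t > (0:ℝ), θ t = t ^ (1 - 1/Y) * a t := by
    intro t ht
    simp only [hθ]
    rw [ea t ht, Real.rpow_sub ht, Real.rpow_one]; ring
  have tθ : Tendsto θ (𝓝[>] 0) (𝓝 0) := by
    have := (st_rpow_to_zero (1 - 1/Y) (by linarith)).mul ta
    rw [zero_mul] at this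
    refine this.congr' ?_
    filter_upwards [self_mem_nhdsWithin] with t ht using (eθ t ht).symm
  have tg := hg.comp tθ
  have tρ := hρ.comp hs
  -- R / s^2 -> 0
  set R2 : ℝ → ℝ := fun t => R (t ^ (1/Y)) (θ t) / (t ^ (1/Y)) ^ 2 with hR2
  have tR2 : Tendsto R2 (𝓝[>] 0) (𝓝 0) := by
    have tB : Tendsto (fun t => B * |θ t|) (𝓝[>] 0) (𝓝 0) := by simpa using tθ.abs.const_mul B
    refine squeeze_zero_norm' ?_ tB
    have tθ' : ∀ᶠ t in 𝓝[>] (0:ℝ), |θ t| ≤ 1 := by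
      have := tθ.abs
      rw [abs_zero] at this
      exact this.eventually (eventually_le_nhds one_pos)
    filter_upwards [tθ', hs (Ioc_mem_nhdsGT (zero_lt_one' ℝ))] with t h1 h2
    have h2 : t ^ (1/Y) ∈ Ioc (0:ℝ) 1 := h2
    have := hR (t ^ (1/Y)) (θ t) h2.1 h2.2 h1
    have h20 := h2.1
    simp only [hR2]
    rw [norm_div, Real.norm_eq_abs, Real.norm_of_nonneg (by positivity), div_le_iff₀ (by positivity)]
    linarith
  set α : ℝ → ℝ := fun t => -(1/2) * k0 t + ((a t) ^ 2 * g (θ t) - (c - e₁) ^ 2 * L) with hα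
  have tα : Tendsto α (𝓝[>] 0) (𝓝 0) := by
    have := (tk0.const_mul (-(1/2))).add ((((ta.pow 2).mul tg)).sub_const ((c - e₁) ^ 2 * L))
    rw [show -(1/2) * (0:ℝ) + ((c - e₁) ^ 2 * L - (c - e₁) ^ 2 * L) = 0 by ring] at this
    exact this
  set β : ℝ → ℝ := fun t => -(ρ (t ^ (1/Y)) + D) - R2 t with hβ
  have tβ : Tendsto β (𝓝[>] 0) (𝓝 0) := by
    have := ((tρ.add_const D).neg).sub tR2
    rw [show -(-D + D) - 0 = (0:ℝ) by ring] at this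
    exact this
  set h : ℝ → ℝ := fun t => d₁ - K' * t ^ (1 - 1/Y) - t ^ (1/Y) * ρ (t ^ (1/Y)) + θ t / 2 + θ t ^ 2 * g (θ t) - t ^ (1/Y) * R2 t with hh
  have tt := hs.mono_right nhdsWithin_le_nhds
  have th : Tendsto h (𝓝[>] 0) (𝓝 d₁) := by
    have := ((((((st_rpow_to_zero (1 - 1/Y) (by linarith)).const_mul K').const_sub d₁).sub (tt.mul tρ)).add
      (tθ.div_const 2)).add ((tθ.pow 2).mul tg)).sub (tt.mul tR2)
    rw [show d₁ - K' * 0 - 0 * -D + 0 / 2 + 0 ^ 2 * L - 0 * 0 = d₁ by ring] at this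
    exact this
  set q : ℝ → ℝ := fun t => 1 - Real.exp (-(η * t)) - η * t with hq
  have oq : q =o[𝓝[>] (0:ℝ)] fun t => t ^ m := by
    have : q =O[𝓝[>] (0:ℝ)] fun t : ℝ => t ^ (2:ℝ) := by
      refine IsBigO.of_bound (η ^ 2 / 2) ?_
      filter_upwards [self_mem_nhdsWithin] with t ht
      have ht : 0 < t := ht
      have := st_exp_quad (η * t) (by positivity)
      rw [Real.rpow_two, Real.norm_eq_abs, Real.norm_of_nonneg (by positivity), ← abs_neg,
        show -q t = Real.exp (-(η * t)) - 1 + η * t by simp only [hq]; ring]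
      refine this.trans (le_of_eq (by ring))
    exact this.trans_isLittleO (st_rpow_littleO 2 m (by linarith))
  have ox : (fun t => (1 - Real.exp (-(η * t))) * (t ^ (1/Y) * h t)) =o[𝓝[>] (0:ℝ)] fun t => t ^ m := by
    have o1 : (fun t => 1 - Real.exp (-(η * t))) =O[𝓝[>] (0:ℝ)] fun t : ℝ => t ^ (1:ℝ) := by
      refine IsBigO.of_bound η ?_
      filter_upwards [self_mem_nhdsWithin] with t ht
      have ht : 0 < t := ht
      have h1 : Real.exp (-(η * t)) ≤ 1 := by
        rw [Real.exp_le_one_iff]; have : 0 ≤ η * t := by positivity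
        linarith
      have h2 := Real.add_one_le_exp (-(η * t))
      rw [Real.rpow_one, Real.norm_of_nonneg (by linarith), Real.norm_of_nonneg ht.le]
      linarith
    have o2 : (fun t => t ^ (1/Y) * h t) =O[𝓝[>] (0:ℝ)] fun t : ℝ => t ^ (1/Y) := by
      have := (isBigO_refl (fun t : ℝ => t ^ (1/Y)) (𝓝[>] (0:ℝ))).mul (th.isBigO_one ℝ)
      simpa using this
    have o3 := o1.mul o2
    have o4 : (fun t => (1 - Real.exp (-(η * t))) * (t ^ (1/Y) * h t)) =O[𝓝[>] (0:ℝ)] fun t : ℝ => t ^ (1 + 1/Y) := by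
      refine o3.congr' (EventuallyEq.refl _ _) ?_
      filter_upwards [self_mem_nhdsWithin] with t ht
      rw [Real.rpow_add ht]
    exact o4.trans_isLittleO (st_rpow_littleO _ _ (by linarith))
  have o5 := st_mul_zero (2 - 1/Y) m hm1 α tα
  have o6 := st_mul_zero (2/Y) m hm2 β tβ
  refine (((o5.add o6).add oq).sub ox).congr' ?_ (EventuallyEq.refl _ _)
  filter_upwards [self_mem_nhdsWithin] with t ht
  have ht : 0 < t := ht
  rw [hPr t ht]
  have es : t ^ (2/Y) = (t ^ (1/Y)) ^ 2 := by rw [h2Y, Real.rpow_add ht]; ring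
  have hs0 : 0 < t ^ (1/Y) := Real.rpow_pos_of_pos ht _
  have er : t ^ (2 - 1/Y) = t ^ 2 / t ^ (1/Y) := by rw [Real.rpow_sub ht, Real.rpow_two]
  have er1 : t ^ (1 - 1/Y) = t / t ^ (1/Y) := by rw [Real.rpow_sub ht, Real.rpow_one]
  have eRR : R (t ^ (1/Y)) (θ t) = R2 t * (t ^ (1/Y)) ^ 2 := by simp only [hR2]; field_simp
  have e1 := ek0 t ht
  have e2 := eθ t ht
  have e3 := ea t ht
  change _ = 1 - Real.exp (-(η * t)) * (1 - t ^ (1/Y) * d₁ + K' * t + (t ^ (1/Y)) ^ 2 * ρ (t ^ (1/Y))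
      - t ^ (1/Y) * (θ t / 2 + (θ t) ^ 2 * g (θ t)) + R (t ^ (1/Y)) (θ t)) - _
  have e4 : t ^ (1/Y) * h t = 1 - (1 - t ^ (1/Y) * d₁ + K' * t + (t ^ (1/Y)) ^ 2 * ρ (t ^ (1/Y))
      - t ^ (1/Y) * (θ t / 2 + (θ t) ^ 2 * g (θ t)) + R (t ^ (1/Y)) (θ t)) := by
    simp only [hh]
    rw [eRR, er1]
    field_simp
    ring
  have e5 : t ^ (1/Y) * h t = t ^ (1/Y) * d₁ - K' * t - (t ^ (1/Y)) ^ 2 * ρ (t ^ (1/Y)) + (c * t - κ t) / 2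
      + t ^ (2 - 1/Y) * (a t) ^ 2 * g (θ t) - (t ^ (1/Y)) ^ 2 * R2 t := by
    rw [e4, eRR, e3, er, e2, er1]
    field_simp
    ring
  have e6 : 1 - t ^ (1/Y) * d₁ + K' * t + (t ^ (1/Y)) ^ 2 * ρ (t ^ (1/Y))
      - t ^ (1/Y) * (θ t / 2 + (θ t) ^ 2 * g (θ t)) + R (t ^ (1/Y)) (θ t) = 1 - t ^ (1/Y) * h t := by linarith
  rw [e6]
  simp only [hα, hβ, hq]
  rw [es]
  have : 1 - Real.exp (-(η * t)) * (1 - t ^ (1/Y) * h t) = (1 - Real.exp (-(η * t))) + t ^ (1/Y) * h t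
     - (1 - Real.exp (-(η * t))) * (t ^ (1/Y) * h t) := by ring
  rw [this]
  have : t ^ (1/Y) * h t = t ^ (1/Y) * d₁ - K' * t - (t ^ (1/Y)) ^ 2 * ρ (t ^ (1/Y)) + (c * t - (e₁ * t + e₂ * t ^ (2 - 1/Y) + k0 t * t ^ (2 - 1/Y))) / 2
      + t ^ (2 - 1/Y) * (a t) ^ 2 * g (θ t) - (t ^ (1/Y)) ^ 2 * R2 t := by rw [e5, e1]
  linear_combination -this


/-- Third-order close-to-the-money call price expansion under the pure-jump CGMY model. -/
theorem stmt0
    {Ω : Type} [MeasurableSpace Ω] (P : Measure Ω) [IsProbabilityMeasure P]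
    (C G M Y : ℝ) (hC : 0 < C) (hG : 0 < G) (hM : 1 < M) (hY : Y ∈ Set.Ioo (1:ℝ) 2)
    (c : ℝ)
    (hc : c = -C * Real.Gamma (-Y) * ((M-1) ^ Y + (G+1) ^ Y - M ^ Y - G ^ Y))
    (μ : ℝ → Measure ℝ)
    (hμprob : ∀ t > (0:ℝ), IsProbabilityMeasure (μ t))
    (hμchar : ∀ t > (0:ℝ), ∀ u : ℝ,
      (∫ x, Complex.exp (Complex.I * u * x) ∂(μ t)) =
        Complex.exp ((t : ℂ) * (Complex.I * (c : ℂ) * (u : ℂ) +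
          ((C * Real.Gamma (-Y) : ℝ) : ℂ) *
          (((M : ℂ) - Complex.I * (u : ℂ)) ^ (Y : ℂ) + ((G : ℂ) + Complex.I * (u : ℂ)) ^ (Y : ℂ)
            - (M : ℂ) ^ (Y : ℂ) - (G : ℂ) ^ (Y : ℂ)))))
    (κ : ℝ → ℝ) (e₁ e₂ : ℝ)
    (hκ : (fun t => κ t - (e₁ * t + e₂ * t ^ (2 - 1/Y))) =o[𝓝[>] (0:ℝ)]
      fun t => t ^ (2 - 1/Y))
    (Pr : ℝ → ℝ)
    (hPr : ∀ t > (0:ℝ), Pr t = ∫ x, max (Real.exp x - Real.exp (κ t)) 0 ∂(μ t))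
    (U V : Ω → ℝ) (hU : Measurable U) (hV : Measurable V)
    (hIndep : IndepFun U V P)
    (hUchar : ∀ u : ℝ, (∫ ω, Complex.exp (Complex.I * u * (U ω)) ∂P) =
      Complex.exp (((C * Real.Gamma (-Y) * |u| ^ Y : ℝ) : ℂ) *
        (((Real.cos (Real.pi * Y / 2) : ℝ) : ℂ)
          - Complex.I * ((Real.sign u : ℝ) : ℂ) * ((Real.sin (Real.pi * Y / 2) : ℝ) : ℂ))))
    (hVchar : ∀ u : ℝ, (∫ ω, Complex.exp (Complex.I * u * (V ω)) ∂P) =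
      Complex.exp (((C * Real.Gamma (-Y) * |u| ^ Y : ℝ) : ℂ) *
        (((Real.cos (Real.pi * Y / 2) : ℝ) : ℂ)
          - Complex.I * ((Real.sign u : ℝ) : ℂ) * ((Real.sin (Real.pi * Y / 2) : ℝ) : ℂ))))
    (Z Ut : Ω → ℝ)
    (hZ : Z = fun ω => U ω - V ω)
    (hUt : Ut = fun ω => (M - 1) * U ω + (G + 1) * V ω)
    (γ' d₁ d₂ d₃₁ d₃₂ : ℝ)
    (hγ' : γ' = -C * Real.Gamma (-Y) * ((M-1) ^ Y + (G+1) ^ Y - M ^ Y - G ^ Y))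
    (hd₁ : d₁ = (1 / Real.pi) * Real.Gamma (1 - 1/Y) *
      (2 * C * Real.Gamma (-Y) * |Real.cos (Real.pi * Y / 2)|) ^ (1/Y))
    (hd₂ : d₂ = (C * Real.Gamma (-Y) / 2) * ((M-1) ^ Y - M ^ Y - (G+1) ^ Y + G ^ Y) - e₁ / 2)
    (hd₃₁ : d₃₁ = ((γ' - e₁) ^ 2 / (2 * Real.pi)) * Real.Gamma (1 + 1/Y) *
      (-2 * C * Real.Gamma (-Y) * Real.cos (Real.pi * Y / 2)) ^ (-(1/Y)) - e₂ / 2)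
    (hd₃₂ : d₃₂ = -(1/2) * (∫ ω, Set.indicator {ω | max (Z ω) 0 + Ut ω ≤ 0}
        (fun ω => (max (Z ω) 0 + Ut ω) ^ 2) ω ∂P)
      - ∫ w in Set.Ioi (0:ℝ), w * ((P {ω | w ≤ max (Z ω) 0 + Ut ω}).toReal
          - C * M ^ Y / (Y * w ^ Y) - C * (G+1) ^ Y / (Y * w ^ Y))) :
    (fun t => Pr t - (d₁ * t ^ (1/Y) + d₂ * t + d₃₁ * t ^ (2 - 1/Y) + d₃₂ * t ^ (2/Y)))
      =o[𝓝[>] (0:ℝ)] fun t => t ^ (min (2 - 1/Y) (2/Y)) := by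
  subst hZ hUt
  have hY1 : 1 < Y := hY.1
  have hY2 : Y < 2 := hY.2
  have hY0 : 0 < Y := by linarith
  have hΓ : 0 < Real.Gamma (-Y) := by
    have h1 := Real.Gamma_add_one (s := -Y) (by linarith)
    have h2 := Real.Gamma_add_one (s := -Y + 1) (by linarith)
    have h3 : 0 < Real.Gamma (-Y + 1 + 1) := Real.Gamma_pos_of_pos (by linarith)
    rw [h2, h1, ← mul_assoc] at h3
    exact pos_of_mul_pos_right h3 (by nlinarith)
  have hK : 0 < C * Real.Gamma (-Y) := mul_pos hC hΓ
  have hUX := st_facts P C Y hC hY hK U hU hUchar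
  have hVX := st_facts P C Y hC hY hK V hV hVchar
  obtain ⟨hmax, g, hg, hgeq⟩ := st_maxZ hY hK hUX hVX hIndep
  obtain ⟨B1, hB1⟩ := st_tailW hC hY hUX hVX hIndep G M hG hM
  obtain ⟨B2, hB2⟩ := st_thetashift hUX hVX hIndep (M - 1) (G + 1) (by linarith) (by linarith)
  have hcos := st_cos_neg Y hY
  have hi1 : Integrable (fun ω => max (U ω - V ω) 0) P := (hUX.int.sub hVX.int).pos_part
  have hi2 : Integrable (fun ω => (M - 1) * U ω + (G + 1) * V ω) P :=
    (hUX.int.const_mul _).add (hVX.int.const_mul _)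
  have hWi : Integrable (fun ω => max (U ω - V ω) 0 + ((M - 1) * U ω + (G + 1) * V ω)) P := hi1.add hi2
  have hWm : Measurable (fun ω => max (U ω - V ω) 0 + ((M - 1) * U ω + (G + 1) * V ω)) := by fun_prop
  have hWe : Integrable (fun ω => Real.exp (-(max (U ω - V ω) 0 + ((M - 1) * U ω + (G + 1) * V ω)))) P := by
    refine (st_exp2_int hUX hVX hIndep (M - 1) (G + 1) (by linarith) (by linarith)).mono' (by fun_prop)
      (ae_of_all _ fun ω => ?_)
    rw [Real.norm_of_nonneg (Real.exp_pos _).le]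
    apply Real.exp_le_exp.2
    have : 0 ≤ max (U ω - V ω) 0 := le_max_right _ _
    linarith
  have hWd : ∫ ω, (max (U ω - V ω) 0 + ((M - 1) * U ω + (G + 1) * V ω)) ∂P = d₁ := by
    rw [integral_add hi1 hi2, integral_add (hUX.int.const_mul _) (hVX.int.const_mul _),
      integral_const_mul, integral_const_mul, hUX.mean, hVX.mean, hmax, hd₁, abs_of_neg hcos,
      show 2 * C * Real.Gamma (-Y) * -Real.cos (Real.pi * Y / 2) =
        -2 * C * Real.Gamma (-Y) * Real.cos (Real.pi * Y / 2) by ring]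
    ring
  have hMY : 0 < M ^ Y := Real.rpow_pos_of_pos (by linarith) _
  have hGY : 0 < (G + 1) ^ Y := Real.rpow_pos_of_pos (by linarith) _
  have hMY1 : 0 < (M - 1) ^ Y := Real.rpow_pos_of_pos (by linarith) _
  have hexp := st_expandW hY _ hWm hWi hWe (C / Y * (M ^ Y + (G + 1) ^ Y)) B1 (by positivity) hB1
  rw [hWd] at hexp
  have hlim : 1/2 * (∫ ω, Set.indicator {ω | max (U ω - V ω) 0 + ((M - 1) * U ω + (G + 1) * V ω) ≤ 0}
        (fun ω => (max (U ω - V ω) 0 + ((M - 1) * U ω + (G + 1) * V ω)) ^ 2) ω ∂P) +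
        ∫ w in Ioi (0:ℝ), w * ((P {ω | w ≤ max (U ω - V ω) 0 + ((M - 1) * U ω + (G + 1) * V ω)}).toReal
          - C / Y * (M ^ Y + (G + 1) ^ Y) * w ^ (-Y)) = -d₃₂ := by
    have : ∫ w in Ioi (0:ℝ), w * ((P {ω | w ≤ max (U ω - V ω) 0 + ((M - 1) * U ω + (G + 1) * V ω)}).toReal
          - C / Y * (M ^ Y + (G + 1) ^ Y) * w ^ (-Y)) =
        ∫ w in Set.Ioi (0:ℝ), w * ((P {ω | w ≤ max (U ω - V ω) 0 + ((M - 1) * U ω + (G + 1) * V ω)}).toReal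
          - C * M ^ Y / (Y * w ^ Y) - C * (G+1) ^ Y / (Y * w ^ Y)) := by
      refine setIntegral_congr_fun measurableSet_Ioi fun w hw => ?_
      have hw : 0 < w := hw
      have hwY := Real.rpow_pos_of_pos hw Y
      generalize (P {ω | w ≤ max (U ω - V ω) 0 + ((M - 1) * U ω + (G + 1) * V ω)}).toReal = p
      rw [Real.rpow_neg hw.le]
      field_simp
      ring
    rw [this, hd₃₂]
    ring
  rw [hlim] at hexp
  have hη : 0 ≤ C * Real.Gamma (-Y) * ((M-1) ^ Y + (G+1) ^ Y) := by positivity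
  have main := st_assemble Y hY (C * Real.Gamma (-Y) * ((M-1) ^ Y + (G+1) ^ Y))
    (C / Y * (M ^ Y + (G + 1) ^ Y) * Y * Real.Gamma (-Y)) c e₁ e₂ d₁ _ d₃₂ hη κ Pr g _
    (fun s θ => ∫ ω, Real.exp (-(s * ((M - 1) * U ω + (G + 1) * V ω + max (U ω - V ω + θ) 0))) ∂P -
        ∫ ω, Real.exp (-(s * (max (U ω - V ω) 0 + ((M - 1) * U ω + (G + 1) * V ω)))) ∂P +
        s * (∫ ω, max (U ω - V ω + θ) 0 ∂P - ∫ ω, max (U ω - V ω) 0 ∂P))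
    hκ hg hexp B2 hB2 (by
      intro t ht
      have hs : 0 < t ^ (1/Y) := Real.rpow_pos_of_pos ht _
      have := hμprob t ht
      rw [hPr t ht, st_price hY hUX hVX hIndep G M c t hG hM ht hc (μ t) (hμchar t ht) (κ t)
        ((c * t - κ t) / t ^ (1/Y)) (by field_simp), st_pow_inv t ht hY, ← hgeq]
      rw [mul_div_cancel₀ _ (by positivity)]
      congr 2
      ring)
  have e2 : C * Real.Gamma (-Y) * ((M-1) ^ Y + (G+1) ^ Y) - C / Y * (M ^ Y + (G + 1) ^ Y) * Y * Real.Gamma (-Y)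
      + (c - e₁) / 2 = d₂ := by
    rw [hd₂, hc]; field_simp; ring
  have e3 : (c - e₁) ^ 2 * (1 / (2 * Real.pi) * Real.Gamma (1 + 1/Y) *
      (-2 * C * Real.Gamma (-Y) * Real.cos (Real.pi * Y / 2)) ^ (-(1/Y))) - e₂ / 2 = d₃₁ := by
    rw [hd₃₁, hγ', ← hc]; ring
  rw [e2, e3] at main
  exact main
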